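/- Let 𝓛 be a second-order elliptic operator on ℝ^d satisfying the standing assumptions, and let V : ℝ^d → ℝ be Borel measurable, locally bounded, bounded from below, with λ*(𝓛,V) finite. Suppose λ* is NOT strictly monotone at V on the right. Then for every open ball 𝓑 ⊂ ℝ^d there exists a constant δ > 0 such that λ*(𝓛,V) = λ*(𝓛, V + δ·1_𝓑) and λ* is strictly monotone at V + δ·1_𝓑 on the right (1_𝓑 denoting the indicator function of 𝓑). -/

import Mathlib

open Metric Set Filter

noncomputable section

/-- `ℝ^d` as a Euclidean space. -/
abbrev Euc (d : ℕ) := EuclideanSpace ℝ (Fin d)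

/-- First partial derivative `∂u/∂xᵢ`. -/
def pd {d : ℕ} (u : Euc d → ℝ) (i : Fin d) (x : Euc d) : ℝ :=
  fderiv ℝ u x (EuclideanSpace.single i 1)

/-- Second partial derivative `∂²u/∂xᵢ∂xⱼ`. -/
def pd2 {d : ℕ} (u : Euc d → ℝ) (i j : Fin d) (x : Euc d) : ℝ :=
  fderiv ℝ (fun y => pd u j y) x (EuclideanSpace.single i 1)

/-- The second-order operator `𝓛u = Σ aᶦʲ ∂ᵢⱼu + Σ bᶦ ∂ᵢu`. -/
def Lop {d : ℕ} (a : Euc d → Matrix (Fin d) (Fin d) ℝ) (b : Euc d → Euc d)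
    (u : Euc d → ℝ) (x : Euc d) : ℝ :=
  (∑ i, ∑ j, a x i j * pd2 u i j x) + ∑ i, b x i * pd u i x

/-- Frobenius norm of a matrix. -/
def frob {d : ℕ} (m : Matrix (Fin d) (Fin d) ℝ) : ℝ :=
  Real.sqrt (∑ i, ∑ j, (m i j) ^ 2)

/-- The quadratic form `⟨ξ, m ξ⟩`. -/
def quadForm {d : ℕ} (m : Matrix (Fin d) (Fin d) ℝ) (ξ : Euc d) : ℝ :=
  ∑ i, ∑ j, m i j * ξ i * ξ j

/-- Local Hölder continuity on a set. -/
def LocallyHolderOn {E F : Type*} [PseudoMetricSpace E] [PseudoMetricSpace F]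
    (f : E → F) (s : Set E) : Prop :=
  ∀ x ∈ s, ∃ (C r : NNReal), 0 < r ∧ r ≤ 1 ∧ ∃ ε > 0, HolderOnWith C r f (Metric.ball x ε ∩ s)

/-- Local Hölder continuity. -/
def LocallyHolder {E F : Type*} [PseudoMetricSpace E] [PseudoMetricSpace F] (f : E → F) : Prop :=
  LocallyHolderOn f Set.univ

/-- The set of `λ ∈ ℝ` admitting a positive C² supersolution of `𝓛φ + Vφ ≤ λφ` on `D`. -/
def supersolutions {d : ℕ} (a : Euc d → Matrix (Fin d) (Fin d) ℝ) (b : Euc d → Euc d)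
    (V : Euc d → ℝ) (D : Set (Euc d)) : Set ℝ :=
  {lam | ∃ φ : Euc d → ℝ, (∀ x ∈ D, 0 < φ x) ∧ ContDiffOn ℝ 2 φ D ∧
    ∀ x ∈ D, Lop a b φ x + V x * φ x ≤ lam * φ x}

/-- The generalized principal eigenvalue `λ*(𝓛,V)` on `D`. -/
def lamStar {d : ℕ} (a : Euc d → Matrix (Fin d) (Fin d) ℝ) (b : Euc d → Euc d)
    (V : Euc d → ℝ) (D : Set (Euc d)) : ℝ :=
  sInf (supersolutions a b V D)

/-- `λ*(𝓛,V)` is finite: the defining set is nonempty and bounded below. -/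
def lamStarFinite {d : ℕ} (a : Euc d → Matrix (Fin d) (Fin d) ℝ) (b : Euc d → Euc d)
    (V : Euc d → ℝ) (D : Set (Euc d)) : Prop :=
  (supersolutions a b V D).Nonempty ∧ BddBelow (supersolutions a b V D)

/-- A ground state of `𝓛 + W` in the open connected set `D`: a positive C² solution of
minimal growth at infinity. -/
def IsGroundState {d : ℕ} (a : Euc d → Matrix (Fin d) (Fin d) ℝ) (b : Euc d → Euc d)
    (W : Euc d → ℝ) (u : Euc d → ℝ) (D : Set (Euc d)) : Prop :=
  (∀ x ∈ D, 0 < u x) ∧ ContDiffOn ℝ 2 u D ∧ (∀ x ∈ D, Lop a b u x + W x * u x = 0) ∧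
  ∀ K : Set (Euc d), IsCompact K → K ⊆ D →
    ∀ v : Euc d → ℝ, ContDiffOn ℝ 2 v (D \ K) → (∀ x ∈ D \ K, 0 < v x) →
      (∀ x ∈ D \ K, Lop a b v x + W x * v x ≤ 0) →
      ∃ K' : Set (Euc d), IsCompact K' ∧ K ⊆ K' ∧ K' ⊆ D ∧
        ∃ κ > 0, ∀ x ∈ D \ K', κ * u x ≤ v x

/-- Membership in `C₀⁺(ℝ^d)`: continuous, nonnegative, not identically zero, vanishing
at infinity. -/
def C0plus {d : ℕ} (h : Euc d → ℝ) : Prop :=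
  Continuous h ∧ (∀ x, 0 ≤ h x) ∧ (∃ x, h x ≠ 0) ∧ Tendsto h (cocompact (Euc d)) (nhds 0)

/-- `λ*` is strictly monotone at `V` on the right. -/
def StrictMonoRight {d : ℕ} (a : Euc d → Matrix (Fin d) (Fin d) ℝ) (b : Euc d → Euc d)
    (V : Euc d → ℝ) : Prop :=
  ∀ h : Euc d → ℝ, C0plus h →
    lamStar a b V Set.univ < lamStar a b (fun x => V x + h x) Set.univ

/-- `λ*` is strictly monotone at `V` (on both sides). -/
def StrictMonoAt {d : ℕ} (a : Euc d → Matrix (Fin d) (Fin d) ℝ) (b : Euc d → Euc d)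
    (V : Euc d → ℝ) : Prop :=
  ∀ h : Euc d → ℝ, C0plus h →
    lamStar a b (fun x => V x - h x) Set.univ < lamStar a b V Set.univ ∧
    lamStar a b V Set.univ < lamStar a b (fun x => V x + h x) Set.univ

/-- Standing assumptions (A1)–(A3) with `b` Borel measurable and locally bounded. -/
structure StandingB {d : ℕ} (a : Euc d → Matrix (Fin d) (Fin d) ℝ) (b : Euc d → Euc d) : Prop where
  posdef : ∀ x, (a x).PosDef
  aLip : ∀ R > 0, ∃ C > 0, ∀ x y : Euc d, ‖x‖ ≤ R → ‖y‖ ≤ R →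
    frob (a x - a y) ≤ C * ‖x - y‖
  bMeas : Measurable b
  bLocBdd : ∀ R > 0, ∃ C, ∀ x : Euc d, ‖x‖ ≤ R → ‖b x‖ ≤ C
  nondeg : ∀ R > 0, ∃ C > 0, ∀ x : Euc d, ‖x‖ ≤ R → ∀ ξ : Euc d,
    C⁻¹ * ‖ξ‖ ^ 2 ≤ quadForm (a x) ξ
  growth : ∃ C₀ > 0, ∀ x : Euc d,
    max (∑ i, b x i * x i) 0 + frob (a x) ≤ C₀ * (1 + ‖x‖ ^ 2)

/-- Standing assumptions (A1)–(A3) with `b` locally Hölder continuous. -/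
structure StandingH {d : ℕ} (a : Euc d → Matrix (Fin d) (Fin d) ℝ) (b : Euc d → Euc d) : Prop where
  posdef : ∀ x, (a x).PosDef
  aLip : ∀ R > 0, ∃ C > 0, ∀ x y : Euc d, ‖x‖ ≤ R → ‖y‖ ≤ R →
    frob (a x - a y) ≤ C * ‖x - y‖
  bHolder : LocallyHolder b
  nondeg : ∀ R > 0, ∃ C > 0, ∀ x : Euc d, ‖x‖ ≤ R → ∀ ξ : Euc d,
    C⁻¹ * ‖ξ‖ ^ 2 ≤ quadForm (a x) ξ
  growth : ∃ C₀ > 0, ∀ x : Euc d,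
    max (∑ i, b x i * x i) 0 + frob (a x) ≤ C₀ * (1 + ‖x‖ ^ 2)

/-!
If `λ*` is not strictly monotone at `W` on the right, then for some `c > 0` and some ball `B₁`
there are positive supersolutions for `W + c·1_{B₁}` at every level above `λ*(𝓛, W)`. A Harnack
inequality for them would make their values on a large ball comparable, and then subtracting a small
multiple of a Hopf bump function moves the excess `c` on `B₁` to an excess `δ` on `𝓑`, with `δ`
independent of the level. Hence `λ*(𝓛, W + δ·1_𝓑) ≤ λ*(𝓛, W + c·1_{B₁})` for some `δ > 0`. So
the set of `δ` with `λ*(𝓛, V + δ·1_𝓑) ≤ λ*(𝓛, V)` has an element larger than `δ` whenever strict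
monotonicity fails at `V + δ·1_𝓑`. It is closed, because `λ*` is `1`-Lipschitz in `δ`, and bounded
above, so its maximum is the required `δ`.

Supersolutions do not satisfy Harnack's inequality, but they can be lowered to ones that do: on a
small ellipsoid, take a smooth minimum with a Poisson integral of the boundary values. As `b` is
only measurable, `C²` solutions need not exist, and the Poisson integral is replaced by a sum of
explicit barriers over a fine net of boundary poles. The barriers are squeezed between multiples
of the Poisson kernel.
-/

open scoped Topology

/-- The bilinear form `⟨∇u, a ∇v⟩`, the cross term in the product and chain rules for `Lop`. -/
def gradForm {d : ℕ} (a : Euc d → Matrix (Fin d) (Fin d) ℝ) (u v : Euc d → ℝ) (x : Euc d) : ℝ :=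
  ∑ i, ∑ j, a x i j * (pd u i x * pd v j x)

section Calculus

variable {d : ℕ} {a : Euc d → Matrix (Fin d) (Fin d) ℝ} {b : Euc d → Euc d}
  {u v : Euc d → ℝ} {x : Euc d}

/-! ### Calculus of the operator -/

theorem eventually_differentiableAt_of_contDiffAt (hu : ContDiffAt ℝ 2 u x) :
    ∀ᶠ y in 𝓝 x, DifferentiableAt ℝ u y := by
  filter_upwards [hu.eventually (by simp)] with y hy
  exact hy.differentiableAt (by simp)

theorem contDiffAt_pd (hu : ContDiffAt ℝ 2 u x) (i : Fin d) : ContDiffAt ℝ 1 (pd u i) x :=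
  (hu.fderiv_right (m := 1) (by norm_num)).clm_apply contDiffAt_const

theorem differentiableAt_pd (hu : ContDiffAt ℝ 2 u x) (i : Fin d) :
    DifferentiableAt ℝ (pd u i) x :=
  (contDiffAt_pd hu i).differentiableAt (by simp)

theorem pd2_eq_pd_pd (u : Euc d → ℝ) (i j : Fin d) (x : Euc d) :
    pd2 u i j x = pd (pd u j) i x := rfl

theorem pd_eventuallyEq (h : u =ᶠ[𝓝 x] v) (i : Fin d) : pd u i =ᶠ[𝓝 x] pd v i := by
  filter_upwards [h.fderiv (𝕜 := ℝ)] with y hy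
  simp only [pd, hy]

theorem pd_congr (h : u =ᶠ[𝓝 x] v) (i : Fin d) : pd u i x = pd v i x :=
  (pd_eventuallyEq h i).eq_of_nhds

theorem pd2_congr (h : u =ᶠ[𝓝 x] v) (i j : Fin d) : pd2 u i j x = pd2 v i j x :=
  pd_congr (pd_eventuallyEq h j) i

theorem Lop_congr (h : u =ᶠ[𝓝 x] v) : Lop a b u x = Lop a b v x := by
  simp only [Lop, pd2_congr h, pd_congr h]

theorem pd_const (c : ℝ) (i : Fin d) (x : Euc d) : pd (fun _ => c) i x = 0 := by
  simp [pd]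

theorem pd_add (hu : DifferentiableAt ℝ u x) (hv : DifferentiableAt ℝ v x) (i : Fin d) :
    pd (fun y => u y + v y) i x = pd u i x + pd v i x := by
  simp [pd, fderiv_fun_add hu hv]

theorem pd_mul (hu : DifferentiableAt ℝ u x) (hv : DifferentiableAt ℝ v x) (i : Fin d) :
    pd (fun y => u y * v y) i x = u x * pd v i x + v x * pd u i x := by
  simp [pd, fderiv_fun_mul hu hv]

theorem pd_comp {g : ℝ → ℝ} (hu : DifferentiableAt ℝ u x) (hg : DifferentiableAt ℝ g (u x))
    (i : Fin d) : pd (fun y => g (u y)) i x = deriv g (u x) * pd u i x := by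
  have h : fderiv ℝ (fun y => g (u y)) x = deriv g (u x) • fderiv ℝ u x :=
    (hg.hasDerivAt.comp_hasFDerivAt x hu.hasFDerivAt).fderiv
  simp [pd, h]

theorem pd_const_sub (c : ℝ) (u : Euc d → ℝ) (i : Fin d) (x : Euc d) :
    pd (fun y => c - u y) i x = -pd u i x := by
  simp [pd, fderiv_const_sub]

theorem pd2_add (hu : ContDiffAt ℝ 2 u x) (hv : ContDiffAt ℝ 2 v x) (i j : Fin d) :
    pd2 (fun y => u y + v y) i j x = pd2 u i j x + pd2 v i j x := by
  have h : pd (fun y => u y + v y) j =ᶠ[𝓝 x] fun y => pd u j y + pd v j y := by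
    filter_upwards [eventually_differentiableAt_of_contDiffAt hu,
      eventually_differentiableAt_of_contDiffAt hv] with y hy hy'
    exact pd_add hy hy' j
  exact (pd_congr h i).trans (pd_add (differentiableAt_pd hu j) (differentiableAt_pd hv j) i)

theorem pd2_mul (hu : ContDiffAt ℝ 2 u x) (hv : ContDiffAt ℝ 2 v x) (i j : Fin d) :
    pd2 (fun y => u y * v y) i j x = u x * pd2 v i j x + v x * pd2 u i j x +
      pd u i x * pd v j x + pd v i x * pd u j x := by
  have h : pd (fun y => u y * v y) j =ᶠ[𝓝 x] fun y => u y * pd v j y + v y * pd u j y := by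
    filter_upwards [eventually_differentiableAt_of_contDiffAt hu,
      eventually_differentiableAt_of_contDiffAt hv] with y hy hy'
    exact pd_mul hy hy' j
  have du := hu.differentiableAt (by simp)
  have dv := hv.differentiableAt (by simp)
  have dpu := differentiableAt_pd hu j
  have dpv := differentiableAt_pd hv j
  simp only [pd2_eq_pd_pd]
  rw [pd_congr h, pd_add (du.fun_mul dpv) (dv.fun_mul dpu), pd_mul du dpv, pd_mul dv dpu]
  ring

theorem pd2_comp {g : ℝ → ℝ} (hu : ContDiffAt ℝ 2 u x) (hg : ContDiffAt ℝ 2 g (u x))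
    (i j : Fin d) : pd2 (fun y => g (u y)) i j x = deriv g (u x) * pd2 u i j x +
      deriv (deriv g) (u x) * (pd u i x * pd u j x) := by
  have h : pd (fun y => g (u y)) j =ᶠ[𝓝 x] fun y => deriv g (u y) * pd u j y := by
    filter_upwards [eventually_differentiableAt_of_contDiffAt hu,
      hu.continuousAt.eventually (hg.eventually (by simp))] with y hy hgy
    exact pd_comp hy (hgy.differentiableAt (by simp)) j
  have du := hu.differentiableAt (by simp)
  have dg : DifferentiableAt ℝ (deriv g) (u x) :=
    ((hg.fderiv_right (m := 1) (by norm_num)).clm_apply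
      (contDiffAt_const (c := (1 : ℝ)))).differentiableAt (by simp)
  simp only [pd2_eq_pd_pd]
  rw [pd_congr h, pd_mul (u := fun y => deriv g (u y)) (dg.comp x du) (differentiableAt_pd hu j),
    pd_comp du dg]
  ring

theorem Lop_const (c : ℝ) : Lop a b (fun _ => c) x = 0 := by
  have h : ∀ i, pd (fun _ : Euc d => c) i = fun _ => 0 := fun i => funext (pd_const c i)
  simp only [Lop, pd2_eq_pd_pd, h, pd_const, mul_zero, Finset.sum_const_zero, add_zero]

theorem Lop_add (hu : ContDiffAt ℝ 2 u x) (hv : ContDiffAt ℝ 2 v x) :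
    Lop a b (fun y => u y + v y) x = Lop a b u x + Lop a b v x := by
  simp only [Lop, pd2_add hu hv, pd_add (hu.differentiableAt (by simp))
    (hv.differentiableAt (by simp)), mul_add, Finset.sum_add_distrib]
  ring

theorem Lop_mul (hu : ContDiffAt ℝ 2 u x) (hv : ContDiffAt ℝ 2 v x) :
    Lop a b (fun y => u y * v y) x = u x * Lop a b v x + v x * Lop a b u x +
      gradForm a u v x + gradForm a v u x := by
  simp only [Lop, gradForm, pd2_mul hu hv, pd_mul (hu.differentiableAt (by simp))
    (hv.differentiableAt (by simp)), mul_add, Finset.mul_sum, Finset.sum_add_distrib,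
    mul_left_comm (u x), mul_left_comm (v x)]
  ring

theorem Lop_const_mul (hu : ContDiffAt ℝ 2 u x) (c : ℝ) :
    Lop a b (fun y => c * u y) x = c * Lop a b u x := by
  rw [Lop_mul contDiffAt_const hu, Lop_const]
  simp [gradForm, pd_const]

theorem Lop_sub (hu : ContDiffAt ℝ 2 u x) (hv : ContDiffAt ℝ 2 v x) :
    Lop a b (fun y => u y - v y) x = Lop a b u x - Lop a b v x := by
  have h : (fun y => u y - v y) = fun y => u y + -1 * v y := by ext; ring
  rw [h, Lop_add hu (contDiffAt_const.mul hv), Lop_const_mul hv]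
  ring

theorem Lop_const_sub (c : ℝ) (u : Euc d → ℝ) (x : Euc d) :
    Lop a b (fun y => c - u y) x = -Lop a b u x := by
  have h : ∀ i j, pd2 (fun y => c - u y) i j x = -pd2 u i j x := fun i j => by
    simp [pd2, pd_const_sub, fderiv_fun_neg]
  simp only [Lop, h, pd_const_sub, mul_neg, Finset.sum_neg_distrib]
  ring

theorem Lop_sum {ι : Type*} (s : Finset ι) {f : ι → Euc d → ℝ}
    (hf : ∀ k ∈ s, ContDiffAt ℝ 2 (f k) x) :
    Lop a b (fun y => ∑ k ∈ s, f k y) x = ∑ k ∈ s, Lop a b (f k) x := by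
  classical
  induction s using Finset.induction_on with
  | empty => simp [Lop_const]
  | insert k s hk ih =>
    have hs : ∀ l ∈ s, ContDiffAt ℝ 2 (f l) x := fun l hl => hf l (Finset.mem_insert_of_mem hl)
    simp only [Finset.sum_insert hk]
    rw [Lop_add (hf k (Finset.mem_insert_self k s)) (ContDiffAt.sum hs), ih hs]

theorem Lop_comp {g : ℝ → ℝ} (hu : ContDiffAt ℝ 2 u x) (hg : ContDiffAt ℝ 2 g (u x)) :
    Lop a b (fun y => g (u y)) x = deriv g (u x) * Lop a b u x +
      deriv (deriv g) (u x) * gradForm a u u x := by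
  simp only [Lop, gradForm, pd2_comp hu hg, pd_comp (hu.differentiableAt (by simp))
    (hg.differentiableAt (by simp)), mul_add, Finset.mul_sum, Finset.sum_add_distrib,
    mul_left_comm (deriv g (u x)), mul_left_comm (deriv (deriv g) (u x))]
  ring

theorem gradForm_mul_right (hu : DifferentiableAt ℝ u x) (hv : DifferentiableAt ℝ v x)
    (w : Euc d → ℝ) :
    gradForm a w (fun y => u y * v y) x = u x * gradForm a w v x + v x * gradForm a w u x := by
  simp only [gradForm, pd_mul hu hv, Finset.mul_sum, ← Finset.sum_add_distrib]
  exact Finset.sum_congr rfl fun i _ => Finset.sum_congr rfl fun j _ => by ring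

theorem gradForm_comp_right {g : ℝ → ℝ} (hu : DifferentiableAt ℝ u x)
    (hg : DifferentiableAt ℝ g (u x)) (w : Euc d → ℝ) :
    gradForm a w (fun y => g (u y)) x = deriv g (u x) * gradForm a w u x := by
  simp only [gradForm, pd_comp hu hg, Finset.mul_sum]
  exact Finset.sum_congr rfl fun i _ => Finset.sum_congr rfl fun j _ => by ring

theorem gradForm_comm (ha : (a x).IsSymm) (u v : Euc d → ℝ) :
    gradForm a u v x = gradForm a v u x := by
  rw [gradForm, Finset.sum_comm, gradForm]
  refine Finset.sum_congr rfl fun i _ => Finset.sum_congr rfl fun j _ => ?_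
  rw [ha.apply i j, mul_comm (pd u j x)]

theorem gradForm_self_nonneg (ha : (a x).PosSemidef) (u : Euc d → ℝ) :
    0 ≤ gradForm a u u x := by
  refine (ha.dotProduct_mulVec_nonneg (fun i => pd u i x)).trans_eq ?_
  simp only [dotProduct, Matrix.mulVec, gradForm, Finset.mul_sum, Pi.star_apply, star_trivial]
  exact Finset.sum_congr rfl fun i _ => Finset.sum_congr rfl fun j _ => by ring

end Calculus

section MaximumPrinciple

variable {d : ℕ} {a : Euc d → Matrix (Fin d) (Fin d) ℝ} {b : Euc d → Euc d}
  {u : Euc d → ℝ} {x : Euc d}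

theorem deriv_deriv_nonneg_of_isLocalMin {f : ℝ → ℝ} {t : ℝ} (hmin : IsLocalMin f t)
    (hf : ContinuousAt f t) : 0 ≤ deriv (deriv f) t := by
  by_contra! hneg
  have hmax : IsLocalMax f t := isLocalMax_of_deriv_deriv_neg hneg hmin.deriv_eq_zero hf
  have hconst : f =ᶠ[𝓝 t] fun _ => f t := by
    filter_upwards [hmin, hmax] with s h h' using le_antisymm h' h
  have hderiv : deriv f =ᶠ[𝓝 t] fun _ => 0 := by
    filter_upwards [hconst.deriv] with s hs
    rw [hs, deriv_const]
  exact hneg.ne (by rw [hderiv.deriv_eq, deriv_const])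

theorem fderiv_apply_eq_sum_pd (u : Euc d → ℝ) (x ξ : Euc d) :
    fderiv ℝ u x ξ = ∑ i, ξ i * pd u i x := by
  have hξ : ξ = ∑ i, ξ i • (EuclideanSpace.single i (1 : ℝ) : Euc d) := by
    ext k
    simp [Finset.sum_apply, Pi.single_apply]
  conv_lhs => rw [hξ, map_sum]
  simp only [map_smul, smul_eq_mul, pd]

theorem hasDerivAt_comp_line (ξ : Euc d) {t : ℝ} (hu : DifferentiableAt ℝ u (x + t • ξ)) :
    HasDerivAt (fun s : ℝ => u (x + s • ξ)) (∑ i, ξ i * pd u i (x + t • ξ)) t := by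
  have hline : HasDerivAt (fun s : ℝ => x + s • ξ) ξ t := by
    simpa using ((hasDerivAt_id t).smul_const ξ).const_add x
  rw [← fderiv_apply_eq_sum_pd]
  exact hu.hasFDerivAt.comp_hasDerivAt t hline

theorem tendsto_line (x ξ : Euc d) : Tendsto (fun t : ℝ => x + t • ξ) (𝓝 0) (𝓝 x) := by
  have h : Continuous fun t : ℝ => x + t • ξ := by fun_prop
  simpa using h.tendsto 0

theorem deriv_deriv_comp_line (hu : ContDiffAt ℝ 2 u x) (ξ : Euc d) :
    deriv (deriv fun t : ℝ => u (x + t • ξ)) 0 = ∑ i, ∑ j, ξ i * ξ j * pd2 u i j x := by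
  have hderiv : deriv (fun t : ℝ => u (x + t • ξ)) =ᶠ[𝓝 0]
      fun t => ∑ j, ξ j * pd u j (x + t • ξ) := by
    filter_upwards [(tendsto_line x ξ).eventually
      (eventually_differentiableAt_of_contDiffAt hu)] with t ht
    exact (hasDerivAt_comp_line ξ ht).deriv
  have hpd : ∀ j ∈ Finset.univ, HasDerivAt (fun t : ℝ => ξ j * pd u j (x + t • ξ))
      (ξ j * ∑ i, ξ i * pd2 u i j x) 0 := fun j _ => by
    have h := hasDerivAt_comp_line (u := pd u j) (x := x) ξ (t := 0)
      (by simpa using differentiableAt_pd hu j)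
    simp only [zero_smul, add_zero] at h
    exact h.const_mul (ξ j)
  rw [hderiv.deriv_eq, (HasDerivAt.fun_sum hpd).deriv, Finset.sum_comm]
  simp only [Finset.mul_sum]
  exact Finset.sum_congr rfl fun i _ => Finset.sum_congr rfl fun j _ => by ring

theorem hessian_nonneg_of_isLocalMin (hu : ContDiffAt ℝ 2 u x) (hmin : IsLocalMin u x)
    (ξ : Euc d) : 0 ≤ ∑ i, ∑ j, ξ i * ξ j * pd2 u i j x := by
  have hlim := tendsto_line x ξ
  rw [← deriv_deriv_comp_line hu]
  apply deriv_deriv_nonneg_of_isLocalMin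
  · filter_upwards [hlim.eventually hmin] with t ht
    simpa using ht
  · simpa [ContinuousAt, Function.comp_def] using hu.continuousAt.tendsto.comp hlim

open scoped MatrixOrder Matrix.Norms.L2Operator in
theorem Lop_nonneg_of_isLocalMin (ha : (a x).PosSemidef) (hu : ContDiffAt ℝ 2 u x)
    (hmin : IsLocalMin u x) : 0 ≤ Lop a b u x := by
  obtain ⟨B, hB⟩ := CStarAlgebra.nonneg_iff_eq_star_mul_self.mp ha.nonneg
  have hgrad : ∀ i, pd u i x = 0 := fun i => by simp [pd, hmin.fderiv_eq_zero]
  have hentry : ∀ i j, a x i j = ∑ k, B k i * B k j := fun i j => by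
    simp [hB, Matrix.star_eq_conjTranspose, Matrix.mul_apply]
  have hL : Lop a b u x = ∑ k, ∑ i, ∑ j, B k i * B k j * pd2 u i j x := by
    simp only [Lop, hgrad, hentry, mul_zero, Finset.sum_const_zero, add_zero, Finset.sum_mul]
    rw [Finset.sum_comm (γ := Fin d)]
    conv_rhs => rw [Finset.sum_comm]
    conv_lhs => rw [Finset.sum_comm]
    exact Finset.sum_congr rfl fun i _ => Finset.sum_comm
  rw [hL]
  exact Finset.sum_nonneg fun k _ => hessian_nonneg_of_isLocalMin hu hmin (WithLp.toLp 2 (B k))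

end MaximumPrinciple

/-! ### Coefficients on a ball -/

section EuclideanOperator

variable {d : ℕ}

/-- A matrix as a continuous linear operator on Euclidean space; its operator norm measures the
coefficients of `𝓛`. -/
def euclOp (m : Matrix (Fin d) (Fin d) ℝ) : Euc d →L[ℝ] Euc d := Matrix.toEuclideanCLM (𝕜 := ℝ) m

theorem euclOp_apply (m : Matrix (Fin d) (Fin d) ℝ) (v : Euc d) (i : Fin d) :
    euclOp m v i = ∑ j, m i j * v j := by
  simp [euclOp, Matrix.mulVec, dotProduct]

theorem euclOp_sub (m n : Matrix (Fin d) (Fin d) ℝ) : euclOp (m - n) = euclOp m - euclOp n :=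
  map_sub _ m n

theorem euclOp_mul (m n : Matrix (Fin d) (Fin d) ℝ) : euclOp (m * n) = euclOp m * euclOp n :=
  map_mul _ m n

theorem euclOp_apply_inv_apply {m : Matrix (Fin d) (Fin d) ℝ} (hm : IsUnit m.det) (v : Euc d) :
    euclOp m (euclOp m⁻¹ v) = v := by
  rw [← mul_apply_eq_comp, ← euclOp_mul, Matrix.mul_nonsing_inv m hm]
  simp [euclOp]

theorem euc_inner_eq_sum (v w : Euc d) : inner ℝ v w = ∑ i, v i * w i := by
  simp [PiLp.inner_apply, mul_comm]

theorem sum_mul_mul_eq_inner_euclOp (m : Matrix (Fin d) (Fin d) ℝ) (v w : Euc d) :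
    ∑ i, ∑ j, m i j * (v i * w j) = inner ℝ v (euclOp m w) := by
  simp only [euc_inner_eq_sum, euclOp_apply, Finset.mul_sum]
  exact Finset.sum_congr rfl fun i _ => Finset.sum_congr rfl fun j _ => by ring

theorem inner_euclOp_comm {m : Matrix (Fin d) (Fin d) ℝ} (hm : m.IsSymm) (v w : Euc d) :
    inner ℝ v (euclOp m w) = inner ℝ (euclOp m v) w := by
  rw [← sum_mul_mul_eq_inner_euclOp, real_inner_comm, ← sum_mul_mul_eq_inner_euclOp,
    Finset.sum_comm]
  exact Finset.sum_congr rfl fun i _ => Finset.sum_congr rfl fun j _ => by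
    rw [hm.apply i j]; ring

theorem quadForm_eq_inner (m : Matrix (Fin d) (Fin d) ℝ) (v : Euc d) :
    quadForm m v = inner ℝ v (euclOp m v) := by
  simp only [quadForm, ← sum_mul_mul_eq_inner_euclOp, mul_assoc]

theorem norm_euclOp_le_frob (m : Matrix (Fin d) (Fin d) ℝ) : ‖euclOp m‖ ≤ frob m := by
  refine ContinuousLinearMap.opNorm_le_bound _ (Real.sqrt_nonneg _) fun v => ?_
  rw [frob, EuclideanSpace.norm_eq, EuclideanSpace.norm_eq, ← Real.sqrt_mul (by positivity)]
  refine Real.sqrt_le_sqrt ?_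
  simp only [Real.norm_eq_abs, sq_abs, euclOp_apply]
  rw [Finset.sum_mul]
  exact Finset.sum_le_sum fun i _ => Finset.sum_mul_sq_le_sq_mul_sq _ _ _

theorem abs_entry_le_norm_euclOp (m : Matrix (Fin d) (Fin d) ℝ) (i j : Fin d) :
    |m i j| ≤ ‖euclOp m‖ := by
  have hentry : euclOp m (EuclideanSpace.single j 1) i = m i j := by
    rw [euclOp_apply]; simp
  calc |m i j| ≤ ‖euclOp m (EuclideanSpace.single j 1)‖ := by
        simpa [hentry] using PiLp.norm_apply_le (euclOp m (EuclideanSpace.single j 1)) i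
    _ ≤ ‖euclOp m‖ := by simpa using (euclOp m).le_opNorm (EuclideanSpace.single j 1)

theorem abs_inner_euclOp_le (m : Matrix (Fin d) (Fin d) ℝ) (v w : Euc d) :
    |inner ℝ v (euclOp m w)| ≤ ‖euclOp m‖ * ‖v‖ * ‖w‖ :=
  calc |inner ℝ v (euclOp m w)| ≤ ‖v‖ * ‖euclOp m w‖ := abs_real_inner_le_norm _ _
    _ ≤ ‖v‖ * (‖euclOp m‖ * ‖w‖) := by gcongr; exact (euclOp m).le_opNorm w
    _ = ‖euclOp m‖ * ‖v‖ * ‖w‖ := by ring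

theorem norm_euclOp_inv_le {m : Matrix (Fin d) (Fin d) ℝ} (hm : IsUnit m.det) {C : ℝ}
    (hC : 0 ≤ C) (hell : ∀ v, ‖v‖ ^ 2 ≤ C * inner ℝ v (euclOp m v)) : ‖euclOp m⁻¹‖ ≤ C := by
  refine ContinuousLinearMap.opNorm_le_bound _ hC fun v => ?_
  set w := euclOp m⁻¹ v
  have hsq : ‖w‖ * ‖w‖ ≤ C * ‖v‖ * ‖w‖ := by
    have h := hell w
    rw [euclOp_apply_inv_apply hm] at h
    nlinarith [real_inner_le_norm w v]
  rcases (norm_nonneg w).eq_or_lt with h0 | h0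
  · rw [← h0]; positivity
  · exact le_of_mul_le_mul_right hsq h0

theorem norm_euclOp_inv_sub_inv_le {m n : Matrix (Fin d) (Fin d) ℝ} (hm : IsUnit m.det)
    (hn : IsUnit n.det) :
    ‖euclOp (m⁻¹ - n⁻¹)‖ ≤ ‖euclOp m⁻¹‖ * ‖euclOp (m - n)‖ * ‖euclOp n⁻¹‖ := by
  have hres : m⁻¹ - n⁻¹ = m⁻¹ * (n - m) * n⁻¹ := by
    rw [mul_sub, sub_mul, mul_assoc, Matrix.mul_nonsing_inv _ hn,
      Matrix.nonsing_inv_mul _ hm, mul_one, one_mul]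
  rw [hres, euclOp_mul, euclOp_mul, euclOp_sub m n, norm_sub_rev, ← euclOp_sub]
  exact (norm_mul_le _ _).trans (by gcongr; exact norm_mul_le _ _)

theorem norm_sq_le_inner_euclOp_inv {m : Matrix (Fin d) (Fin d) ℝ} (hm : IsUnit m.det) {C : ℝ}
    (hell : ∀ v, ‖v‖ ^ 2 ≤ C * inner ℝ v (euclOp m v)) {A : ℝ} (hA : ‖euclOp m‖ ≤ A) (v : Euc d) :
    ‖v‖ ^ 2 ≤ A ^ 2 * C * inner ℝ v (euclOp m⁻¹ v) := by
  set w := euclOp m⁻¹ v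
  have hv : euclOp m w = v := euclOp_apply_inv_apply hm v
  calc ‖v‖ ^ 2 = ‖euclOp m w‖ ^ 2 := by rw [hv]
    _ ≤ (A * ‖w‖) ^ 2 := by gcongr; exact (euclOp m).le_of_opNorm_le hA w
    _ = A ^ 2 * ‖w‖ ^ 2 := by ring
    _ ≤ A ^ 2 * (C * inner ℝ w (euclOp m w)) := by gcongr; exact hell w
    _ = A ^ 2 * C * inner ℝ v w := by rw [hv, real_inner_comm]; ring

theorem isSymm_of_posDef {m : Matrix (Fin d) (Fin d) ℝ} (hm : m.PosDef) : m.IsSymm :=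
  m.conjTranspose_eq_transpose_of_trivial.symm.trans hm.1

end EuclideanOperator

section Ellipticity

variable {d : ℕ} {a : Euc d → Matrix (Fin d) (Fin d) ℝ} {b : Euc d → Euc d}

/-- The local part of the standing assumptions: `a` is symmetric, locally Lipschitz and locally
uniformly elliptic, and `b` is locally bounded. -/
structure LocallyElliptic (a : Euc d → Matrix (Fin d) (Fin d) ℝ) (b : Euc d → Euc d) : Prop where
  symm : ∀ x, (a x).IsSymm
  aLip : ∀ R > 0, ∃ C > 0, ∀ x y : Euc d, ‖x‖ ≤ R → ‖y‖ ≤ R →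
    frob (a x - a y) ≤ C * ‖x - y‖
  bLocBdd : ∀ R > 0, ∃ C, ∀ x : Euc d, ‖x‖ ≤ R → ‖b x‖ ≤ C
  nondeg : ∀ R > 0, ∃ C > 0, ∀ x : Euc d, ‖x‖ ≤ R → ∀ ξ : Euc d,
    C⁻¹ * ‖ξ‖ ^ 2 ≤ quadForm (a x) ξ

theorem StandingB.locallyElliptic (h : StandingB a b) : LocallyElliptic a b where
  symm x := isSymm_of_posDef (h.posdef x)
  aLip := h.aLip
  bLocBdd := h.bLocBdd
  nondeg := h.nondeg

theorem LocallyElliptic.posDef (h : LocallyElliptic a b) (x : Euc d) : (a x).PosDef := by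
  have hherm : (a x).IsHermitian :=
    (a x).conjTranspose_eq_transpose_of_trivial.trans (h.symm x).eq
  refine .of_dotProduct_mulVec_pos hherm fun v hv => ?_
  obtain ⟨C, hC, hell⟩ := h.nondeg (‖x‖ + 1) (by positivity)
  have hnorm : 0 < ‖WithLp.toLp 2 v‖ := by simpa using hv
  have hform : dotProduct (star v) ((a x).mulVec v) = quadForm (a x) (WithLp.toLp 2 v) := by
    simp only [quadForm, dotProduct, Matrix.mulVec, Finset.mul_sum, star_trivial]
    exact Finset.sum_congr rfl fun i _ => Finset.sum_congr rfl fun j _ => by ring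
  rw [hform]
  exact lt_of_lt_of_le (by positivity) (hell x (by linarith) _)

/-- Quantitative control of the coefficients on the ball of radius `R`: every constant needed
later (size, Lipschitz constant and ellipticity of `a` and of `a⁻¹`, size of `b`) is dominated by
the single number `κ`. -/
structure CoeffBound (a : Euc d → Matrix (Fin d) (Fin d) ℝ) (b : Euc d → Euc d) (R κ : ℝ) :
    Prop where
  one_le : 1 ≤ κ
  posDef : ∀ x, (a x).PosDef
  norm_a : ∀ x, ‖x‖ ≤ R → ‖euclOp (a x)‖ ≤ κ
  norm_inv : ∀ x, ‖x‖ ≤ R → ‖euclOp (a x)⁻¹‖ ≤ κ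
  lip : ∀ x y, ‖x‖ ≤ R → ‖y‖ ≤ R → ‖euclOp (a x - a y)‖ ≤ κ * ‖x - y‖
  lip_inv : ∀ x y, ‖x‖ ≤ R → ‖y‖ ≤ R → ‖euclOp ((a x)⁻¹ - (a y)⁻¹)‖ ≤ κ * ‖x - y‖
  norm_b : ∀ x, ‖x‖ ≤ R → ‖b x‖ ≤ κ
  ell : ∀ x, ‖x‖ ≤ R → ∀ v, ‖v‖ ^ 2 ≤ κ * inner ℝ v (euclOp (a x) v)
  ell_inv : ∀ x, ‖x‖ ≤ R → ∀ v, ‖v‖ ^ 2 ≤ κ * inner ℝ v (euclOp (a x)⁻¹ v)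

namespace CoeffBound

variable {R κ : ℝ}

theorem pos (h : CoeffBound a b R κ) : 0 < κ := one_pos.trans_le h.one_le

theorem isUnit_det (h : CoeffBound a b R κ) (x : Euc d) : IsUnit (a x).det :=
  (h.posDef x).det_pos.ne'.isUnit

theorem posSemidef (h : CoeffBound a b R κ) (x : Euc d) : (a x).PosSemidef :=
  (h.posDef x).posSemidef

theorem isSymm (h : CoeffBound a b R κ) (x : Euc d) : (a x).IsSymm :=
  isSymm_of_posDef (h.posDef x)

theorem isSymm_inv (h : CoeffBound a b R κ) (x : Euc d) : ((a x)⁻¹).IsSymm := by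
  rw [Matrix.IsSymm, Matrix.transpose_nonsing_inv, (h.isSymm x).eq]

end CoeffBound

theorem LocallyElliptic.exists_norm_euclOp_le (h : LocallyElliptic a b) {R : ℝ} (hR : 0 < R) :
    ∃ C > 0, ∀ x, ‖x‖ ≤ R → ‖euclOp (a x)‖ ≤ C := by
  obtain ⟨L, hL, hlip⟩ := h.aLip R hR
  refine ⟨‖euclOp (a 0)‖ + L * R, by positivity, fun x hx => ?_⟩
  calc ‖euclOp (a x)‖ = ‖euclOp (a 0) + euclOp (a x - a 0)‖ := by rw [euclOp_sub]; congr 1; abel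
    _ ≤ ‖euclOp (a 0)‖ + ‖euclOp (a x - a 0)‖ := norm_add_le _ _
    _ ≤ ‖euclOp (a 0)‖ + L * ‖x - 0‖ := by
        gcongr; exact (norm_euclOp_le_frob _).trans (hlip x 0 hx (by simpa using hR.le))
    _ ≤ ‖euclOp (a 0)‖ + L * R := by rw [sub_zero]; gcongr

theorem LocallyElliptic.exists_coeffBound (h : LocallyElliptic a b) {R : ℝ} (hR : 0 < R) :
    ∃ κ, CoeffBound a b R κ := by
  obtain ⟨L, hL, hlipF⟩ := h.aLip R hR
  obtain ⟨B, hB⟩ := h.bLocBdd R hR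
  obtain ⟨E, hE, hellF⟩ := h.nondeg R hR
  obtain ⟨A, hA, hnorm⟩ := h.exists_norm_euclOp_le hR
  have hunit : ∀ x, IsUnit (a x).det := fun x => (h.posDef x).det_pos.ne'.isUnit
  have hell : ∀ x, ‖x‖ ≤ R → ∀ v, ‖v‖ ^ 2 ≤ E * inner ℝ v (euclOp (a x) v) := fun x hx v => by
    rw [← quadForm_eq_inner]
    exact (inv_mul_le_iff₀ hE).1 (hellF x hx v)
  have hinv : ∀ x, ‖x‖ ≤ R → ‖euclOp (a x)⁻¹‖ ≤ E := fun x hx =>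
    norm_euclOp_inv_le (hunit x) hE.le (hell x hx)
  have hlip : ∀ x y, ‖x‖ ≤ R → ‖y‖ ≤ R → ‖euclOp (a x - a y)‖ ≤ L * ‖x - y‖ := fun x y hx hy =>
    (norm_euclOp_le_frob _).trans (hlipF x y hx hy)
  have hlipinv : ∀ x y, ‖x‖ ≤ R → ‖y‖ ≤ R →
      ‖euclOp ((a x)⁻¹ - (a y)⁻¹)‖ ≤ E * L * E * ‖x - y‖ := fun x y hx hy =>
    calc _ ≤ ‖euclOp (a x)⁻¹‖ * ‖euclOp (a x - a y)‖ * ‖euclOp (a y)⁻¹‖ :=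
          norm_euclOp_inv_sub_inv_le (hunit x) (hunit y)
      _ ≤ E * (L * ‖x - y‖) * E := by gcongr; exacts [hinv x hx, hlip x y hx hy, hinv y hy]
      _ = _ := by ring
  have hellinv : ∀ x, ‖x‖ ≤ R → ∀ v, ‖v‖ ^ 2 ≤ A ^ 2 * E * inner ℝ v (euclOp (a x)⁻¹ v) :=
    fun x hx v => norm_sq_le_inner_euclOp_inv (hunit x) (hell x hx) (hnorm x hx) v
  have hELE : 0 < E * L * E := by positivity
  have hAE : 0 < A ^ 2 * E := by positivity
  have habs := abs_nonneg B
  have hmono : ∀ {C K s t : ℝ}, 0 < C → C ≤ K → 0 ≤ t → t ≤ C * s → t ≤ K * s :=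
    fun hC hCK ht hts => hts.trans <|
      mul_le_mul_of_nonneg_right hCK (nonneg_of_mul_nonneg_right (ht.trans hts) hC)
  refine ⟨1 + |B| + L + E + A + E * L * E + A ^ 2 * E, by linarith, h.posDef,
    fun x hx => (hnorm x hx).trans (by linarith), fun x hx => (hinv x hx).trans (by linarith),
    fun x y hx hy => hmono hL (by linarith) (norm_nonneg _) (hlip x y hx hy),
    fun x y hx hy => hmono hELE (by linarith) (norm_nonneg _) (hlipinv x y hx hy),
    fun x hx => (hB x hx).trans (by linarith [le_abs_self B]),
    fun x hx v => hmono hE (by linarith) (sq_nonneg _) (hell x hx v),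
    fun x hx v => hmono hAE (by linarith) (sq_nonneg _) (hellinv x hx v)⟩

end Ellipticity

section AnisotropicDistance

variable {d : ℕ}

/-- The squared distance `⟨x - y, m (x - y)⟩` from `x` to `y` in the metric given by `m`. -/
def anisoSqDist (m : Matrix (Fin d) (Fin d) ℝ) (y x : Euc d) : ℝ :=
  inner ℝ (x - y) (euclOp m (x - y))

variable {m : Matrix (Fin d) (Fin d) ℝ}

theorem contDiff_anisoSqDist {n : WithTop ℕ∞} (m : Matrix (Fin d) (Fin d) ℝ) (y : Euc d) :
    ContDiff ℝ n (anisoSqDist m y) :=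
  ContDiff.inner ℝ (by fun_prop) (by fun_prop)

theorem pd_anisoSqDist (hm : m.IsSymm) (y : Euc d) (i : Fin d) (x : Euc d) :
    pd (anisoSqDist m y) i x = 2 * euclOp m (x - y) i := by
  have hsub : HasFDerivAt (fun x : Euc d => x - y) (ContinuousLinearMap.id ℝ _) x :=
    (hasFDerivAt_id x).sub_const y
  have hfderiv : fderiv ℝ (anisoSqDist m y) x = _ :=
    (hsub.inner ℝ ((euclOp m).hasFDerivAt.comp x hsub)).fderiv
  rw [pd, hfderiv]
  simp only [Function.comp_apply, ContinuousLinearMap.comp_apply, fderivInnerCLM_apply,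
    ContinuousLinearMap.prod_apply, ContinuousLinearMap.id_apply]
  rw [inner_euclOp_comm hm, real_inner_comm, EuclideanSpace.inner_single_left]
  simp only [map_one, one_mul]
  ring

theorem pd2_anisoSqDist (hm : m.IsSymm) (y : Euc d) (i j : Fin d) (x : Euc d) :
    pd2 (anisoSqDist m y) i j x = 2 * m i j := by
  have hlin : HasFDerivAt (fun x : Euc d => 2 * euclOp m (x - y) j)
      ((2 : ℝ) • ((EuclideanSpace.proj j : Euc d →L[ℝ] ℝ).comp (euclOp m))) x := by
    refine HasFDerivAt.const_mul ?_ 2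
    refine ((EuclideanSpace.proj j : Euc d →L[ℝ] ℝ).comp (euclOp m)).hasFDerivAt.comp x
      ((hasFDerivAt_id x).sub_const y) |>.congr_fderiv ?_
    ext; simp
  rw [pd2, funext (pd_anisoSqDist hm y j), hlin.fderiv]
  change 2 * euclOp m (EuclideanSpace.single i 1) j = _
  rw [euclOp_apply]
  simp [hm.apply i j]

variable {a : Euc d → Matrix (Fin d) (Fin d) ℝ} {b : Euc d → Euc d}

theorem Lop_anisoSqDist (hm : m.IsSymm) (y x : Euc d) : Lop a b (anisoSqDist m y) x =
    2 * (∑ i, ∑ j, a x i j * m i j) + 2 * inner ℝ (b x) (euclOp m (x - y)) := by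
  simp only [Lop, pd_anisoSqDist hm, pd2_anisoSqDist hm, euc_inner_eq_sum, Finset.mul_sum]
  congr 1
  · exact Finset.sum_congr rfl fun i _ => Finset.sum_congr rfl fun j _ => by ring
  · exact Finset.sum_congr rfl fun i _ => by ring

theorem gradForm_anisoSqDist {n : Matrix (Fin d) (Fin d) ℝ} (hm : m.IsSymm) (hn : n.IsSymm)
    (y p x : Euc d) : gradForm a (anisoSqDist m y) (anisoSqDist n p) x =
      4 * inner ℝ (euclOp m (x - y)) (euclOp (a x) (euclOp n (x - p))) := by
  rw [← sum_mul_mul_eq_inner_euclOp]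
  simp only [gradForm, pd_anisoSqDist hm, pd_anisoSqDist hn, Finset.mul_sum]
  exact Finset.sum_congr rfl fun i _ => Finset.sum_congr rfl fun j _ => by ring

end AnisotropicDistance

/-! ### Ellipsoids and boundary poles -/

section Ellipsoid

variable {d : ℕ} {a : Euc d → Matrix (Fin d) (Fin d) ℝ} {b : Euc d → Euc d}

theorem abs_sum_entry_mul_le (m n : Matrix (Fin d) (Fin d) ℝ) :
    |∑ i, ∑ j, m i j * n i j| ≤ (d : ℝ) ^ 2 * (‖euclOp m‖ * ‖euclOp n‖) := by
  have hentry : ∀ i j, |m i j * n i j| ≤ ‖euclOp m‖ * ‖euclOp n‖ := fun i j => by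
    rw [abs_mul]
    gcongr
    exacts [abs_entry_le_norm_euclOp m i j, abs_entry_le_norm_euclOp n i j]
  calc |∑ i, ∑ j, m i j * n i j| ≤ ∑ i, ∑ j, |m i j * n i j| :=
        (Finset.abs_sum_le_sum_abs _ _).trans
          (Finset.sum_le_sum fun i _ => Finset.abs_sum_le_sum_abs _ _)
    _ ≤ ∑ _i : Fin d, ∑ _j : Fin d, ‖euclOp m‖ * ‖euclOp n‖ :=
        Finset.sum_le_sum fun i _ => Finset.sum_le_sum fun j _ => hentry i j
    _ = (d : ℝ) ^ 2 * (‖euclOp m‖ * ‖euclOp n‖) := by simp; ring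

/-- The defining function `r² - ⟨x - p, a(p)⁻¹ (x - p)⟩` of the ellipsoid of size `r` centred
at `p`: positive inside, zero on the boundary. -/
def ellipsoidFn (a : Euc d → Matrix (Fin d) (Fin d) ℝ) (p : Euc d) (r : ℝ) (x : Euc d) : ℝ :=
  r ^ 2 - anisoSqDist (a p)⁻¹ p x

theorem contDiff_ellipsoidFn {n : WithTop ℕ∞} (a : Euc d → Matrix (Fin d) (Fin d) ℝ) (p : Euc d)
    (r : ℝ) : ContDiff ℝ n (ellipsoidFn a p r) :=
  contDiff_const.sub (contDiff_anisoSqDist _ p)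

theorem pd_ellipsoidFn (p : Euc d) (r : ℝ) (i : Fin d) (x : Euc d) :
    pd (ellipsoidFn a p r) i x = -pd (anisoSqDist (a p)⁻¹ p) i x :=
  pd_const_sub _ _ _ _

namespace CoeffBound

variable {R κ : ℝ} {p x y : Euc d}

theorem sum_mul_inv_entry (hκ : CoeffBound a b R κ) (y : Euc d) :
    ∑ i, ∑ j, a y i j * (a y)⁻¹ i j = d := by
  have htrace : (a y * (a y)⁻¹).trace = d := by
    rw [Matrix.mul_nonsing_inv _ (hκ.isUnit_det y)]; simp
  rw [← htrace]
  simp only [Matrix.trace, Matrix.mul_apply, Matrix.diag]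
  exact Finset.sum_congr rfl fun i _ => Finset.sum_congr rfl fun j _ => by
    rw [(hκ.isSymm_inv y).apply i j]

theorem norm_euclOp_inv_apply_le (hκ : CoeffBound a b R κ) (hy : ‖y‖ ≤ R) (v : Euc d) :
    ‖euclOp (a y)⁻¹ v‖ ≤ κ * ‖v‖ :=
  ContinuousLinearMap.le_of_opNorm_le _ (hκ.norm_inv y hy) v

theorem abs_Lop_anisoSqDist_sub_le (hκ : CoeffBound a b R κ) (hx : ‖x‖ ≤ R) (hy : ‖y‖ ≤ R) :
    |Lop a b (anisoSqDist (a y)⁻¹ y) x - 2 * d| ≤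
      2 * ((d : ℝ) ^ 2 + 1) * κ ^ 2 * ‖x - y‖ := by
  have κ0 := hκ.pos
  have hsplit : ∑ i, ∑ j, a x i j * (a y)⁻¹ i j =
      d + ∑ i, ∑ j, (a x - a y) i j * (a y)⁻¹ i j := by
    rw [← hκ.sum_mul_inv_entry y]
    simp only [← Finset.sum_add_distrib, Matrix.sub_apply]
    exact Finset.sum_congr rfl fun i _ => Finset.sum_congr rfl fun j _ => by ring
  have hsecond : |∑ i, ∑ j, (a x - a y) i j * (a y)⁻¹ i j| ≤
      (d : ℝ) ^ 2 * (κ * ‖x - y‖ * κ) := by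
    refine (abs_sum_entry_mul_le _ _).trans ?_
    gcongr
    exacts [hκ.lip x y hx hy, hκ.norm_inv y hy]
  have hfirst : |inner ℝ (b x) (euclOp (a y)⁻¹ (x - y))| ≤ κ * (κ * ‖x - y‖) := by
    refine (abs_real_inner_le_norm _ _).trans ?_
    gcongr
    exacts [hκ.norm_b x hx, hκ.norm_euclOp_inv_apply_le hy _]
  rw [Lop_anisoSqDist (hκ.isSymm_inv y), hsplit]
  rw [abs_le] at *
  constructor <;> linarith

theorem abs_inner_mul_inv_sub_le (hκ : CoeffBound a b R κ) (hx : ‖x‖ ≤ R) (hy : ‖y‖ ≤ R)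
    (u v : Euc d) : |inner ℝ u (euclOp (a x) (euclOp (a y)⁻¹ v)) - inner ℝ u v| ≤
      κ ^ 2 * ‖x - y‖ * ‖u‖ * ‖v‖ := by
  have κ0 := hκ.pos
  have hdiff : inner ℝ u (euclOp (a x) (euclOp (a y)⁻¹ v)) - inner ℝ u v =
      inner ℝ u (euclOp (a x - a y) (euclOp (a y)⁻¹ v)) := by
    rw [euclOp_sub, sub_apply, inner_sub_right, euclOp_apply_inv_apply (hκ.isUnit_det y)]
  rw [hdiff]
  calc _ ≤ ‖euclOp (a x - a y)‖ * ‖u‖ * ‖euclOp (a y)⁻¹ v‖ := abs_inner_euclOp_le _ _ _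
    _ ≤ (κ * ‖x - y‖) * ‖u‖ * (κ * ‖v‖) := by
        gcongr
        exacts [hκ.lip x y hx hy, hκ.norm_euclOp_inv_apply_le hy _]
    _ = _ := by ring

theorem anisoSqDist_le (hκ : CoeffBound a b R κ) (hy : ‖y‖ ≤ R) (p x : Euc d) :
    anisoSqDist (a y)⁻¹ p x ≤ κ * ‖x - p‖ ^ 2 := by
  refine (le_abs_self _).trans ((abs_inner_euclOp_le _ _ _).trans ?_)
  rw [mul_assoc, ← sq]
  gcongr
  exact hκ.norm_inv y hy

theorem norm_sub_le_of_anisoSqDist_le (hκ : CoeffBound a b R κ) (hy : ‖y‖ ≤ R) {s : ℝ}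
    (hs : 0 ≤ s) (h : anisoSqDist (a y)⁻¹ p x ≤ s ^ 2) : ‖x - p‖ ≤ κ * s := by
  have κ0 := hκ.pos
  refine abs_le_of_sq_le_sq' ?_ (by positivity) |>.2
  calc ‖x - p‖ ^ 2 ≤ κ * anisoSqDist (a y)⁻¹ p x := hκ.ell_inv y hy (x - p)
    _ ≤ κ * s ^ 2 := by gcongr
    _ ≤ κ * κ * s ^ 2 := by gcongr; exact le_mul_of_one_le_left κ0.le hκ.one_le
    _ = (κ * s) ^ 2 := by ring

theorem norm_sub_le_of_ellipsoidFn_nonneg (hκ : CoeffBound a b R κ) (hp : ‖p‖ ≤ R) {r : ℝ}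
    (hr : 0 ≤ r) (hx : 0 ≤ ellipsoidFn a p r x) : ‖x - p‖ ≤ κ * r :=
  hκ.norm_sub_le_of_anisoSqDist_le hp hr (sub_nonneg.1 hx)

theorem anisoSqDist_pos (hκ : CoeffBound a b R κ) (hy : ‖y‖ ≤ R) (hxy : x ≠ y) :
    0 < anisoSqDist (a y)⁻¹ y x := by
  have hnorm : 0 < ‖x - y‖ := norm_pos_iff.2 (sub_ne_zero.2 hxy)
  exact pos_of_mul_pos_right ((pow_pos hnorm 2).trans_le (hκ.ell_inv y hy (x - y))) hκ.pos.le

theorem norm_sub_le_sqrt_anisoSqDist (hκ : CoeffBound a b R κ) (hy : ‖y‖ ≤ R) (hxy : x ≠ y) :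
    ‖x - y‖ ≤ κ * √(anisoSqDist (a y)⁻¹ y x) :=
  hκ.norm_sub_le_of_anisoSqDist_le hy (Real.sqrt_nonneg _)
    (Real.sq_sqrt (hκ.anisoSqDist_pos hy hxy).le).ge

theorem sqrt_anisoSqDist_le (hκ : CoeffBound a b R κ) (hy : ‖y‖ ≤ R) (x : Euc d) :
    √(anisoSqDist (a y)⁻¹ y x) ≤ κ * ‖x - y‖ := by
  have κ0 := hκ.pos
  rw [Real.sqrt_le_left (by positivity)]
  calc anisoSqDist (a y)⁻¹ y x ≤ κ * ‖x - y‖ ^ 2 := hκ.anisoSqDist_le hy y x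
    _ ≤ κ * κ * ‖x - y‖ ^ 2 := by gcongr; exact le_mul_of_one_le_left κ0.le hκ.one_le
    _ = (κ * ‖x - y‖) ^ 2 := by ring

theorem abs_gradForm_anisoSqDist_self_sub_le (hκ : CoeffBound a b R κ) (hx : ‖x‖ ≤ R)
    (hy : ‖y‖ ≤ R) :
    |gradForm a (anisoSqDist (a y)⁻¹ y) (anisoSqDist (a y)⁻¹ y) x -
      4 * anisoSqDist (a y)⁻¹ y x| ≤ 4 * κ ^ 3 * ‖x - y‖ ^ 3 := by
  have κ0 := hκ.pos
  have h := hκ.abs_inner_mul_inv_sub_le hx hy (euclOp (a y)⁻¹ (x - y)) (x - y)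
  rw [real_inner_comm (x - y) (euclOp (a y)⁻¹ (x - y)), ← anisoSqDist] at h
  rw [gradForm_anisoSqDist (hκ.isSymm_inv y) (hκ.isSymm_inv y), ← mul_sub, abs_mul,
    abs_of_pos (by norm_num : (0 : ℝ) < 4)]
  calc _ ≤ 4 * (κ ^ 2 * ‖x - y‖ * (κ * ‖x - y‖) * ‖x - y‖) := by
        gcongr
        exact h.trans (by gcongr; exact hκ.norm_euclOp_inv_apply_le hy _)
    _ = _ := by ring

theorem two_mul_inner_eq_sub_ellipsoidFn (hκ : CoeffBound a b R κ) {r : ℝ}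
    (hy : ellipsoidFn a p r y = 0) (x : Euc d) :
    2 * inner ℝ (euclOp (a p)⁻¹ (x - p)) (x - y) =
      inner ℝ (x - y) (euclOp (a p)⁻¹ (x - y)) - ellipsoidFn a p r x := by
  have hyp : y - p = (x - p) - (x - y) := by abel
  simp only [ellipsoidFn, anisoSqDist] at hy ⊢
  rw [hyp, map_sub, inner_sub_left, inner_sub_right, inner_sub_right,
    inner_euclOp_comm (hκ.isSymm_inv p) (x - p) (x - y),
    real_inner_comm (euclOp _ (x - p)) (x - y)] at hy
  linarith

variable {r : ℝ}

theorem norm_euclOp_inv_sub_le_of_ellipsoidFn_nonneg (hκ : CoeffBound a b R κ) (hp : ‖p‖ ≤ R)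
    (hr : 0 ≤ r) (hx : 0 ≤ ellipsoidFn a p r x) : ‖euclOp (a p)⁻¹ (x - p)‖ ≤ κ ^ 2 * r := by
  have κ0 := hκ.pos
  calc ‖euclOp (a p)⁻¹ (x - p)‖ ≤ κ * ‖x - p‖ := hκ.norm_euclOp_inv_apply_le hp _
    _ ≤ κ * (κ * r) := by gcongr; exact hκ.norm_sub_le_of_ellipsoidFn_nonneg hp hr hx
    _ = κ ^ 2 * r := by ring

theorem norm_sub_le_of_mem_ellipsoid (hκ : CoeffBound a b R κ) (hp : ‖p‖ ≤ R) (hr : 0 ≤ r)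
    (hx : 0 ≤ ellipsoidFn a p r x) (hy : 0 ≤ ellipsoidFn a p r y) : ‖x - y‖ ≤ 2 * κ * r := by
  have htri := norm_sub_le (x - p) (y - p)
  rw [sub_sub_sub_cancel_right] at htri
  linarith [hκ.norm_sub_le_of_ellipsoidFn_nonneg hp hr hx,
    hκ.norm_sub_le_of_ellipsoidFn_nonneg hp hr hy]

theorem ellipsoidFn_le_mul_norm_sub (hκ : CoeffBound a b R κ) (hp : ‖p‖ ≤ R) (hr : 0 ≤ r)
    (hy : ellipsoidFn a p r y = 0) (hx : 0 ≤ ellipsoidFn a p r x) :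
    ellipsoidFn a p r x ≤ 4 * κ ^ 2 * r * ‖x - y‖ := by
  have κ0 := hκ.pos
  have hquad : |inner ℝ (x - y) (euclOp (a p)⁻¹ (x - y))| ≤ κ * ‖x - y‖ * (2 * κ * r) :=
    (abs_inner_euclOp_le _ _ _).trans (by
      gcongr
      exacts [hκ.norm_inv p hp, hκ.norm_sub_le_of_mem_ellipsoid hp hr hx hy.ge])
  have hlin : |inner ℝ (euclOp (a p)⁻¹ (x - p)) (x - y)| ≤ κ ^ 2 * r * ‖x - y‖ :=
    (abs_real_inner_le_norm _ _).trans (by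
      gcongr; exact hκ.norm_euclOp_inv_sub_le_of_ellipsoidFn_nonneg hp hr hx)
  linarith [hκ.two_mul_inner_eq_sub_ellipsoidFn hy x,
    le_abs_self (inner ℝ (x - y) (euclOp (a p)⁻¹ (x - y))),
    neg_abs_le (inner ℝ (euclOp (a p)⁻¹ (x - p)) (x - y))]

theorem abs_Lop_ellipsoidFn_add_le (hκ : CoeffBound a b R κ) (hp : ‖p‖ ≤ R) (hx : ‖x‖ ≤ R)
    (r : ℝ) : |Lop a b (ellipsoidFn a p r) x + 2 * d| ≤
      2 * ((d : ℝ) ^ 2 + 1) * κ ^ 2 * ‖x - p‖ := by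
  have hL : Lop a b (ellipsoidFn a p r) x = -Lop a b (anisoSqDist (a p)⁻¹ p) x :=
    Lop_const_sub _ _ _
  rw [hL, neg_add_eq_sub, abs_sub_comm]
  exact hκ.abs_Lop_anisoSqDist_sub_le hx hp

theorem abs_gradForm_ellipsoidFn_self_sub_le (hκ : CoeffBound a b R κ) (hp : ‖p‖ ≤ R)
    (hx : ‖x‖ ≤ R) (r : ℝ) :
    |gradForm a (ellipsoidFn a p r) (ellipsoidFn a p r) x - 4 * (r ^ 2 - ellipsoidFn a p r x)| ≤
      4 * κ ^ 3 * ‖x - p‖ ^ 3 := by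
  have hgrad : gradForm a (ellipsoidFn a p r) (ellipsoidFn a p r) x =
      gradForm a (anisoSqDist (a p)⁻¹ p) (anisoSqDist (a p)⁻¹ p) x := by
    simp only [gradForm, pd_ellipsoidFn, neg_mul, mul_neg, neg_neg]
  rw [hgrad, ellipsoidFn, sub_sub_cancel]
  exact hκ.abs_gradForm_anisoSqDist_self_sub_le hx hp

theorem abs_gradForm_ellipsoidFn_anisoSqDist_sub_le (hκ : CoeffBound a b R κ) (hp : ‖p‖ ≤ R)
    (hy : ‖y‖ ≤ R) (hx : ‖x‖ ≤ R) (hr : 0 ≤ r) (hyb : ellipsoidFn a p r y = 0)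
    (hσ : 0 ≤ ellipsoidFn a p r x) :
    |gradForm a (ellipsoidFn a p r) (anisoSqDist (a y)⁻¹ y) x -
      (2 * ellipsoidFn a p r x - 2 * anisoSqDist (a y)⁻¹ y x)| ≤
      6 * κ ^ 4 * r * ‖x - y‖ ^ 2 := by
  have κ0 := hκ.pos
  have hgrad : gradForm a (ellipsoidFn a p r) (anisoSqDist (a y)⁻¹ y) x =
      -(4 * inner ℝ (euclOp (a p)⁻¹ (x - p)) (euclOp (a x) (euclOp (a y)⁻¹ (x - y)))) := by
    rw [← gradForm_anisoSqDist (hκ.isSymm_inv p) (hκ.isSymm_inv y)]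
    simp only [gradForm, pd_ellipsoidFn, neg_mul, mul_neg, Finset.sum_neg_distrib]
  have hfreeze : |inner ℝ (euclOp (a p)⁻¹ (x - p)) (euclOp (a x) (euclOp (a y)⁻¹ (x - y))) -
      inner ℝ (euclOp (a p)⁻¹ (x - p)) (x - y)| ≤ κ ^ 4 * r * ‖x - y‖ ^ 2 :=
    calc _ ≤ κ ^ 2 * ‖x - y‖ * ‖euclOp (a p)⁻¹ (x - p)‖ * ‖x - y‖ :=
          hκ.abs_inner_mul_inv_sub_le hx hy _ _
      _ ≤ κ ^ 2 * ‖x - y‖ * (κ ^ 2 * r) * ‖x - y‖ := by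
          gcongr; exact hκ.norm_euclOp_inv_sub_le_of_ellipsoidFn_nonneg hp hr hσ
      _ = _ := by ring
  have hpole : |inner ℝ (x - y) (euclOp (a p)⁻¹ (x - y)) - anisoSqDist (a y)⁻¹ y x| ≤
      κ ^ 4 * r * ‖x - y‖ ^ 2 := by
    rw [anisoSqDist, ← inner_sub_right, ← sub_apply, ← euclOp_sub]
    calc _ ≤ ‖euclOp ((a p)⁻¹ - (a y)⁻¹)‖ * ‖x - y‖ * ‖x - y‖ := abs_inner_euclOp_le _ _ _
      _ ≤ κ * (κ * r) * ‖x - y‖ * ‖x - y‖ := by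
          gcongr
          refine (hκ.lip_inv p y hp hy).trans ?_
          rw [norm_sub_rev]
          gcongr
          exact hκ.norm_sub_le_of_ellipsoidFn_nonneg hp hr hyb.ge
      _ = κ ^ 2 * r * ‖x - y‖ ^ 2 := by ring
      _ ≤ κ ^ 4 * r * ‖x - y‖ ^ 2 := by gcongr; exacts [hκ.one_le, by norm_num]
  rw [hgrad]
  have hpol := hκ.two_mul_inner_eq_sub_ellipsoidFn hyb x
  rw [abs_le] at *
  constructor <;> linarith

end CoeffBound

end Ellipsoid

section Poles

variable {d : ℕ} {a : Euc d → Matrix (Fin d) (Fin d) ℝ} {b : Euc d → Euc d}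

/-- At the point `x`, the functions `σ` and `τ` behave to leading order like the defining function
of a Euclidean ball of radius `r` and the squared distance to a pole on its boundary do for the
Laplacian, with relative errors of size `K r`. -/
structure PoleEstimates (a : Euc d → Matrix (Fin d) (Fin d) ℝ) (b : Euc d → Euc d) (K r : ℝ)
    (σ τ : Euc d → ℝ) (x : Euc d) : Prop where
  one_le : 1 ≤ K
  r_pos : 0 < r
  symm : (a x).IsSymm
  contDiffAt_σ : ContDiffAt ℝ 2 σ x
  contDiffAt_τ : ContDiffAt ℝ 2 τ x
  σ_pos : 0 < σ x
  τ_pos : 0 < τ x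
  sqrt_τ_le : √(τ x) ≤ K * r
  σ_le : σ x ≤ K * r * √(τ x)
  Lop_τ : |Lop a b τ x - 2 * d| ≤ K * √(τ x)
  gradForm_τ : |gradForm a τ τ x - 4 * τ x| ≤ K * √(τ x) * τ x
  Lop_σ : |Lop a b σ x + 2 * d| ≤ K * r
  gradForm_σ_τ : |gradForm a σ τ x - (2 * σ x - 2 * τ x)| ≤ K * r * τ x
  gradForm_σ : |gradForm a σ σ x - 4 * (r ^ 2 - σ x)| ≤ K * r ^ 3

/-- A constant for which the `PoleEstimates` hold on ellipsoids, in terms of the coefficient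
bound `κ`. -/
def poleConst (d : ℕ) (κ : ℝ) : ℝ := 8 * ((d : ℝ) ^ 2 + 1) * κ ^ 6

theorem mul_pow_le_poleConst {κ c : ℝ} (hκ : 1 ≤ κ) (hc : c ≤ 8 * ((d : ℝ) ^ 2 + 1)) {n : ℕ}
    (hn : n ≤ 6) : c * κ ^ n ≤ poleConst d κ := by
  unfold poleConst
  gcongr

theorem one_le_poleConst {κ : ℝ} (hκ : 1 ≤ κ) : 1 ≤ poleConst d κ := by
  simpa using mul_pow_le_poleConst (d := d) (c := 1) (n := 0) hκ
    (by linarith [sq_nonneg (d : ℝ)]) (by norm_num)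

theorem CoeffBound.poleEstimates {R κ : ℝ} (hκ : CoeffBound a b R κ) {p y x : Euc d} {r : ℝ}
    (hr : 0 < r) (hp : ‖p‖ ≤ R) (hy : ‖y‖ ≤ R) (hx : ‖x‖ ≤ R) (hyb : ellipsoidFn a p r y = 0)
    (hσ : 0 < ellipsoidFn a p r x) :
    PoleEstimates a b (poleConst d κ) r (ellipsoidFn a p r) (anisoSqDist (a y)⁻¹ y) x := by
  have κ0 := hκ.pos
  have hd : (0 : ℝ) ≤ (d : ℝ) ^ 2 := sq_nonneg _
  have hxp : ‖x - p‖ ≤ κ * r := hκ.norm_sub_le_of_ellipsoidFn_nonneg hp hr.le hσ.le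
  have hxy : x ≠ y := by rintro rfl; exact hσ.ne' hyb
  set τ := anisoSqDist (a y)⁻¹ y x
  have hτ : 0 < τ := hκ.anisoSqDist_pos hy hxy
  have hdist : ‖x - y‖ ≤ κ * √τ := hκ.norm_sub_le_sqrt_anisoSqDist hy hxy
  have hdistsq : ‖x - y‖ ^ 2 ≤ κ * τ := hκ.ell_inv y hy (x - y)
  have hK : ∀ {c t : ℝ} (n : ℕ), c ≤ 8 * ((d : ℝ) ^ 2 + 1) → n ≤ 6 → 0 ≤ t →
      c * κ ^ n * t ≤ poleConst d κ * t := fun n hc hn ht =>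
    mul_le_mul_of_nonneg_right (mul_pow_le_poleConst hκ.one_le hc hn) ht
  refine ⟨one_le_poleConst hκ.one_le, hr, hκ.isSymm x, (contDiff_ellipsoidFn a p r).contDiffAt,
    (contDiff_anisoSqDist _ y).contDiffAt, hσ, hτ, ?_, ?_,
    (hκ.abs_Lop_anisoSqDist_sub_le hx hy).trans ?_,
    (hκ.abs_gradForm_anisoSqDist_self_sub_le hx hy).trans ?_,
    (hκ.abs_Lop_ellipsoidFn_add_le hp hx r).trans ?_,
    (hκ.abs_gradForm_ellipsoidFn_anisoSqDist_sub_le hp hy hx hr.le hyb hσ.le).trans ?_,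
    (hκ.abs_gradForm_ellipsoidFn_self_sub_le hp hx r).trans ?_⟩
  · calc √τ ≤ κ * ‖x - y‖ := hκ.sqrt_anisoSqDist_le hy x
      _ ≤ κ * (2 * κ * r) := by
          gcongr; exact hκ.norm_sub_le_of_mem_ellipsoid hp hr.le hσ.le hyb.ge
      _ ≤ _ := by linarith [hK (c := 2) 2 (by linarith) (by norm_num) hr.le]
  · calc _ ≤ 4 * κ ^ 2 * r * (κ * √τ) :=
          (hκ.ellipsoidFn_le_mul_norm_sub hp hr.le hyb hσ.le).trans (by gcongr)
      _ ≤ poleConst d κ * r * √τ := by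
          linarith [hK (c := 4) (t := r * √τ) 3 (by linarith) (by norm_num) (by positivity)]
  · calc _ ≤ 2 * ((d : ℝ) ^ 2 + 1) * κ ^ 2 * (κ * √τ) := by gcongr
      _ ≤ poleConst d κ * √τ := by
          linarith [hK (c := 2 * (d ^ 2 + 1)) 3 (by linarith) (by norm_num) (Real.sqrt_nonneg τ)]
  · calc 4 * κ ^ 3 * ‖x - y‖ ^ 3 = 4 * κ ^ 3 * (‖x - y‖ * ‖x - y‖ ^ 2) := by ring
      _ ≤ 4 * κ ^ 3 * (κ * √τ * (κ * τ)) := by gcongr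
      _ ≤ poleConst d κ * √τ * τ := by
          linarith [hK (c := 4) (t := √τ * τ) 5 (by linarith) (by norm_num) (by positivity)]
  · calc _ ≤ 2 * ((d : ℝ) ^ 2 + 1) * κ ^ 2 * (κ * r) := by gcongr
      _ ≤ _ := by linarith [hK (c := 2 * (d ^ 2 + 1)) 3 (by linarith) (by norm_num) hr.le]
  · calc _ ≤ 6 * κ ^ 4 * r * (κ * τ) := by gcongr
      _ ≤ poleConst d κ * r * τ := by
          linarith [hK (c := 6) (t := r * τ) 5 (by linarith) (by norm_num) (by positivity)]
  · calc _ ≤ 4 * κ ^ 3 * (κ * r) ^ 3 := by gcongr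
      _ ≤ _ := by
          linarith [hK (c := 4) (t := r ^ 3) 6 (by linarith) (by norm_num) (by positivity)]

end Poles

/-! ### Barriers comparable to the Poisson kernel -/

section Barriers

variable {d : ℕ} {a : Euc d → Matrix (Fin d) (Fin d) ℝ} {b : Euc d → Euc d}
  {σ τ : Euc d → ℝ} {x : Euc d} {K r : ℝ}

theorem deriv_deriv_rpow_const {t : ℝ} (ht : 0 < t) (e : ℝ) :
    deriv (deriv fun s : ℝ => s ^ e) t = e * (e - 1) * t ^ (e - 2) := by
  have h : deriv (fun s : ℝ => s ^ e) =ᶠ[𝓝 t] fun s => e * s ^ (e - 1) := by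
    filter_upwards [eventually_ne_nhds ht.ne'] with s hs
    exact (Real.hasDerivAt_rpow_const (Or.inl hs)).deriv
  have h2 := (Real.hasDerivAt_rpow_const (x := t) (p := e - 1) (Or.inl ht.ne')).const_mul e
  rw [h.deriv_eq, h2.deriv, show e - 1 - 1 = e - 2 by ring]
  ring

theorem gradForm_rpow (hτ : ContDiffAt ℝ 2 τ x) (ht : 0 < τ x) (e : ℝ) (w : Euc d → ℝ) :
    gradForm a w (fun y => τ y ^ e) x = e * (τ x ^ e / τ x) * gradForm a w τ x := by
  rw [gradForm_comp_right (g := fun s : ℝ => s ^ e) (hτ.differentiableAt (by simp))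
    (Real.differentiableAt_rpow_const_of_ne e ht.ne') w,
    (Real.hasDerivAt_rpow_const (Or.inl ht.ne')).deriv, Real.rpow_sub_one ht.ne']

theorem Lop_mul_rpow (ha : (a x).IsSymm) (hσ : ContDiffAt ℝ 2 σ x) (hτ : ContDiffAt ℝ 2 τ x)
    (ht : 0 < τ x) (e : ℝ) :
    Lop a b (fun y => σ y * τ y ^ e) x = τ x ^ e *
      (e * (σ x / τ x) * Lop a b τ x + e * (e - 1) * (σ x / τ x ^ 2) * gradForm a τ τ x +
        Lop a b σ x + 2 * e / τ x * gradForm a σ τ x) := by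
  rw [Lop_mul hσ (hτ.rpow_const_of_ne ht.ne'), gradForm_comm ha (fun y => τ y ^ e) σ,
    gradForm_rpow hτ ht,
    Lop_comp (g := fun s : ℝ => s ^ e) hτ (Real.contDiffAt_rpow_const_of_ne ht.ne'),
    deriv_deriv_rpow_const ht, (Real.hasDerivAt_rpow_const (Or.inl ht.ne')).deriv,
    Real.rpow_sub_one ht.ne', Real.rpow_sub ht, Real.rpow_two]
  field_simp
  ring

theorem Lop_mul_mul_rpow (ha : (a x).IsSymm) (hσ : ContDiffAt ℝ 2 σ x)
    (hτ : ContDiffAt ℝ 2 τ x) (ht : 0 < τ x) (e : ℝ) :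
    Lop a b (fun y => σ y * (σ y * τ y ^ e)) x = σ x * Lop a b (fun y => σ y * τ y ^ e) x +
      τ x ^ e * (σ x * Lop a b σ x + 2 * e * (σ x / τ x) * gradForm a σ τ x +
        2 * gradForm a σ σ x) := by
  have h1 : ContDiffAt ℝ 2 (fun y => τ y ^ e) x := hτ.rpow_const_of_ne ht.ne'
  rw [Lop_mul hσ (hσ.mul h1), gradForm_comm ha (fun y => σ y * τ y ^ e) σ,
    gradForm_mul_right (hσ.differentiableAt (by simp)) (h1.differentiableAt (by simp)),
    gradForm_rpow hτ ht]
  field_simp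
  ring

/-- The relative error constant in `PoleEstimates.abs_Lop_mul_rpow_sub_le`. -/
def profileErrorConst (d : ℕ) (K : ℝ) : ℝ := K ^ 2 * (1 + 2 * d) ^ 2

/-- The relative error constant in `PoleEstimates.le_Lop_mul_mul_rpow`. -/
def correctionConst (d : ℕ) (K : ℝ) : ℝ :=
  K * (profileErrorConst d K + 2 * d + K + 2 * d * K + 8 + 4 * d)

theorem profileErrorConst_pos (d : ℕ) (hK : 0 < K) : 0 < profileErrorConst d K := by
  unfold profileErrorConst
  positivity

theorem correctionConst_pos (d : ℕ) (hK : 0 < K) : 0 < correctionConst d K := by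
  have := profileErrorConst_pos d hK
  unfold correctionConst
  positivity

namespace PoleEstimates

theorem K_pos (h : PoleEstimates a b K r σ τ x) : 0 < K := one_pos.trans_le h.one_le

theorem contDiffAt_mul_rpow (h : PoleEstimates a b K r σ τ x) (e : ℝ) :
    ContDiffAt ℝ 2 (fun y => σ y * τ y ^ e) x :=
  h.contDiffAt_σ.mul (h.contDiffAt_τ.rpow_const_of_ne h.τ_pos.ne')

theorem σ_div_τ_le (h : PoleEstimates a b K r σ τ x) : σ x / τ x ≤ K * r / √(τ x) := by
  calc σ x / τ x ≤ K * r * √(τ x) / τ x := div_le_div_of_nonneg_right h.σ_le h.τ_pos.le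
    _ = K * r / √(τ x) := by
      rw [mul_div_assoc, Real.sqrt_div_self', mul_one_div]

theorem abs_mul_Lop_sub_le (h : PoleEstimates a b K r σ τ x) :
    |σ x / τ x * (Lop a b τ x - 2 * d)| ≤ K ^ 2 * r := by
  have hσ := h.σ_pos
  have hτ := h.τ_pos
  have := Real.sqrt_pos.2 hτ
  have hr := h.r_pos
  have hK := h.K_pos
  rw [abs_mul, abs_of_pos (by positivity)]
  calc _ ≤ K * r / √(τ x) * (K * √(τ x)) :=
        mul_le_mul h.σ_div_τ_le h.Lop_τ (abs_nonneg _) (by positivity)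
    _ = K ^ 2 * r := by field_simp

theorem abs_mul_gradForm_sub_le (h : PoleEstimates a b K r σ τ x) :
    |σ x / τ x ^ 2 * (gradForm a τ τ x - 4 * τ x)| ≤ K ^ 2 * r := by
  have hσ := h.σ_pos
  have hτ := h.τ_pos
  have := Real.sqrt_pos.2 hτ
  have hr := h.r_pos
  have hK := h.K_pos
  rw [abs_mul, abs_of_pos (by positivity), sq (τ x), ← div_div]
  calc _ ≤ K * r / √(τ x) / τ x * (K * √(τ x) * τ x) :=
        mul_le_mul (div_le_div_of_nonneg_right h.σ_div_τ_le hτ.le) h.gradForm_τ (abs_nonneg _)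
          (by positivity)
    _ = K ^ 2 * r := by field_simp

/-- For `e = -d/2` the main term vanishes: `σ τ^{-d/2}` is an approximate solution, as the Poisson
kernel of a ball. For exponents near `-d/2` its sign is that of `-(2d + 4e)`. -/
theorem abs_Lop_mul_rpow_sub_le (h : PoleEstimates a b K r σ τ x) {e : ℝ} (he : |e| ≤ d) :
    |Lop a b (fun y => σ y * τ y ^ e) x - τ x ^ e * ((2 * d + 4 * e) * (e * (σ x / τ x) - 1))| ≤
      τ x ^ e * (profileErrorConst d K * r) := by
  have ht := h.τ_pos
  have hr := h.r_pos
  have hK := h.K_pos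
  have hte := Real.rpow_pos_of_pos ht e
  rw [Lop_mul_rpow h.symm h.contDiffAt_σ h.contDiffAt_τ ht, ← mul_sub, abs_mul, abs_of_pos hte]
  refine mul_le_mul_of_nonneg_left ?_ hte.le
  have hcross : |(gradForm a σ τ x - (2 * σ x - 2 * τ x)) / τ x| ≤ K * r := by
    rw [abs_div, abs_of_pos ht, div_le_iff₀ ht]
    exact h.gradForm_σ_τ
  have split : e * (σ x / τ x) * Lop a b τ x +
        e * (e - 1) * (σ x / τ x ^ 2) * gradForm a τ τ x + Lop a b σ x +
        2 * e / τ x * gradForm a σ τ x - (2 * d + 4 * e) * (e * (σ x / τ x) - 1) =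
      e * (σ x / τ x * (Lop a b τ x - 2 * d)) +
      e * (e - 1) * (σ x / τ x ^ 2 * (gradForm a τ τ x - 4 * τ x)) + (Lop a b σ x + 2 * d) +
      2 * e * ((gradForm a σ τ x - (2 * σ x - 2 * τ x)) / τ x) := by
    field_simp
    ring
  have he1 : |e - 1| ≤ d + 1 := (abs_sub _ _).trans (by simpa using he)
  have hKK : K ≤ K ^ 2 := le_self_pow₀ h.one_le two_ne_zero
  have hd : (0 : ℝ) ≤ d := Nat.cast_nonneg d
  rw [split]
  calc _ ≤ |e| * (K ^ 2 * r) + |e| * |e - 1| * (K ^ 2 * r) + K * r + 2 * |e| * (K * r) := by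
        refine (abs_add_le _ _).trans (add_le_add ((abs_add_le _ _).trans (add_le_add
          ((abs_add_le _ _).trans (add_le_add ?_ ?_)) h.Lop_σ)) ?_)
        · rw [abs_mul]; gcongr; exact h.abs_mul_Lop_sub_le
        · rw [abs_mul, abs_mul]; gcongr; exact h.abs_mul_gradForm_sub_le
        · rw [abs_mul, abs_mul, abs_two]; gcongr
    _ ≤ d * (K ^ 2 * r) + d * (d + 1) * (K ^ 2 * r) + K ^ 2 * r + 2 * d * (K ^ 2 * r) := by
        gcongr
    _ = (1 + 4 * d + d * d) * (K ^ 2 * r) := by ring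
    _ ≤ (1 + 2 * d) ^ 2 * (K ^ 2 * r) := by gcongr; nlinarith [mul_nonneg hd hd]
    _ = _ := by unfold profileErrorConst; ring

theorem le_mul_gradForm_σ_τ (h : PoleEstimates a b K r σ τ x) (hr1 : r ≤ 1) {e : ℝ}
    (he0 : e ≤ 0) (hed : |e| ≤ d) :
    -(4 * d * σ x * (K * r / √(τ x)) + 2 * d * K * σ x) ≤
      2 * e * (σ x / τ x) * gradForm a σ τ x := by
  have hσ := h.σ_pos
  have hτ := h.τ_pos
  have hr := h.r_pos
  have hK := h.K_pos
  have hgrad : gradForm a σ τ x ≤ 2 * σ x + K * r * τ x := by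
    linarith [(abs_le.1 h.gradForm_σ_τ).2]
  have hle : 4 * σ x * (σ x / τ x) + 2 * K * r * σ x ≤
      4 * σ x * (K * r / √(τ x)) + 2 * K * 1 * σ x :=
    add_le_add (mul_le_mul_of_nonneg_left h.σ_div_τ_le (by positivity)) (by gcongr)
  calc -(4 * d * σ x * (K * r / √(τ x)) + 2 * d * K * σ x)
      = -d * (4 * σ x * (K * r / √(τ x)) + 2 * K * 1 * σ x) := by ring
    _ ≤ e * (4 * σ x * (K * r / √(τ x)) + 2 * K * 1 * σ x) :=
        mul_le_mul_of_nonneg_right (neg_le_of_abs_le hed) (by positivity)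
    _ ≤ e * (4 * σ x * (σ x / τ x) + 2 * K * r * σ x) := mul_le_mul_of_nonpos_left hle he0
    _ = 2 * e * (σ x / τ x) * (2 * σ x + K * r * τ x) := by field_simp; ring
    _ ≤ 2 * e * (σ x / τ x) * gradForm a σ τ x :=
        mul_le_mul_of_nonpos_left hgrad
          (mul_nonpos_of_nonpos_of_nonneg (by linarith) (by positivity))

theorem le_Lop_mul_rpow (h : PoleEstimates a b K r σ τ x) {e : ℝ} (he : 2 * d + 4 * e = -1)
    (he0 : e ≤ 0) (hed : |e| ≤ d) :
    -(τ x ^ e * (profileErrorConst d K * r)) ≤ Lop a b (fun y => σ y * τ y ^ e) x := by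
  have hlow := (abs_le.1 (h.abs_Lop_mul_rpow_sub_le hed)).1
  rw [he] at hlow
  have hneg : e * (σ x / τ x) ≤ 0 :=
    mul_nonpos_of_nonpos_of_nonneg he0 (div_pos h.σ_pos h.τ_pos).le
  have : 0 ≤ τ x ^ e * (-1 * (e * (σ x / τ x) - 1)) :=
    mul_nonneg (Real.rpow_pos_of_pos h.τ_pos e).le (by linarith)
  linarith

theorem le_Lop_mul_mul_rpow (h : PoleEstimates a b K r σ τ x) (hd : 1 ≤ d) (hr1 : r ≤ 1) {e : ℝ}
    (he : 2 * d + 4 * e = -1) :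
    τ x ^ e * (8 * r ^ 2 - 2 * K * r ^ 3 - correctionConst d K * r * (σ x / √(τ x))) ≤
      Lop a b (fun y => σ y * (σ y * τ y ^ e)) x := by
  have ht := h.τ_pos
  have hs := h.σ_pos
  have := h.r_pos
  have hK := h.K_pos
  have d1 : (1 : ℝ) ≤ d := by exact_mod_cast hd
  have he0 : e ≤ 0 := by linarith
  have hed : |e| ≤ d := by rw [abs_of_nonpos he0]; linarith
  have hcross := h.le_mul_gradForm_σ_τ hr1 he0 hed
  have hone : 1 ≤ K * r / √(τ x) := (one_le_div (Real.sqrt_pos.2 ht)).2 h.sqrt_τ_le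
  have hK1 := profileErrorConst_pos d hK
  have hn := Real.rpow_pos_of_pos ht e
  rw [Lop_mul_mul_rpow h.symm h.contDiffAt_σ h.contDiffAt_τ ht]
  set C := profileErrorConst d K + 2 * d + K + 2 * d * K + 8
  have hLσ : σ x * (-(2 * d) - K * r) ≤ σ x * Lop a b σ x := by
    gcongr
    linarith [(abs_le.1 h.Lop_σ).1]
  have hlower : 8 * r ^ 2 - 2 * K * r ^ 3 - correctionConst d K * r * (σ x / √(τ x)) ≤
      σ x * (-(profileErrorConst d K * r)) + (σ x * Lop a b σ x +
        2 * e * (σ x / τ x) * gradForm a σ τ x + 2 * gradForm a σ σ x) := by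
    have hC : C * σ x * 1 ≤ C * σ x * (K * r / √(τ x)) := by gcongr
    have hP : σ x * (profileErrorConst d K * r) ≤ σ x * (profileErrorConst d K * 1) := by gcongr
    have hKσ : σ x * (K * r) ≤ σ x * (K * 1) := by gcongr
    have hconst : correctionConst d K * r * (σ x / √(τ x)) =
        C * σ x * (K * r / √(τ x)) + 4 * d * σ x * (K * r / √(τ x)) := by
      unfold correctionConst
      ring
    rw [hconst]
    linarith [(abs_le.1 h.gradForm_σ).1]
  calc _ ≤ _ := mul_le_mul_of_nonneg_left hlower hn.le
    _ = σ x * -(τ x ^ e * (profileErrorConst d K * r)) + τ x ^ e * (σ x * Lop a b σ x +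
        2 * e * (σ x / τ x) * gradForm a σ τ x + 2 * gradForm a σ σ x) := by ring
    _ ≤ _ := by gcongr; exact h.le_Lop_mul_rpow he he0 hed

end PoleEstimates

/-- A function which is small compared to `σ τ^{-d/2}` and on which `Lop` is strictly negative, of
the size `r τ^{-d/2}` of the error made by the Poisson profile. It makes the profile a strict super-
or subsolution. -/
def barrierCorrection (d : ℕ) (K r : ℝ) (σ τ : Euc d → ℝ) (y : Euc d) : ℝ :=
  √(K * r) * (4 * correctionConst d K * (σ y * τ y ^ (-(d : ℝ) / 2 + 1 / 4)) -
    r⁻¹ * (σ y * (σ y * τ y ^ (-(d : ℝ) / 2 - 1 / 4))))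

namespace PoleEstimates

theorem contDiffAt_barrierCorrection (h : PoleEstimates a b K r σ τ x) :
    ContDiffAt ℝ 2 (barrierCorrection d K r σ τ) x :=
  contDiffAt_const.mul ((contDiffAt_const.mul (h.contDiffAt_mul_rpow _)).sub
    (contDiffAt_const.mul (h.contDiffAt_σ.mul (h.contDiffAt_mul_rpow _))))

theorem rpow_add_quarter_le (h : PoleEstimates a b K r σ τ x) (e : ℝ) :
    τ x ^ (e + 1 / 4) ≤ √(K * r) * τ x ^ e := by
  rw [Real.rpow_add h.τ_pos, mul_comm]
  refine mul_le_mul_of_nonneg_right ?_ (Real.rpow_pos_of_pos h.τ_pos e).le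
  calc τ x ^ (1 / 4 : ℝ) = √(√(τ x)) := by
        rw [Real.sqrt_eq_rpow, Real.sqrt_eq_rpow, ← Real.rpow_mul h.τ_pos.le]
        norm_num
    _ ≤ √(K * r) := Real.sqrt_le_sqrt h.sqrt_τ_le

theorem abs_barrierCorrection_le (h : PoleEstimates a b K r σ τ x) :
    |barrierCorrection d K r σ τ x| ≤
      (4 * correctionConst d K + K) * K * r * (σ x * τ x ^ (-(d : ℝ) / 2)) := by
  have hs := h.σ_pos
  have ht := h.τ_pos
  have hr := h.r_pos
  have hK := h.K_pos
  have hC := correctionConst_pos d hK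
  set α : ℝ := -(d : ℝ) / 2
  have hquarter : r⁻¹ * (σ x * (σ x * τ x ^ (α - 1 / 4))) ≤ K * (σ x * τ x ^ (α + 1 / 4)) := by
    calc _ ≤ r⁻¹ * (K * r * √(τ x) * (σ x * τ x ^ (α - 1 / 4))) := by gcongr; exact h.σ_le
      _ = K * (σ x * (√(τ x) * τ x ^ (α - 1 / 4))) := by field_simp
      _ = _ := by rw [Real.sqrt_eq_rpow, ← Real.rpow_add ht]; ring_nf
  have hpos : 0 ≤ r⁻¹ * (σ x * (σ x * τ x ^ (α - 1 / 4))) := by positivity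
  have hpos' : 0 ≤ correctionConst d K * (σ x * τ x ^ (α + 1 / 4)) := by positivity
  unfold barrierCorrection
  rw [abs_mul, abs_of_nonneg (Real.sqrt_nonneg _)]
  calc _ ≤ √(K * r) * ((4 * correctionConst d K + K) * (σ x * τ x ^ (α + 1 / 4))) := by
        gcongr
        exact abs_le.2 ⟨by linarith, by linarith⟩
    _ ≤ √(K * r) * ((4 * correctionConst d K + K) * (σ x * (√(K * r) * τ x ^ α))) := by
        gcongr
        exact h.rpow_add_quarter_le α
    _ = (√(K * r) * √(K * r)) * ((4 * correctionConst d K + K) * (σ x * τ x ^ α)) := by ring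
    _ = _ := by rw [Real.mul_self_sqrt (by positivity)]; ring

theorem Lop_mul_rpow_add_quarter_le (h : PoleEstimates a b K r σ τ x) (hd : 1 ≤ d)
    (hr1 : profileErrorConst d K * r ≤ 1) :
    Lop a b (fun y => σ y * τ y ^ (-(d : ℝ) / 2 + 1 / 4)) x ≤
      -(1 / 4) * (σ x * τ x ^ (-(d : ℝ) / 2 - 3 / 4)) := by
  have ht := h.τ_pos
  have hs := h.σ_pos
  have d1 : (1 : ℝ) ≤ d := by exact_mod_cast hd
  set β : ℝ := -(d : ℝ) / 2 + 1 / 4 with hβ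
  have := Real.rpow_pos_of_pos ht β
  have hup := (abs_le.1 (h.abs_Lop_mul_rpow_sub_le (e := β)
    (abs_le.2 ⟨by linarith, by linarith⟩))).2
  rw [show 2 * (d : ℝ) + 4 * β = 1 by rw [hβ]; ring, one_mul] at hup
  calc _ ≤ τ x ^ β * (β * (σ x / τ x) - 1) + τ x ^ β * (profileErrorConst d K * r) := by linarith
    _ ≤ τ x ^ β * (-(1 / 4) * (σ x / τ x) - 1) + τ x ^ β * 1 := by gcongr; linarith
    _ = -(1 / 4) * (σ x * (τ x ^ β / τ x)) := by ring
    _ = _ := by rw [← Real.rpow_sub_one ht.ne', hβ]; ring_nf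

theorem le_inv_mul_Lop_mul_mul_rpow (h : PoleEstimates a b K r σ τ x) (hd : 1 ≤ d) (hr1 : r ≤ 1)
    (hr2 : 2 * K * r ≤ 1) :
    7 * r * τ x ^ (-(d : ℝ) / 2 - 1 / 4) -
        correctionConst d K * (σ x * τ x ^ (-(d : ℝ) / 2 - 3 / 4)) ≤
      r⁻¹ * Lop a b (fun y => σ y * (σ y * τ y ^ (-(d : ℝ) / 2 - 1 / 4))) x := by
  have ht := h.τ_pos
  have hr := h.r_pos
  set δ : ℝ := -(d : ℝ) / 2 - 1 / 4 with hδ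
  have := Real.rpow_pos_of_pos ht δ
  rw [le_inv_mul_iff₀ hr]
  refine le_trans ?_ (h.le_Lop_mul_mul_rpow hd hr1 (e := δ) (by rw [hδ]; ring))
  have hpow : τ x ^ (-(d : ℝ) / 2 - 3 / 4) = τ x ^ δ / √(τ x) := by
    rw [Real.sqrt_eq_rpow, ← Real.rpow_sub ht, hδ]; ring_nf
  have hsmall : r ^ 2 * τ x ^ δ * (2 * K * r) ≤ r ^ 2 * τ x ^ δ * 1 := by gcongr
  rw [hpow]
  calc _ = τ x ^ δ * (7 * r ^ 2) - τ x ^ δ * (correctionConst d K * r * (σ x / √(τ x))) := by ring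
    _ ≤ _ := by linarith

theorem Lop_barrierCorrection_le (h : PoleEstimates a b K r σ τ x) (hd : 1 ≤ d) (hr1 : r ≤ 1)
    (hr2 : profileErrorConst d K * r ≤ 1) (hr3 : 2 * K * r ≤ 1) :
    Lop a b (barrierCorrection d K r σ τ) x ≤ -(7 * r * τ x ^ (-(d : ℝ) / 2)) := by
  have hr := h.r_pos
  have hC := correctionConst_pos d h.K_pos
  have hP := h.contDiffAt_mul_rpow (-(d : ℝ) / 2 + 1 / 4)
  have hQ := h.contDiffAt_σ.mul (h.contDiffAt_mul_rpow (-(d : ℝ) / 2 - 1 / 4))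
  have hexpand : Lop a b (barrierCorrection d K r σ τ) x = √(K * r) *
      (4 * correctionConst d K * Lop a b (fun y => σ y * τ y ^ (-(d : ℝ) / 2 + 1 / 4)) x -
        r⁻¹ * Lop a b (fun y => σ y * (σ y * τ y ^ (-(d : ℝ) / 2 - 1 / 4))) x) := by
    unfold barrierCorrection
    rw [Lop_const_mul ((contDiffAt_const.mul hP).sub (contDiffAt_const.mul hQ)),
      Lop_sub (contDiffAt_const.mul hP) (contDiffAt_const.mul hQ), Lop_const_mul hP,
      Lop_const_mul hQ]
  have hP' := mul_le_mul_of_nonneg_left (h.Lop_mul_rpow_add_quarter_le hd hr2)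
    (by positivity : 0 ≤ 4 * correctionConst d K)
  have hQ' := h.le_inv_mul_Lop_mul_mul_rpow hd hr1 hr3
  have hroot := h.rpow_add_quarter_le (-(d : ℝ) / 2 - 1 / 4)
  rw [sub_add_cancel] at hroot
  rw [hexpand]
  calc _ ≤ √(K * r) * -(7 * r * τ x ^ (-(d : ℝ) / 2 - 1 / 4)) := by gcongr; linarith
    _ = -(7 * r * (√(K * r) * τ x ^ (-(d : ℝ) / 2 - 1 / 4))) := by ring
    _ ≤ _ := by gcongr

theorem abs_Lop_profile_le (h : PoleEstimates a b K r σ τ x) :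
    |Lop a b (fun y => σ y * τ y ^ (-(d : ℝ) / 2)) x| ≤
      profileErrorConst d K * r * τ x ^ (-(d : ℝ) / 2) := by
  have : (0 : ℝ) ≤ d := Nat.cast_nonneg d
  have := h.abs_Lop_mul_rpow_sub_le (e := -(d : ℝ) / 2) (abs_le.2 ⟨by linarith, by linarith⟩)
  rw [show 2 * (d : ℝ) + 4 * (-(d : ℝ) / 2) = 0 by ring] at this
  simpa only [zero_mul, mul_zero, sub_zero, mul_comm] using this

theorem profile_le (h : PoleEstimates a b K r σ τ x) (hr : 2 * K * r ≤ 1) :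
    σ x * τ x ^ (-(d : ℝ) / 2) ≤ K * r * τ x ^ (-(d : ℝ) / 2) := by
  have hm := Real.rpow_pos_of_pos h.τ_pos (-(d : ℝ) / 2)
  have hKr : 0 < K * r := mul_pos h.K_pos h.r_pos
  gcongr
  calc σ x ≤ K * r * √(τ x) := h.σ_le
    _ ≤ K * r * 1 := by gcongr; linarith [h.sqrt_τ_le]
    _ = K * r := mul_one _

end PoleEstimates

theorem exists_barrier (hd : 1 ≤ d) {K C₀ : ℝ} (hK : 1 ≤ K) (hC₀ : 0 ≤ C₀) :
    ∃ r₀ > 0, ∀ r ≤ r₀, ∀ σ τ : Euc d → ℝ, ∃ F G : Euc d → ℝ,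
      ∀ x, PoleEstimates a b K r σ τ x →
      ContDiffAt ℝ 2 F x ∧ ContDiffAt ℝ 2 G x ∧
      (σ x * τ x ^ (-(d : ℝ) / 2) / 2 ≤ F x ∧ F x ≤ 2 * (σ x * τ x ^ (-(d : ℝ) / 2))) ∧
      (σ x * τ x ^ (-(d : ℝ) / 2) / 2 ≤ G x ∧ G x ≤ 2 * (σ x * τ x ^ (-(d : ℝ) / 2))) ∧
      Lop a b F x + C₀ * F x ≤ 0 ∧ C₀ * G x < Lop a b G x := by
  have hK0 : 0 < K := one_pos.trans_le hK
  have hP := profileErrorConst_pos d hK0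
  have hC := correctionConst_pos d hK0
  set A := profileErrorConst d K + 2 * C₀ * K with hA
  set c := 2 * A * ((4 * correctionConst d K + K) * K) with hc
  refine ⟨min 1 (min (profileErrorConst d K)⁻¹ (min (2 * K)⁻¹ c⁻¹)), by positivity,
    fun r hr₀ σ τ => ⟨fun y => σ y * τ y ^ (-(d : ℝ) / 2) + A * barrierCorrection d K r σ τ y,
      fun y => σ y * τ y ^ (-(d : ℝ) / 2) - A * barrierCorrection d K r σ τ y, fun x h => ?_⟩⟩
  obtain ⟨hr1, hr2, hr3, hr4⟩ :
      r ≤ 1 ∧ profileErrorConst d K * r ≤ 1 ∧ 2 * K * r ≤ 1 ∧ c * r ≤ 1 := by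
    have key : ∀ {t : ℝ}, 0 < t → r ≤ t⁻¹ → t * r ≤ 1 := fun ht h =>
      (le_inv_mul_iff₀ ht).1 (by simpa using h)
    simp only [le_min_iff] at hr₀
    exact ⟨hr₀.1, key hP hr₀.2.1, key (by positivity) hr₀.2.2.1, key (by positivity) hr₀.2.2.2⟩
  have cP := h.contDiffAt_mul_rpow (-(d : ℝ) / 2)
  have cQ : ContDiffAt ℝ 2 (fun y => A * barrierCorrection d K r σ τ y) x :=
    contDiffAt_const.mul h.contDiffAt_barrierCorrection
  have hm := Real.rpow_pos_of_pos h.τ_pos (-(d : ℝ) / 2)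
  have hp : 0 < σ x * τ x ^ (-(d : ℝ) / 2) := mul_pos h.σ_pos hm
  have hpC : C₀ * (σ x * τ x ^ (-(d : ℝ) / 2)) ≤ C₀ * (K * r * τ x ^ (-(d : ℝ) / 2)) := by
    gcongr C₀ * ?_
    exact h.profile_le hr3
  have hcorr : |A * barrierCorrection d K r σ τ x| ≤ σ x * τ x ^ (-(d : ℝ) / 2) / 2 := by
    rw [abs_mul, abs_of_pos (by positivity : 0 < A)]
    calc _ ≤ A * _ := mul_le_mul_of_nonneg_left h.abs_barrierCorrection_le (by positivity)
      _ = c * r * (σ x * τ x ^ (-(d : ℝ) / 2)) / 2 := by rw [hc]; ring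
      _ ≤ 1 * (σ x * τ x ^ (-(d : ℝ) / 2)) / 2 := by gcongr
      _ = _ := by rw [one_mul]
  have hLcorr := mul_le_mul_of_nonneg_left (h.Lop_barrierCorrection_le hd hr1 hr2 hr3)
    (by positivity : 0 ≤ A)
  have : A * (r * τ x ^ (-(d : ℝ) / 2)) = profileErrorConst d K * r * τ x ^ (-(d : ℝ) / 2) +
      2 * (C₀ * (K * r * τ x ^ (-(d : ℝ) / 2))) := by rw [hA]; ring
  have hLp := abs_le.1 h.abs_Lop_profile_le
  have hrm : 0 < profileErrorConst d K * r * τ x ^ (-(d : ℝ) / 2) :=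
    mul_pos (mul_pos hP h.r_pos) hm
  obtain ⟨hc1, hc2⟩ := abs_le.1 hcorr
  have hCc1 := mul_le_mul_of_nonneg_left hc1 hC₀
  have hCc2 := mul_le_mul_of_nonneg_left hc2 hC₀
  have := mul_nonneg hC₀ hp.le
  rw [Lop_add cP cQ, Lop_sub cP cQ, Lop_const_mul h.contDiffAt_barrierCorrection]
  exact ⟨cP.add cQ, cP.sub cQ, ⟨by linarith, by linarith⟩, ⟨by linarith, by linarith⟩,
    by linarith, by linarith⟩

end Barriers

/-! ### Hopf bump functions -/

section PosCube

theorem hasDerivAt_max_zero_pow (n : ℕ) (t : ℝ) :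
    HasDerivAt (fun s : ℝ => max s 0 ^ (n + 2)) ((n + 2) * max t 0 ^ (n + 1)) t := by
  rcases lt_trichotomy t 0 with ht | rfl | ht
  · rw [max_eq_right ht.le]
    have h : (fun s : ℝ => max s 0 ^ (n + 2)) =ᶠ[𝓝 t] fun _ => 0 := by
      filter_upwards [eventually_lt_nhds ht] with s hs
      simp [max_eq_right hs.le]
    simpa using (hasDerivAt_const t (0 : ℝ)).congr_of_eventuallyEq h
  · rw [hasDerivAt_iff_isLittleO_nhds_zero]
    have h : (fun h : ℝ => max (0 + h) 0 ^ (n + 2) - max 0 0 ^ (n + 2) -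
        h • ((n + 2 : ℝ) * max 0 0 ^ (n + 1))) = fun h : ℝ => h * max h 0 ^ (n + 1) := by
      ext h
      rcases le_total h 0 with hh | hh <;> simp [hh]; ring
    have hlim : Tendsto (fun h : ℝ => max h 0 ^ (n + 1)) (𝓝 0) (𝓝 0) := by
      have : Continuous fun h : ℝ => max h 0 ^ (n + 1) := by fun_prop
      simpa using this.tendsto 0
    rw [h]
    simpa using (Asymptotics.isBigO_refl (fun h : ℝ => h) (𝓝 0)).mul_isLittleO
      ((Asymptotics.isLittleO_one_iff ℝ).2 hlim)
  · rw [max_eq_left ht.le]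
    have h : (fun s : ℝ => max s 0 ^ (n + 2)) =ᶠ[𝓝 t] fun s => s ^ (n + 2) := by
      filter_upwards [eventually_gt_nhds ht] with s hs
      simp [max_eq_left hs.le]
    simpa using (hasDerivAt_pow (n + 2) t).congr_of_eventuallyEq h

/-- The positive part cubed, a `C²` function. -/
def posCube (t : ℝ) : ℝ := max t 0 ^ 3

theorem hasDerivAt_posCube (t : ℝ) : HasDerivAt posCube (3 * max t 0 ^ 2) t := by
  have := hasDerivAt_max_zero_pow 1 t
  norm_num at this
  exact this

theorem deriv_posCube : deriv posCube = fun t => 3 * max t 0 ^ 2 :=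
  funext fun t => (hasDerivAt_posCube t).deriv

theorem hasDerivAt_deriv_posCube (t : ℝ) : HasDerivAt (deriv posCube) (6 * max t 0) t := by
  rw [deriv_posCube]
  refine ((hasDerivAt_max_zero_pow 0 t).const_mul 3).congr_deriv ?_
  norm_num
  ring

theorem contDiff_posCube : ContDiff ℝ 2 posCube := by
  rw [show (2 : WithTop ℕ∞) = 1 + 1 by norm_num, contDiff_succ_iff_deriv]
  refine ⟨fun t => (hasDerivAt_posCube t).differentiableAt, by simp, ?_⟩
  rw [contDiff_one_iff_deriv]
  refine ⟨fun t => (hasDerivAt_deriv_posCube t).differentiableAt, ?_⟩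
  rw [funext fun t => (hasDerivAt_deriv_posCube t).deriv]
  fun_prop

theorem posCube_nonneg (t : ℝ) : 0 ≤ posCube t := by unfold posCube; positivity

theorem posCube_le_one {t : ℝ} (ht : t ≤ 1) : posCube t ≤ 1 :=
  pow_le_one₀ (le_max_right _ _) (max_le ht zero_le_one)

theorem posCube_pos_iff {t : ℝ} : 0 < posCube t ↔ 0 < t := by
  rcases le_or_gt t 0 with ht | ht
  · simp [posCube, max_eq_right ht, ht.not_gt]
  · simp [posCube, max_eq_left ht.le, ht]

end PosCube

section Bump

variable {d : ℕ} {a : Euc d → Matrix (Fin d) (Fin d) ℝ} {b : Euc d → Euc d}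

theorem CoeffBound.exists_abs_Lop_le {R κ : ℝ} (hκ : CoeffBound a b R κ) {u : Euc d → ℝ}
    (hu : ContDiff ℝ 2 u) : ∃ M, 0 ≤ M ∧ ∀ x, ‖x‖ ≤ R → |Lop a b u x| ≤ M := by
  have := hκ.pos.le
  have hpd : ∀ i, ContDiff ℝ 1 (pd u i) := fun i =>
    contDiff_iff_contDiffAt.2 fun x => contDiffAt_pd hu.contDiffAt i
  have hcont : Continuous fun x => (∑ i, ∑ j, κ * |pd2 u i j x|) + ∑ i, κ * |pd u i x| := by
    have c1 : ∀ i, Continuous (pd u i) := fun i => (hpd i).continuous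
    have c2 : ∀ i j, Continuous (pd2 u i j) := fun i j =>
      ((hpd j).continuous_fderiv (by simp)).clm_apply continuous_const
    fun_prop
  obtain ⟨M, hM⟩ := (isCompact_closedBall (0 : Euc d) R).exists_bound_of_continuousOn
    hcont.continuousOn
  refine ⟨max M 0, le_max_right _ _, fun x hx => ?_⟩
  refine le_trans ?_ (((le_abs_self _).trans (hM x (by simpa using hx))).trans (le_max_left _ _))
  refine (abs_add_le _ _).trans (add_le_add ?_ ?_)
  · refine (Finset.abs_sum_le_sum_abs _ _).trans (Finset.sum_le_sum fun i _ => ?_)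
    refine (Finset.abs_sum_le_sum_abs _ _).trans (Finset.sum_le_sum fun j _ => ?_)
    rw [abs_mul]
    gcongr
    exact (abs_entry_le_norm_euclOp _ i j).trans (hκ.norm_a x hx)
  · refine (Finset.abs_sum_le_sum_abs _ _).trans (Finset.sum_le_sum fun i _ => ?_)
    rw [abs_mul]
    gcongr
    exact (PiLp.norm_apply_le (b x) i).trans (hκ.norm_b x hx)

theorem anisoSqDist_one (y x : Euc d) : anisoSqDist 1 y x = ‖x - y‖ ^ 2 := by
  rw [anisoSqDist, euclOp, map_one, one_apply_eq_self, real_inner_self_eq_norm_sq]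

theorem gradForm_anisoSqDist_one (y x : Euc d) :
    gradForm a (anisoSqDist 1 y) (anisoSqDist 1 y) x =
      4 * inner ℝ (x - y) (euclOp (a x) (x - y)) := by
  rw [gradForm_anisoSqDist Matrix.isSymm_one Matrix.isSymm_one, euclOp, map_one,
    one_apply_eq_self]

theorem lt_Lop_posCube_comp {g : Euc d → ℝ} {x : Euc d} (ha : (a x).PosSemidef)
    (hg : ContDiffAt ℝ 2 g x) (hpos : 0 < g x) {C₀ : ℝ} (hC₀ : 0 ≤ C₀)
    (h : C₀ * g x < Lop a b g x) :
    C₀ * posCube (g x) < Lop a b (fun y => posCube (g y)) x := by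
  have hΓ := gradForm_self_nonneg ha g
  rw [Lop_comp hg contDiff_posCube.contDiffAt, (hasDerivAt_deriv_posCube _).deriv,
    (hasDerivAt_posCube _).deriv, posCube, max_eq_left hpos.le]
  calc C₀ * g x ^ 3 = g x ^ 2 * (C₀ * g x) := by ring
    _ < g x ^ 2 * Lop a b g x := by gcongr
    _ ≤ 3 * g x ^ 2 * Lop a b g x + 6 * g x * gradForm a g g x := by
      have : 0 ≤ g x ^ 2 * Lop a b g x :=
        mul_nonneg (sq_nonneg _) ((mul_nonneg hC₀ hpos.le).trans h.le)
      have : 0 ≤ 6 * g x * gradForm a g g x := by positivity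
      linarith

/-- The Gaussian `exp (-γ |x - x₁|²)` shifted to vanish on the sphere of radius `R`. -/
def gaussianGap (x₁ : Euc d) (γ R : ℝ) (x : Euc d) : ℝ :=
  Real.exp (-γ * anisoSqDist 1 x₁ x) - Real.exp (-γ * R ^ 2)

theorem contDiff_gaussianGap (x₁ : Euc d) (γ R : ℝ) : ContDiff ℝ 2 (gaussianGap x₁ γ R) :=
  (Real.contDiff_exp.comp (contDiff_const.mul (contDiff_anisoSqDist 1 x₁))).sub contDiff_const

theorem gaussianGap_le_exp (x₁ : Euc d) (γ R : ℝ) (x : Euc d) :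
    gaussianGap x₁ γ R x ≤ Real.exp (-γ * anisoSqDist 1 x₁ x) :=
  sub_le_self _ (Real.exp_pos _).le

theorem gaussianGap_le_one (x₁ : Euc d) {γ : ℝ} (hγ : 0 ≤ γ) (R : ℝ) (x : Euc d) :
    gaussianGap x₁ γ R x ≤ 1 := by
  refine (gaussianGap_le_exp x₁ γ R x).trans (Real.exp_le_one_iff.2 ?_)
  rw [anisoSqDist_one, neg_mul]
  exact neg_nonpos.2 (mul_nonneg hγ (sq_nonneg _))

theorem gaussianGap_pos_iff {x₁ : Euc d} {γ R : ℝ} (hγ : 0 < γ) (hR : 0 ≤ R) {x : Euc d} :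
    0 < gaussianGap x₁ γ R x ↔ dist x x₁ < R := by
  rw [gaussianGap, sub_pos, Real.exp_lt_exp, anisoSqDist_one, dist_eq_norm,
    mul_lt_mul_left_of_neg (neg_lt_zero.2 hγ), sq_lt_sq₀ (norm_nonneg _) hR]

theorem Lop_gaussianGap (x₁ : Euc d) (γ R : ℝ) (x : Euc d) :
    Lop a b (gaussianGap x₁ γ R) x = γ * Real.exp (-γ * anisoSqDist 1 x₁ x) *
      (γ * gradForm a (anisoSqDist 1 x₁) (anisoSqDist 1 x₁) x - Lop a b (anisoSqDist 1 x₁) x) := by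
  set f : ℝ → ℝ := fun s => Real.exp (-γ * s) - Real.exp (-γ * R ^ 2)
  have hexp : ∀ s, HasDerivAt (fun s : ℝ => Real.exp (-γ * s)) (-γ * Real.exp (-γ * s)) s :=
    fun s => ((hasDerivAt_const_mul (-γ)).exp).congr_deriv (by ring)
  have hf : deriv f = fun s => -γ * Real.exp (-γ * s) :=
    funext fun s => ((hexp s).sub_const _).deriv
  have hf' : ∀ s, deriv (deriv f) s = -γ * (-γ * Real.exp (-γ * s)) := fun s => by
    rw [hf]
    exact ((hexp s).const_mul (-γ)).deriv
  have hfC : ContDiff ℝ 2 f :=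
    (Real.contDiff_exp.comp (contDiff_const.mul contDiff_id)).sub contDiff_const
  rw [show gaussianGap x₁ γ R = fun x => f (anisoSqDist 1 x₁ x) from rfl,
    Lop_comp (contDiff_anisoSqDist 1 x₁).contDiffAt hfC.contDiffAt, hf', hf]
  ring

theorem lt_Lop_gaussianGap {x₁ x : Euc d} {γ C₀ : ℝ} (hγ : 1 ≤ γ) (hC₀ : 0 ≤ C₀)
    (h : C₀ < γ * gradForm a (anisoSqDist 1 x₁) (anisoSqDist 1 x₁) x -
      Lop a b (anisoSqDist 1 x₁) x) (R : ℝ) :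
    C₀ * gaussianGap x₁ γ R x < Lop a b (gaussianGap x₁ γ R) x := by
  have := Real.exp_pos (-γ * anisoSqDist 1 x₁ x)
  have : 0 < γ := one_pos.trans_le hγ
  rw [Lop_gaussianGap]
  calc C₀ * gaussianGap x₁ γ R x ≤ C₀ * Real.exp (-γ * anisoSqDist 1 x₁ x) := by
        gcongr
        exact gaussianGap_le_exp x₁ γ R x
    _ = 1 * Real.exp (-γ * anisoSqDist 1 x₁ x) * C₀ := by ring
    _ ≤ γ * Real.exp (-γ * anisoSqDist 1 x₁ x) * C₀ := by gcongr
    _ < _ := by gcongr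

theorem CoeffBound.exists_lt_mul_gradForm_sub_Lop {x₁ : Euc d} {R κ ρ : ℝ}
    (hκ : CoeffBound a b (‖x₁‖ + R) κ) (hρ : 0 < ρ) {C₀ : ℝ} (hC₀ : 0 ≤ C₀) :
    ∃ γ ≥ 1, ∀ x, ρ < dist x x₁ → dist x x₁ < R →
      C₀ < γ * gradForm a (anisoSqDist 1 x₁) (anisoSqDist 1 x₁) x -
        Lop a b (anisoSqDist 1 x₁) x := by
  have κ0 := hκ.pos
  obtain ⟨M, hM0, hM⟩ := hκ.exists_abs_Lop_le (contDiff_anisoSqDist 1 x₁)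
  refine ⟨κ * (M + C₀ + 1) / (4 * ρ ^ 2) + 1, le_add_of_nonneg_left (by positivity),
    fun x hx₁ hx₂ => ?_⟩
  rw [dist_eq_norm] at hx₁ hx₂
  have hx : ‖x‖ ≤ ‖x₁‖ + R := by linarith [norm_sub_norm_le x x₁]
  have hgrad : 4 * ρ ^ 2 / κ ≤ gradForm a (anisoSqDist 1 x₁) (anisoSqDist 1 x₁) x := by
    rw [gradForm_anisoSqDist_one, div_le_iff₀ κ0]
    have : ρ ^ 2 ≤ ‖x - x₁‖ ^ 2 := by gcongr
    linarith [hκ.ell x hx (x - x₁)]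
  calc C₀ < M + C₀ + 1 - Lop a b (anisoSqDist 1 x₁) x := by linarith [(abs_le.1 (hM x hx)).2]
    _ = κ * (M + C₀ + 1) / (4 * ρ ^ 2) * (4 * ρ ^ 2 / κ) - Lop a b (anisoSqDist 1 x₁) x := by
        field_simp
    _ ≤ _ := by
        gcongr
        linarith

theorem LocallyElliptic.exists_bump (h : LocallyElliptic a b) (x₁ : Euc d) {ρ R : ℝ} (hρ : 0 < ρ)
    (hR : 0 < R) {C₀ : ℝ} (hC₀ : 0 ≤ C₀) :
    ∃ ζ : Euc d → ℝ, ContDiff ℝ 2 ζ ∧ (∀ x, 0 ≤ ζ x) ∧ (∀ x, ζ x ≤ 1) ∧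
      (∀ x, 0 < ζ x ↔ dist x x₁ < R) ∧
      ∀ x, ρ < dist x x₁ → dist x x₁ < R → C₀ * ζ x < Lop a b ζ x := by
  obtain ⟨κ, hκ⟩ := h.exists_coeffBound (R := ‖x₁‖ + R) (by positivity)
  obtain ⟨γ, hγ, hsub⟩ := hκ.exists_lt_mul_gradForm_sub_Lop hρ hC₀
  have hγ0 : 0 < γ := one_pos.trans_le hγ
  have hpos : ∀ {x}, 0 < gaussianGap x₁ γ R x ↔ dist x x₁ < R := gaussianGap_pos_iff hγ0 hR.le
  exact ⟨fun x => posCube (gaussianGap x₁ γ R x),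
    contDiff_posCube.comp (contDiff_gaussianGap x₁ γ R), fun x => posCube_nonneg _,
    fun x => posCube_le_one (gaussianGap_le_one x₁ hγ0.le R x),
    fun x => posCube_pos_iff.trans hpos,
    fun x hx₁ hx₂ => lt_Lop_posCube_comp (hκ.posSemidef x)
      (contDiff_gaussianGap x₁ γ R).contDiffAt (hpos.2 hx₂) hC₀
      (lt_Lop_gaussianGap hγ hC₀ (hsub x hx₁ hx₂) R)⟩

end Bump

/-! ### Comparison with supersolutions -/

section Comparison

variable {d : ℕ} {a : Euc d → Matrix (Fin d) (Fin d) ℝ} {b : Euc d → Euc d}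

/-- Positive global `C²` supersolutions of `𝓛φ + Uφ ≤ 0`; the spectral parameter is absorbed
in `U`. -/
structure IsSuper (a : Euc d → Matrix (Fin d) (Fin d) ℝ) (b : Euc d → Euc d) (U φ : Euc d → ℝ) :
    Prop where
  pos : ∀ x, 0 < φ x
  contDiff : ContDiff ℝ 2 φ
  le : ∀ x, Lop a b φ x + U x * φ x ≤ 0

theorem mem_supersolutions_iff {W : Euc d → ℝ} {lam : ℝ} :
    lam ∈ supersolutions a b W univ ↔ ∃ φ, IsSuper a b (fun x => W x - lam) φ := by
  constructor
  · rintro ⟨φ, hpos, hφ, hle⟩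
    exact ⟨φ, fun x => hpos x (mem_univ x), contDiffOn_univ.1 hφ, fun x => by
      linarith [hle x (mem_univ x)]⟩
  · rintro ⟨φ, hφ⟩
    exact ⟨φ, fun x _ => hφ.pos x, hφ.contDiff.contDiffOn, fun x _ => by linarith [hφ.le x]⟩

theorem IsSuper.mono {U U' φ : Euc d → ℝ} (hφ : IsSuper a b U φ) (h : ∀ x, U' x ≤ U x) :
    IsSuper a b U' φ :=
  ⟨hφ.pos, hφ.contDiff, fun x =>
    (add_le_add_right (mul_le_mul_of_nonneg_right (h x) (hφ.pos x).le) _).trans (hφ.le x)⟩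

theorem exists_max_ratio {X : Type*} [TopologicalSpace X] {D : Set X} (hD : IsCompact D)
    (hne : D.Nonempty) {φ ψ : X → ℝ} (hφ : ContinuousOn φ D) (hψ : ContinuousOn ψ D)
    (hpos : ∀ x ∈ D, 0 < φ x) : ∃ x ∈ D, ∃ T, ψ x = T * φ x ∧ ∀ y ∈ D, ψ y ≤ T * φ y := by
  obtain ⟨x, hx, hmax⟩ := hD.exists_isMaxOn hne (hψ.div hφ fun y hy => (hpos y hy).ne')
  refine ⟨x, hx, ψ x / φ x, (div_mul_cancel₀ _ (hpos x hx).ne').symm, fun y hy => ?_⟩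
  rw [← div_le_iff₀ (hpos y hy)]
  exact hmax hy

theorem Lop_le_mul_of_touching {φ ψ : Euc d → ℝ} {x : Euc d} {c T : ℝ} (ha : (a x).PosSemidef)
    (hφ : ContDiffAt ℝ 2 φ x) (hψ : ContDiffAt ℝ 2 ψ x) (hT : 0 ≤ T) (heq : ψ x = T * φ x)
    (hle : ∀ᶠ y in 𝓝 x, ψ y ≤ T * φ y) (hLφ : Lop a b φ x ≤ c * φ x) :
    Lop a b ψ x ≤ c * ψ x := by
  have hmin : IsLocalMin (fun y => T * φ y - ψ y) x := by
    filter_upwards [hle] with y hy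
    rwa [← heq, sub_self, sub_nonneg]
  have hTφ : ContDiffAt ℝ 2 (fun y => T * φ y) x := contDiffAt_const.mul hφ
  have hLop := Lop_nonneg_of_isLocalMin (b := b) ha (hTφ.sub hψ) hmin
  rw [Lop_sub hTφ hψ, Lop_const_mul hφ, sub_nonneg] at hLop
  calc Lop a b ψ x ≤ T * Lop a b φ x := hLop
    _ ≤ T * (c * φ x) := by gcongr
    _ = c * ψ x := by rw [heq]; ring

theorem le_of_strict_subsolution (ha : ∀ x, (a x).PosSemidef) {D : Set (Euc d)}
    (hD : IsCompact D) {φ ψ : Euc d → ℝ} (hφ : ContinuousOn φ D) (hψ : ContinuousOn ψ D)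
    (hpos : ∀ x ∈ D, 0 < φ x) (c : ℝ)
    (h : ∀ x ∈ D, φ x < ψ x → D ∈ 𝓝 x ∧ ContDiffAt ℝ 2 φ x ∧ ContDiffAt ℝ 2 ψ x ∧
      Lop a b φ x ≤ c * φ x ∧ c * ψ x < Lop a b ψ x) :
    ∀ x ∈ D, ψ x ≤ φ x := by
  intro y hy
  obtain ⟨x, hx, T, hT, hmax⟩ := exists_max_ratio hD ⟨y, hy⟩ hφ hψ hpos
  rcases le_or_gt T 1 with hT1 | hT1
  · exact (hmax y hy).trans (mul_le_of_le_one_left (hpos y hy).le hT1)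
  · have hlt : φ x < ψ x := hT ▸ lt_mul_of_one_lt_left (hpos x hx) hT1
    obtain ⟨hnhds, hφx, hψx, hLφ, hLψ⟩ := h x hx hlt
    exact absurd (Lop_le_mul_of_touching (ha x) hφx hψx (zero_le_one.trans hT1.le) hT
      (mem_of_superset hnhds hmax) hLφ) hLψ.not_ge

theorem mul_bump_le (ha : ∀ x, (a x).PosSemidef) {x₁ : Euc d} {ρ R c m : ℝ} {ζ φ : Euc d → ℝ}
    (hζ : ContDiff ℝ 2 ζ) (hζ1 : ∀ x, ζ x ≤ 1) (hζpos : ∀ x, 0 < ζ x ↔ dist x x₁ < R)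
    (hLζ : ∀ x, ρ < dist x x₁ → dist x x₁ < R → c * ζ x < Lop a b ζ x)
    (hφ : ContDiff ℝ 2 φ) (hφpos : ∀ x, 0 < φ x)
    (hLφ : ∀ x, dist x x₁ < R → Lop a b φ x ≤ c * φ x) (hm : 0 < m)
    (hmφ : ∀ x ∈ closedBall x₁ ρ, m ≤ φ x) {x : Euc d} (hx : dist x x₁ ≤ R) :
    m * ζ x ≤ φ x := by
  refine le_of_strict_subsolution (ψ := fun x => m * ζ x) (b := b) ha
    (isCompact_closedBall x₁ R) hφ.continuous.continuousOn
    (hζ.continuous.const_mul m).continuousOn (fun x _ => hφpos x) c (fun y _ hlt => ?_) x hx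
  have hζy : 0 < ζ y := pos_of_mul_pos_right ((hφpos y).trans hlt) hm.le
  have hyR := (hζpos y).1 hζy
  have hyρ : ρ < dist y x₁ := by
    by_contra! hle
    exact hlt.not_ge ((mul_le_of_le_one_right hm.le (hζ1 y)).trans (hmφ y hle))
  refine ⟨mem_of_superset (isOpen_ball.mem_nhds hyR) ball_subset_closedBall, hφ.contDiffAt,
    contDiffAt_const.mul hζ.contDiffAt, hLφ y hyR, ?_⟩
  rw [Lop_const_mul hζ.contDiffAt, mul_left_comm]
  exact mul_lt_mul_of_pos_left (hLζ y hyρ hyR) hm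

theorem LocallyElliptic.exists_bump_neg_mul_le_Lop (h : LocallyElliptic a b) (z : Euc d) {r : ℝ}
    (hr : 0 < r) : ∃ ζ : Euc d → ℝ, ContDiff ℝ 2 ζ ∧ (∀ x, 0 < ζ x ↔ dist x z < r) ∧
      ∃ M, ∀ x ∈ ball z r, -M * ζ x ≤ Lop a b ζ x := by
  obtain ⟨ζ, hζ, hζ0, -, hζpos, hLζ⟩ := h.exists_bump z (half_pos hr) hr (le_refl (0 : ℝ))
  obtain ⟨κ, hκ⟩ := h.exists_coeffBound (R := ‖z‖ + r) (by positivity)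
  obtain ⟨M, hM0, hM⟩ := hκ.exists_abs_Lop_le hζ
  obtain ⟨m, hm, hmζ⟩ := (isCompact_closedBall z (r / 2)).exists_forall_le'
    hζ.continuous.continuousOn fun x hx =>
      (hζpos x).2 ((mem_closedBall.1 hx).trans_lt (half_lt_self hr))
  refine ⟨ζ, hζ, hζpos, M / m, fun x hx => ?_⟩
  rcases lt_or_ge (r / 2) (dist x z) with hfar | hnear
  · have : 0 ≤ M / m * ζ x := mul_nonneg (by positivity) (hζ0 x)
    linarith [hLζ x hfar hx]
  · have hxn : ‖x‖ ≤ ‖z‖ + r := by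
      linarith [norm_le_norm_add_norm_sub' x z, dist_eq_norm x z, mem_ball.1 hx]
    calc -(M / m) * ζ x ≤ -(M / m) * m :=
          mul_le_mul_of_nonpos_left (hmζ x hnear) (neg_nonpos.2 (by positivity))
      _ = -M := by field_simp
      _ ≤ Lop a b ζ x := (abs_le.1 (hM x hxn)).1

theorem LocallyElliptic.exists_sub_le_of_mem_supersolutions (h : LocallyElliptic a b) {z : Euc d}
    {r : ℝ} (hr : 0 < r) {W : Euc d → ℝ} {C : ℝ} (hW : ∀ x ∈ ball z r, -C ≤ W x) :
    ∃ M, ∀ δ, ∀ lam ∈ supersolutions a b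
      (fun x => W x + (ball z r).indicator (fun _ => δ) x) univ, δ - M ≤ lam := by
  obtain ⟨ζ, hζ, hζpos, M, hM⟩ := h.exists_bump_neg_mul_le_Lop z hr
  refine ⟨C + M, fun δ lam hlam => ?_⟩
  obtain ⟨φ, hφ⟩ := mem_supersolutions_iff.1 hlam
  obtain ⟨x, -, T, hT, hmax⟩ := exists_max_ratio
    (isCompact_closedBall z r) ⟨z, mem_closedBall_self hr.le⟩ hφ.contDiff.continuous.continuousOn
    hζ.continuous.continuousOn (fun x _ => hφ.pos x)
  have hζz : 0 < ζ z := (hζpos z).2 (by rwa [dist_self])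
  have hTpos : 0 < T :=
    pos_of_mul_pos_left (hζz.trans_le (hmax z (mem_closedBall_self hr.le))) (hφ.pos z).le
  have hζx : 0 < ζ x := hT ▸ mul_pos hTpos (hφ.pos x)
  have hx : x ∈ ball z r := (hζpos x).1 hζx
  have hLφ : Lop a b φ x ≤ (C + lam - δ) * φ x := by
    have hle := hφ.le x
    simp only [indicator_of_mem hx] at hle
    nlinarith [hφ.pos x, hW x hx]
  have hLζ := Lop_le_mul_of_touching (h.posDef x).posSemidef hφ.contDiff.contDiffAt
    hζ.contDiffAt hTpos.le hT
    (mem_of_superset (isOpen_ball.mem_nhds hx) fun y hy => hmax y (ball_subset_closedBall hy)) hLφ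
  have := le_of_mul_le_mul_right ((hM x hx).trans hLζ) hζx
  linarith

end Comparison

/-! ### A smooth minimum of supersolutions -/

section SmoothMin

variable {d : ℕ} {a : Euc d → Matrix (Fin d) (Fin d) ℝ} {b : Euc d → Euc d}

/-- A `C²` concave truncation, comparable to `min t 1` on `[0, ∞)` and equal to `1` on
`[2, ∞)`. -/
def smoothTrunc (t : ℝ) : ℝ := 1 - posCube (1 - t / 2)

/-- The slope of `smoothTrunc`. -/
def smoothTruncSlope (t : ℝ) : ℝ := 3 / 2 * max (1 - t / 2) 0 ^ 2

theorem contDiff_smoothTrunc : ContDiff ℝ 2 smoothTrunc :=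
  contDiff_const.sub (contDiff_posCube.comp (by fun_prop))

theorem smoothTruncSlope_nonneg (t : ℝ) : 0 ≤ smoothTruncSlope t := by
  unfold smoothTruncSlope
  positivity

theorem smoothTrunc_le_one (t : ℝ) : smoothTrunc t ≤ 1 := by
  linarith [posCube_nonneg (1 - t / 2), smoothTrunc.eq_1 t]

theorem smoothTrunc_of_two_le {t : ℝ} (ht : 2 ≤ t) : smoothTrunc t = 1 := by
  rw [smoothTrunc, posCube, max_eq_right (by linarith)]
  norm_num

theorem smoothTrunc_zero : smoothTrunc 0 = 0 := by simp [smoothTrunc, posCube]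

theorem smoothTrunc_pos {t : ℝ} (ht : 0 < t) : 0 < smoothTrunc t := by
  have hlt : max (1 - t / 2) 0 < 1 := max_lt (by linarith) one_pos
  exact sub_pos.2 (pow_lt_one₀ (le_max_right _ _) hlt three_ne_zero)

theorem smoothTrunc_le_tangent (t s : ℝ) :
    smoothTrunc s ≤ smoothTrunc t + smoothTruncSlope t * (s - t) := by
  simp only [smoothTrunc, smoothTruncSlope, posCube]
  have hp : 0 ≤ max (1 - t / 2) 0 := le_max_right _ _
  have hq : 0 ≤ max (1 - s / 2) 0 := le_max_right _ _
  have hsq : 1 - s / 2 ≤ max (1 - s / 2) 0 := le_max_left _ _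
  have htp : max (1 - t / 2) 0 ^ 2 * (max (1 - t / 2) 0 - (1 - t / 2)) = 0 := by
    rcases le_total (1 - t / 2) 0 with h | h <;> simp [h]
  set p := max (1 - t / 2) 0
  set q := max (1 - s / 2) 0
  have hpq : p ^ 2 * (1 - s / 2) ≤ p ^ 2 * q := by gcongr
  nlinarith [mul_nonneg (add_nonneg (mul_nonneg zero_le_two hp) hq) (sq_nonneg (q - p))]

theorem mul_smoothTruncSlope_le (t : ℝ) : t * smoothTruncSlope t ≤ smoothTrunc t := by
  have := smoothTrunc_le_tangent t 0
  rw [smoothTrunc_zero] at this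
  linarith

theorem smoothTrunc_le_mul (t : ℝ) : smoothTrunc t ≤ 3 / 2 * t := by
  simpa [smoothTrunc_zero, smoothTruncSlope] using smoothTrunc_le_tangent 0 t

/-- A `C²` substitute for `min φ ψ`, homogeneous in the positive functions `φ` and `ψ`. -/
def smoothMin (φ ψ : Euc d → ℝ) (x : Euc d) : ℝ := φ x * smoothTrunc (ψ x / φ x)

section

variable {φ ψ : Euc d → ℝ} {x : Euc d}

theorem smoothMin_pos (hφ : 0 < φ x) (hψ : 0 < ψ x) : 0 < smoothMin φ ψ x :=
  mul_pos hφ (smoothTrunc_pos (div_pos hψ hφ))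

theorem smoothMin_le_left (hφ : 0 ≤ φ x) : smoothMin φ ψ x ≤ φ x :=
  mul_le_of_le_one_right hφ (smoothTrunc_le_one _)

theorem smoothMin_le_mul_right (hφ : 0 < φ x) : smoothMin φ ψ x ≤ 3 / 2 * ψ x :=
  calc smoothMin φ ψ x ≤ φ x * (3 / 2 * (ψ x / φ x)) :=
        mul_le_mul_of_nonneg_left (smoothTrunc_le_mul _) hφ.le
    _ = 3 / 2 * ψ x := by field_simp

theorem smoothMin_eq_left (hφ : 0 < φ x) (h : 2 * φ x ≤ ψ x) : smoothMin φ ψ x = φ x := by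
  rw [smoothMin, smoothTrunc_of_two_le ((le_div_iff₀ hφ).2 h), mul_one]

theorem contDiffAt_smoothMin (hφ : ContDiffAt ℝ 2 φ x) (hψ : ContDiffAt ℝ 2 ψ x) (h0 : φ x ≠ 0) :
    ContDiffAt ℝ 2 (smoothMin φ ψ) x :=
  hφ.mul (contDiff_smoothTrunc.contDiffAt.comp x (hψ.div hφ h0))

theorem smoothMin_le_tangent (hφ : 0 < φ x) (t : ℝ) :
    smoothMin φ ψ x ≤
      smoothTruncSlope t * ψ x + (smoothTrunc t - t * smoothTruncSlope t) * φ x :=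
  calc smoothMin φ ψ x
      ≤ φ x * (smoothTrunc t + smoothTruncSlope t * (ψ x / φ x - t)) :=
        mul_le_mul_of_nonneg_left (smoothTrunc_le_tangent t _) hφ.le
    _ = _ := by field_simp; ring

/-- By concavity the smooth minimum lies below its tangent combination of `φ` and `ψ`, whose
coefficients are nonnegative; the minimum principle does the rest. -/
theorem Lop_smoothMin_add_mul_nonpos {u : ℝ} (ha : (a x).PosSemidef) (hφ : ContDiffAt ℝ 2 φ x)
    (hψ : ContDiffAt ℝ 2 ψ x) (hpos : ∀ y, 0 < φ y) (hLφ : Lop a b φ x + u * φ x ≤ 0)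
    (hLψ : Lop a b ψ x + u * ψ x ≤ 0) :
    Lop a b (smoothMin φ ψ) x + u * smoothMin φ ψ x ≤ 0 := by
  set t := ψ x / φ x with ht
  set p := smoothTruncSlope t
  set q := smoothTrunc t - t * p with hq
  have hval : smoothMin φ ψ x = p * ψ x + q * φ x := by
    rw [smoothMin, ← ht, hq, ← div_mul_cancel₀ (ψ x) (hpos x).ne', ← ht]
    ring
  have hpψ : ContDiffAt ℝ 2 (fun y => p * ψ y) x := contDiffAt_const.mul hψ
  have hqφ : ContDiffAt ℝ 2 (fun y => q * φ y) x := contDiffAt_const.mul hφ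
  have hs := contDiffAt_smoothMin hφ hψ (hpos x).ne'
  have hmin : IsLocalMin (fun y => (p * ψ y + q * φ y) - smoothMin φ ψ y) x := by
    filter_upwards with y
    rw [hval, sub_self, sub_nonneg]
    exact smoothMin_le_tangent (hpos y) t
  have hLop := Lop_nonneg_of_isLocalMin (b := b) ha ((hpψ.add hqφ).sub hs) hmin
  rw [Lop_sub (hpψ.add hqφ) hs, Lop_add hpψ hqφ, Lop_const_mul hψ, Lop_const_mul hφ] at hLop
  have hp0 := mul_nonpos_of_nonneg_of_nonpos (smoothTruncSlope_nonneg t) hLψ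
  have hq0 := mul_nonpos_of_nonneg_of_nonpos (sub_nonneg.2 (mul_smoothTruncSlope_le t)) hLφ
  rw [hval]
  linarith

end

/-- `ψ` need only be a supersolution on `{c₁ < s}`: the glued function already equals `φ` on the
band `{c₁ < s ≤ c₂}`. -/
theorem IsSuper.exists_glue (ha : ∀ x, (a x).PosSemidef) {U φ ψ s : Euc d → ℝ}
    (hφ : IsSuper a b U φ) (hs : Continuous s) {c₁ c₂ : ℝ} (hc : c₁ < c₂)
    (hψ : ∀ x, c₁ < s x → ContDiffAt ℝ 2 ψ x ∧ 0 < ψ x ∧ Lop a b ψ x + U x * ψ x ≤ 0)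
    (hband : ∀ x, c₁ < s x → s x ≤ c₂ → 2 * φ x ≤ ψ x) :
    ∃ φ', IsSuper a b U φ' ∧ (∀ x, φ' x ≤ φ x) ∧ (∀ x, s x ≤ c₂ → φ' x = φ x) ∧
      ∀ x, c₁ < s x → φ' x ≤ 3 / 2 * ψ x := by
  classical
  set φ' : Euc d → ℝ := fun x => if c₁ < s x then smoothMin φ ψ x else φ x
  have hin : ∀ x, c₁ < s x → φ' x = smoothMin φ ψ x := fun x hx => if_pos hx
  have hout : ∀ x, s x ≤ c₂ → φ' x = φ x := fun x hx => by
    by_cases h : c₁ < s x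
    · rw [hin x h, smoothMin_eq_left (hφ.pos x) (hband x h hx)]
    · exact if_neg h
  have hin_nhds : ∀ x, c₁ < s x → φ' =ᶠ[𝓝 x] smoothMin φ ψ := fun x hx =>
    mem_of_superset ((isOpen_lt continuous_const hs).mem_nhds hx) hin
  have hout_nhds : ∀ x, s x < c₂ → φ' =ᶠ[𝓝 x] φ := fun x hx =>
    mem_of_superset ((isOpen_lt hs continuous_const).mem_nhds hx) fun y hy => hout y (le_of_lt hy)
  have hcases : ∀ x, c₁ < s x ∨ s x < c₂ := fun x =>
    (lt_or_ge c₁ (s x)).imp_right fun h => h.trans_lt hc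
  refine ⟨φ', ⟨fun x => ?_, contDiff_iff_contDiffAt.2 fun x => ?_, fun x => ?_⟩, fun x => ?_,
    hout, fun x hx => hin x hx ▸ smoothMin_le_mul_right (hφ.pos x)⟩ <;>
    rcases hcases x with h | h
  · exact hin x h ▸ smoothMin_pos (hφ.pos x) (hψ x h).2.1
  · exact hout x h.le ▸ hφ.pos x
  · exact (contDiffAt_smoothMin hφ.contDiff.contDiffAt (hψ x h).1
      (hφ.pos x).ne').congr_of_eventuallyEq (hin_nhds x h)
  · exact hφ.contDiff.contDiffAt.congr_of_eventuallyEq (hout_nhds x h)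
  · rw [Lop_congr (hin_nhds x h), hin x h]
    exact Lop_smoothMin_add_mul_nonpos (ha x) hφ.contDiff.contDiffAt (hψ x h).1 hφ.pos
      (hφ.le x) (hψ x h).2.2
  · rw [Lop_congr (hout_nhds x h), hout x h.le]
    exact hφ.le x
  · exact hin x h ▸ smoothMin_le_left (hφ.pos x).le
  · exact (hout x h.le).le

end SmoothMin

/-! ### Separated nets -/

section Nets

theorem exists_card_le_of_separated {E : Type*} [PseudoMetricSpace E] {S : Set E}
    (hS : IsCompact S) {ε : ℝ} (hε : 0 < ε) : ∃ M : ℕ, ∀ Y : Finset E, ↑Y ⊆ S →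
      (Y : Set E).Pairwise (fun y z => ε ≤ dist y z) → Y.card ≤ M := by
  obtain ⟨t, -, htf, hcov⟩ := hS.finite_cover_balls (half_pos hε)
  refine ⟨htf.toFinset.card, fun Y hY hsep => ?_⟩
  have hex : ∀ y ∈ Y, ∃ z ∈ t, dist y z < ε / 2 := fun y hy => by
    simpa using hcov (hY hy)
  choose! f hf hfd using hex
  refine Finset.card_le_card_of_injOn f (fun y hy => by simpa using hf y hy) ?_
  intro y hy z hz hyz
  refine hsep.eq hy hz (not_le.2 ?_)
  calc dist y z ≤ dist y (f y) + dist z (f z) := hyz ▸ dist_triangle_right y z (f y)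
    _ < ε := by linarith [hfd y hy, hfd z hz]

theorem exists_separated_net_of_isCompact {E : Type*} [PseudoMetricSpace E] {S : Set E}
    (hS : IsCompact S) {ε : ℝ} (hε : 0 < ε) :
    ∃ Y : Finset E, ↑Y ⊆ S ∧ (Y : Set E).Pairwise (fun y z => ε ≤ dist y z) ∧
      ∀ s ∈ S, ∃ y ∈ Y, dist s y < ε := by
  classical
  obtain ⟨M, hM⟩ := exists_card_le_of_separated hS hε
  set A : Set ℕ := {n | ∃ Y : Finset E, ↑Y ⊆ S ∧
    (Y : Set E).Pairwise (fun y z => ε ≤ dist y z) ∧ Y.card = n}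
  have hbdd : BddAbove A := ⟨M, by rintro n ⟨Y, hY, hsep, rfl⟩; exact hM Y hY hsep⟩
  obtain ⟨Y, hY, hsep, hcard⟩ := Nat.sSup_mem (s := A) ⟨0, ∅, by simp⟩ hbdd
  refine ⟨Y, hY, hsep, fun s hs => ?_⟩
  by_contra! hfar
  have hsY : s ∉ Y := fun h => hε.not_ge ((hfar s h).trans_eq (dist_self s))
  have hmem : Y.card + 1 ∈ A := by
    refine ⟨insert s Y, ?_, ?_, Finset.card_insert_of_notMem hsY⟩ <;> rw [Finset.coe_insert]
    · exact insert_subset hs hY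
    · exact hsep.insert fun y hy _ => ⟨hfar y hy, dist_comm s y ▸ hfar y hy⟩
  have := le_csSup hbdd hmem
  omega

theorem exists_card_le_of_separated_of_dist_le (E : Type*) [NormedAddCommGroup E]
    [NormedSpace ℝ E] [ProperSpace E] (N : ℝ) :
    ∃ M : ℕ, ∀ η > 0, ∀ (x : E) (Y : Finset E),
      (Y : Set E).Pairwise (fun y z => η ≤ dist y z) → (∀ y ∈ Y, dist x y ≤ N * η) →
        Y.card ≤ M := by
  classical
  obtain ⟨M, hM⟩ := exists_card_le_of_separated (isCompact_closedBall (0 : E) N) one_pos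
  refine ⟨M, fun η hη x Y hsep hnear => ?_⟩
  set f : E → E := fun y => η⁻¹ • (y - x)
  have hdist : ∀ y z, dist (f y) (f z) = η⁻¹ * dist y z := fun y z => by
    rw [dist_smul₀, Real.norm_of_nonneg (by positivity), dist_sub_right]
  have hinj : Function.Injective f := fun y z h => by simpa [f, hη.ne'] using h
  rw [← Finset.card_image_of_injective Y hinj]
  refine hM _ ?_ ?_ <;> rw [Finset.coe_image]
  · rintro _ ⟨y, hy, rfl⟩
    have hfx : f x = 0 := by simp [f]
    rw [mem_closedBall, ← hfx, hdist, inv_mul_le_iff₀ hη, dist_comm, mul_comm]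
    exact hnear y hy
  · rintro _ ⟨y, hy, rfl⟩ _ ⟨z, hz, rfl⟩ hne
    rw [hdist, le_inv_mul_iff₀ hη, mul_one]
    exact hsep hy hz fun h => hne (h ▸ rfl)

theorem exists_forall_le_two_mul {X : Type*} [PseudoMetricSpace X] {S : Set X}
    (hS : IsCompact S) {φ : X → ℝ} (hφ : ContinuousOn φ S) (hpos : ∀ x ∈ S, 0 < φ x) :
    ∃ δ > 0, ∀ x ∈ S, ∀ y ∈ S, dist x y < δ → φ x ≤ 2 * φ y := by
  obtain ⟨m, hm, hmφ⟩ := hS.exists_forall_le' hφ hpos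
  obtain ⟨δ, hδ, h⟩ := Metric.uniformContinuousOn_iff.1
    (hS.uniformContinuousOn_of_continuous hφ) m hm
  refine ⟨δ, hδ, fun x hx y hy hxy => ?_⟩
  linarith [(abs_lt.1 (h x hx y hy hxy)).2, hmφ y hy]

end Nets

/-! ### Barriers on an ellipsoid -/

section Ellipsoid

variable {d : ℕ} {a : Euc d → Matrix (Fin d) (Fin d) ℝ} {b : Euc d → Euc d}
  {R κ r η C₀ : ℝ} {p : Euc d}

/-- The Poisson kernel of the ellipsoid `{0 < ellipsoidFn a p r}` up to constants, with pole `y`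
and normalized to be of order `1` at distance `η` from the pole, well inside. -/
def poissonProfile (a : Euc d → Matrix (Fin d) (Fin d) ℝ) (p : Euc d) (r η : ℝ) (y x : Euc d) :
    ℝ :=
  ellipsoidFn a p r x / η * (η / √(anisoSqDist (a y)⁻¹ y x)) ^ d

/-- Families of supersolutions `F y` and strict subsolutions `G y` in the ellipsoid, indexed by
boundary poles `y` and comparable to `poissonProfile`. -/
structure BarrierFamily (a : Euc d → Matrix (Fin d) (Fin d) ℝ) (b : Euc d → Euc d) (p : Euc d)
    (r C₀ η : ℝ) (F G : Euc d → Euc d → ℝ) : Prop where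
  contDiffAt_F : ∀ y x, ellipsoidFn a p r y = 0 → 0 < ellipsoidFn a p r x →
    ContDiffAt ℝ 2 (F y) x
  contDiffAt_G : ∀ y x, ellipsoidFn a p r y = 0 → 0 < ellipsoidFn a p r x →
    ContDiffAt ℝ 2 (G y) x
  le_F : ∀ y x, ellipsoidFn a p r y = 0 → 0 < ellipsoidFn a p r x →
    poissonProfile a p r η y x / 2 ≤ F y x
  F_le : ∀ y x, ellipsoidFn a p r y = 0 → 0 < ellipsoidFn a p r x →
    F y x ≤ 2 * poissonProfile a p r η y x
  le_G : ∀ y x, ellipsoidFn a p r y = 0 → 0 < ellipsoidFn a p r x →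
    poissonProfile a p r η y x / 2 ≤ G y x
  G_le : ∀ y x, ellipsoidFn a p r y = 0 → 0 < ellipsoidFn a p r x →
    G y x ≤ 2 * poissonProfile a p r η y x
  Lop_F_le : ∀ y x, ellipsoidFn a p r y = 0 → 0 < ellipsoidFn a p r x →
    Lop a b (F y) x + C₀ * F y x ≤ 0
  lt_Lop_G : ∀ y x, ellipsoidFn a p r y = 0 → 0 < ellipsoidFn a p r x →
    C₀ * G y x < Lop a b (G y) x

theorem rpow_neg_natCast_div_two {t : ℝ} (ht : 0 ≤ t) (d : ℕ) :
    t ^ (-(d : ℝ) / 2) = (√t ^ d)⁻¹ := by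
  rw [Real.sqrt_eq_rpow, ← Real.rpow_natCast, ← Real.rpow_mul ht, ← Real.rpow_neg ht]
  congr 1
  ring

theorem poissonProfile_eq {y x : Euc d} (h : 0 ≤ anisoSqDist (a y)⁻¹ y x) :
    poissonProfile a p r η y x =
      η ^ d / η * (ellipsoidFn a p r x * anisoSqDist (a y)⁻¹ y x ^ (-(d : ℝ) / 2)) := by
  rw [rpow_neg_natCast_div_two h, poissonProfile, div_pow]
  ring

theorem CoeffBound.norm_le_of_ellipsoidFn_nonneg (hκ : CoeffBound a b R κ) (hr : 0 ≤ r)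
    (hp : ‖p‖ + κ * r ≤ R) {x : Euc d} (hx : 0 ≤ ellipsoidFn a p r x) : ‖x‖ ≤ R := by
  have hpR : ‖p‖ ≤ R := (le_add_of_nonneg_right (mul_nonneg hκ.pos.le hr)).trans hp
  linarith [norm_le_norm_add_norm_sub' x p, hκ.norm_sub_le_of_ellipsoidFn_nonneg hpR hr hx]

theorem CoeffBound.exists_barrierFamily (hd : 1 ≤ d) (hκ : CoeffBound a b R κ) (hC₀ : 0 ≤ C₀) :
    ∃ r₀ > 0, ∀ r, 0 < r → r ≤ r₀ → ∀ p, ‖p‖ + κ * r ≤ R → ∀ η > 0,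
      ∃ F G, BarrierFamily a b p r C₀ η F G := by
  obtain ⟨r₀, hr₀, hbarrier⟩ := exists_barrier (a := a) (b := b) hd
    (one_le_poleConst (d := d) hκ.one_le) hC₀
  refine ⟨r₀, hr₀, fun r hr hrr p hp η hη => ?_⟩
  choose F G hFG using fun y => hbarrier r hrr (ellipsoidFn a p r) (anisoSqDist (a y)⁻¹ y)
  set w := η ^ d / η
  have hw : 0 < w := by positivity
  have hpR : ‖p‖ ≤ R := (le_add_of_nonneg_right (mul_nonneg hκ.pos.le hr.le)).trans hp
  have hpole : ∀ y x, ellipsoidFn a p r y = 0 → 0 < ellipsoidFn a p r x →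
      PoleEstimates a b (poleConst d κ) r (ellipsoidFn a p r) (anisoSqDist (a y)⁻¹ y) x :=
    fun y x hy hx => hκ.poleEstimates hr hpR
      (hκ.norm_le_of_ellipsoidFn_nonneg hr.le hp hy.ge)
      (hκ.norm_le_of_ellipsoidFn_nonneg hr.le hp hx.le) hy hx
  refine ⟨fun y x => w * F y x, fun y x => w * G y x, ?_⟩
  constructor <;> intro y x hy hx <;>
    obtain ⟨hF, hG, ⟨le_F, F_le⟩, ⟨le_G, G_le⟩, hLF, hLG⟩ := hFG y x (hpole y x hy hx) <;>
    try rw [poissonProfile_eq (hpole y x hy hx).τ_pos.le]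
  · exact contDiffAt_const.mul hF
  · exact contDiffAt_const.mul hG
  · linarith [mul_le_mul_of_nonneg_left le_F hw.le]
  · linarith [mul_le_mul_of_nonneg_left F_le hw.le]
  · linarith [mul_le_mul_of_nonneg_left le_G hw.le]
  · linarith [mul_le_mul_of_nonneg_left G_le hw.le]
  · rw [Lop_const_mul hF]
    linarith [mul_nonpos_of_nonneg_of_nonpos hw.le hLF]
  · rw [Lop_const_mul hG]
    linarith [mul_lt_mul_of_pos_left hLG hw]

theorem anisoSqDist_add_smul (m : Matrix (Fin d) (Fin d) ℝ) (p x : Euc d) (c : ℝ) :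
    anisoSqDist m p (p + c • (x - p)) = c ^ 2 * anisoSqDist m p x := by
  simp only [anisoSqDist, add_sub_cancel_left, map_smul, inner_smul_left, inner_smul_right,
    conj_trivial]
  ring

theorem CoeffBound.exists_ellipsoidFn_eq (hκ : CoeffBound a b R κ) (hr : 0 < r) (hp : ‖p‖ ≤ R)
    {x : Euc d} (hx0 : 0 ≤ ellipsoidFn a p r x) (hx : ellipsoidFn a p r x ≤ 3 / 4 * r ^ 2) {s : ℝ}
    (hs : s ≤ r ^ 2) :
    ∃ x', ellipsoidFn a p r x' = s ∧
      ‖x - x'‖ ≤ 4 * κ * |s - ellipsoidFn a p r x| / r := by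
  set q := anisoSqDist (a p)⁻¹ p x
  have hκ0 := hκ.pos
  have hx_eq : ellipsoidFn a p r x = r ^ 2 - q := rfl
  have hq4 : r ^ 2 / 4 ≤ q := by linarith
  have hq : 0 < q := lt_of_lt_of_le (by positivity) hq4
  set c := √((r ^ 2 - s) / q)
  have hc : c ^ 2 = (r ^ 2 - s) / q := Real.sq_sqrt (div_nonneg (sub_nonneg.2 hs) hq.le)
  have hc0 : 0 ≤ c := Real.sqrt_nonneg _
  refine ⟨p + c • (x - p), ?_, ?_⟩
  · rw [ellipsoidFn, anisoSqDist_add_smul, hc, div_mul_cancel₀ _ hq.ne']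
    ring
  · have hsub : x - (p + c • (x - p)) = (1 - c) • (x - p) := by
      rw [sub_smul, one_smul]
      abel
    have hcq : |1 - c| ≤ |s - ellipsoidFn a p r x| / q :=
      calc |1 - c| ≤ |1 - c| * |1 + c| :=
            le_mul_of_one_le_right (abs_nonneg _) (by rw [abs_of_nonneg] <;> linarith)
        _ = |(s - ellipsoidFn a p r x) / q| := by
            rw [← abs_mul, show (1 - c) * (1 + c) = 1 - c ^ 2 by ring, hc, hx_eq]
            congr 1
            field_simp
            ring
        _ = _ := by rw [abs_div, abs_of_pos hq]
    rw [hsub, norm_smul, Real.norm_eq_abs]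
    calc |1 - c| * ‖x - p‖ ≤ |s - ellipsoidFn a p r x| / (r ^ 2 / 4) * (κ * r) := by
          have := hκ.norm_sub_le_of_ellipsoidFn_nonneg hp hr.le hx0
          gcongr
          exact hcq.trans (by gcongr)
      _ = _ := by field_simp

end Ellipsoid

/-! ### Discrete Poisson integrals -/

section PoissonSum

variable {d : ℕ} {a : Euc d → Matrix (Fin d) (Fin d) ℝ} {b : Euc d → Euc d}
  {R κ r η C₀ : ℝ} {p x x' y z w : Euc d} {F G : Euc d → Euc d → ℝ} {Y : Finset (Euc d)}
  {φ : Euc d → ℝ}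

/-- The discrete Poisson integral of `φ`, sampled at the poles `y ∈ Y`, for the kernel `F`. -/
def barrierSum (Y : Finset (Euc d)) (φ : Euc d → ℝ) (F : Euc d → Euc d → ℝ) (x : Euc d) : ℝ :=
  ∑ y ∈ Y, φ y * F y x

theorem contDiffAt_barrierSum (φ : Euc d → ℝ) (hF : ∀ y ∈ Y, ContDiffAt ℝ 2 (F y) x) :
    ContDiffAt ℝ 2 (barrierSum Y φ F) x :=
  ContDiffAt.sum fun y hy => contDiffAt_const.mul (hF y hy)

theorem Lop_barrierSum (φ : Euc d → ℝ) (hF : ∀ y ∈ Y, ContDiffAt ℝ 2 (F y) x) :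
    Lop a b (barrierSum Y φ F) x = barrierSum Y φ (fun y => Lop a b (F y)) x :=
  (Lop_sum Y fun y hy => contDiffAt_const.mul (hF y hy)).trans
    (Finset.sum_congr rfl fun y hy => Lop_const_mul (hF y hy) (φ y))

theorem poissonProfile_nonneg (hη : 0 ≤ η) (hx : 0 ≤ ellipsoidFn a p r x) (y : Euc d) :
    0 ≤ poissonProfile a p r η y x := by
  unfold poissonProfile
  positivity

namespace BarrierFamily

theorem F_nonneg (hF : BarrierFamily a b p r C₀ η F G) (hη : 0 ≤ η)
    (hy : ellipsoidFn a p r y = 0) (hx : 0 < ellipsoidFn a p r x) : 0 ≤ F y x :=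
  (div_nonneg (poissonProfile_nonneg hη hx.le y) zero_le_two).trans (hF.le_F y x hy hx)

theorem G_nonneg (hF : BarrierFamily a b p r C₀ η F G) (hη : 0 ≤ η)
    (hy : ellipsoidFn a p r y = 0) (hx : 0 < ellipsoidFn a p r x) : 0 ≤ G y x :=
  (div_nonneg (poissonProfile_nonneg hη hx.le y) zero_le_two).trans (hF.le_G y x hy hx)

theorem Lop_barrierSum_add_mul_nonpos (hF : BarrierFamily a b p r C₀ η F G)
    (hY : ∀ y ∈ Y, ellipsoidFn a p r y = 0) (hφ : ∀ x, 0 < φ x) (hx : 0 < ellipsoidFn a p r x) :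
    Lop a b (barrierSum Y φ F) x + C₀ * barrierSum Y φ F x ≤ 0 := by
  rw [Lop_barrierSum φ fun y hy => hF.contDiffAt_F y x (hY y hy) hx, barrierSum, barrierSum,
    Finset.mul_sum, ← Finset.sum_add_distrib]
  refine Finset.sum_nonpos fun y hy => ?_
  calc φ y * Lop a b (F y) x + C₀ * (φ y * F y x) = φ y * (Lop a b (F y) x + C₀ * F y x) := by ring
    _ ≤ 0 := mul_nonpos_of_nonneg_of_nonpos (hφ y).le (hF.Lop_F_le y x (hY y hy) hx)

theorem mul_barrierSum_lt_Lop (hF : BarrierFamily a b p r C₀ η F G) (hne : Y.Nonempty)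
    (hY : ∀ y ∈ Y, ellipsoidFn a p r y = 0) (hφ : ∀ x, 0 < φ x) (hx : 0 < ellipsoidFn a p r x) :
    C₀ * barrierSum Y φ G x < Lop a b (barrierSum Y φ G) x := by
  rw [Lop_barrierSum φ fun y hy => hF.contDiffAt_G y x (hY y hy) hx, barrierSum, barrierSum,
    Finset.mul_sum]
  refine Finset.sum_lt_sum_of_nonempty hne fun y hy => ?_
  rw [mul_left_comm]
  exact mul_lt_mul_of_pos_left (hF.lt_Lop_G y x (hY y hy) hx) (hφ y)

end BarrierFamily

end PoissonSum

/-! ### The Harnack inequality on a small ellipsoid -/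

section Ellipsoid

variable {d : ℕ} {a : Euc d → Matrix (Fin d) (Fin d) ℝ} {b : Euc d → Euc d}
  {R κ r η C₀ : ℝ} {p x x' y z w : Euc d} {F G : Euc d → Euc d → ℝ} {Y : Finset (Euc d)}
  {φ : Euc d → ℝ}

/-- The factor by which the layer `ellipsoidFn = η r` is pushed inwards. It is chosen so that
pushing multiplies the Poisson kernels of distant poles by at least `16`. -/
def pushConst (d : ℕ) (κ : ℝ) : ℝ := 16 * (2 * κ ^ 2) ^ d

/-- A bound for the distance by which points of the layer `ellipsoidFn = η r` are moved when
pushed inwards to the layer `ellipsoidFn = pushConst d κ * η * r`. -/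
def pushRadius (d : ℕ) (κ η : ℝ) : ℝ := 4 * κ * pushConst d κ * η

/-- `φ` varies by at most a factor `2` between points of the closed ball of radius `R` around the
origin whose distance is at most `δ`. -/
def VariesSlowly (R δ : ℝ) (φ : Euc d → ℝ) : Prop :=
  ∀ x y, ‖x‖ ≤ R → ‖y‖ ≤ R → dist x y ≤ δ → φ x ≤ 2 * φ y

theorem sixteen_le_pushConst (hκ : 1 ≤ κ) : 16 ≤ pushConst d κ := by
  have hbase : 1 ≤ (2 * κ ^ 2) ^ d := one_le_pow₀ (by linarith [one_le_pow₀ hκ (n := 2)])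
  unfold pushConst
  linarith

/-- The ellipsoid of size `r` around `p` lies in the ball of radius `R` on which the coefficient
bounds hold, and `η` is so small that the pushed layer lies in its outer half. -/
structure EllipsoidSetup (a : Euc d → Matrix (Fin d) (Fin d) ℝ) (b : Euc d → Euc d) (R κ : ℝ)
    (p : Euc d) (r η : ℝ) : Prop where
  coeff : CoeffBound a b R κ
  r_pos : 0 < r
  p_le : ‖p‖ + κ * r ≤ R
  η_pos : 0 < η
  pushConst_mul_η_le : pushConst d κ * η ≤ r / 2

namespace EllipsoidSetup

theorem norm_p_le (S : EllipsoidSetup a b R κ p r η) : ‖p‖ ≤ R :=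
  (le_add_of_nonneg_right (mul_nonneg S.coeff.pos.le S.r_pos.le)).trans S.p_le

theorem norm_le (S : EllipsoidSetup a b R κ p r η) (hx : 0 ≤ ellipsoidFn a p r x) : ‖x‖ ≤ R :=
  S.coeff.norm_le_of_ellipsoidFn_nonneg S.r_pos.le S.p_le hx

theorem poleEstimates (S : EllipsoidSetup a b R κ p r η) (hy : ellipsoidFn a p r y = 0)
    (hx : 0 < ellipsoidFn a p r x) :
    PoleEstimates a b (poleConst d κ) r (ellipsoidFn a p r) (anisoSqDist (a y)⁻¹ y) x :=
  S.coeff.poleEstimates S.r_pos S.norm_p_le (S.norm_le hy.ge) (S.norm_le hx.le) hy hx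

theorem sqrt_anisoSqDist_pos (S : EllipsoidSetup a b R κ p r η) (hy : ellipsoidFn a p r y = 0)
    (hx : 0 < ellipsoidFn a p r x) : 0 < √(anisoSqDist (a y)⁻¹ y x) :=
  Real.sqrt_pos.2 (S.poleEstimates hy hx).τ_pos

theorem poissonProfile_pos (S : EllipsoidSetup a b R κ p r η) (hy : ellipsoidFn a p r y = 0)
    (hx : 0 < ellipsoidFn a p r x) : 0 < poissonProfile a p r η y x := by
  have hτ := S.sqrt_anisoSqDist_pos hy hx
  have hη := S.η_pos
  unfold poissonProfile
  positivity

theorem η_mul_r_pos (S : EllipsoidSetup a b R κ p r η) : 0 < η * r := mul_pos S.η_pos S.r_pos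

theorem η_mul_r_le (S : EllipsoidSetup a b R κ p r η) : η * r ≤ r ^ 2 / 32 := by
  have hη : 16 * η ≤ r / 2 := le_trans
    (mul_le_mul_of_nonneg_right (sixteen_le_pushConst S.coeff.one_le) S.η_pos.le)
    S.pushConst_mul_η_le
  calc η * r ≤ r / 32 * r := mul_le_mul_of_nonneg_right (by linarith) S.r_pos.le
    _ = r ^ 2 / 32 := by ring

theorem isCompact_superlevel (S : EllipsoidSetup a b R κ p r η) {c : ℝ} (hc : 0 ≤ c) :
    IsCompact {x | c ≤ ellipsoidFn a p r x} := by
  refine (isCompact_closedBall (0 : Euc d) R).of_isClosed_subset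
    (isClosed_le continuous_const (contDiff_ellipsoidFn (n := 0) a p r).continuous) fun x hx => ?_
  rw [mem_closedBall_zero_iff]
  exact S.norm_le (hc.trans hx)

end EllipsoidSetup

theorem eventually_le_ellipsoidFn {c : ℝ} (hx : c < ellipsoidFn a p r x) :
    ∀ᶠ y in 𝓝 x, c ≤ ellipsoidFn a p r y :=
  ((contDiff_ellipsoidFn (n := 0) a p r).continuous.continuousAt.eventually_const_lt hx).mono
    fun _ => le_of_lt

namespace EllipsoidSetup

theorem poissonProfile_le_mul (S : EllipsoidSetup a b R κ p r η)
    (hy : ellipsoidFn a p r y = 0) (hx : 0 < ellipsoidFn a p r x) (hx' : 0 < ellipsoidFn a p r x')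
    {A B : ℝ} (hσ : ellipsoidFn a p r x ≤ A * ellipsoidFn a p r x')
    (hτ : √(anisoSqDist (a y)⁻¹ y x') ≤ B * √(anisoSqDist (a y)⁻¹ y x)) :
    poissonProfile a p r η y x ≤ A * B ^ d * poissonProfile a p r η y x' := by
  have hη := S.η_pos
  have hτx := S.sqrt_anisoSqDist_pos hy hx
  have hτx' := S.sqrt_anisoSqDist_pos hy hx'
  have hratio : η / √(anisoSqDist (a y)⁻¹ y x) ≤ B * (η / √(anisoSqDist (a y)⁻¹ y x')) := by
    rw [← mul_div_assoc, div_le_div_iff₀ hτx hτx', mul_right_comm, mul_comm]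
    exact mul_le_mul_of_nonneg_right hτ hη.le
  have hσ' : ellipsoidFn a p r x / η ≤ A * (ellipsoidFn a p r x' / η) := by
    rw [← mul_div_assoc]
    gcongr
  calc poissonProfile a p r η y x
      ≤ A * (ellipsoidFn a p r x' / η) * (B * (η / √(anisoSqDist (a y)⁻¹ y x'))) ^ d :=
        mul_le_mul hσ' (pow_le_pow_left₀ (by positivity) hratio d) (by positivity)
          ((by positivity : 0 ≤ ellipsoidFn a p r x / η).trans hσ')
    _ = _ := by rw [mul_pow, poissonProfile]; ring

theorem poissonProfile_le_of_eq (S : EllipsoidSetup a b R κ p r η)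
    (hy : ellipsoidFn a p r y = 0) (hz : ellipsoidFn a p r z = η * r) :
    poissonProfile a p r η y z ≤ r * poleConst d κ ^ d := by
  have hz0 : 0 < ellipsoidFn a p r z := hz ▸ S.η_mul_r_pos
  have hr := S.r_pos
  have hη := S.η_pos
  have hratio : η / √(anisoSqDist (a y)⁻¹ y z) ≤ poleConst d κ := by
    have hσ := (S.poleEstimates hy hz0).σ_le
    rw [div_le_iff₀ (S.sqrt_anisoSqDist_pos hy hz0)]
    exact le_of_mul_le_mul_right (by linarith) hr
  rw [poissonProfile, hz, mul_div_cancel_left₀ _ hη.ne']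
  gcongr

theorem exists_pushed (S : EllipsoidSetup a b R κ p r η) (hz : ellipsoidFn a p r z = η * r) :
    ∃ w, ellipsoidFn a p r w = pushConst d κ * (η * r) ∧ dist z w ≤ pushRadius d κ η := by
  have hηr := S.η_mul_r_pos
  have hr := S.r_pos
  have hk := sixteen_le_pushConst (d := d) S.coeff.one_le
  have hlayer : pushConst d κ * (η * r) ≤ r / 2 * r := by
    rw [← mul_assoc]
    exact mul_le_mul_of_nonneg_right S.pushConst_mul_η_le hr.le
  obtain ⟨w, hw, hzw⟩ := S.coeff.exists_ellipsoidFn_eq hr S.norm_p_le (x := z)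
    (s := pushConst d κ * (η * r)) (hz ▸ hηr.le)
    (by linarith [S.η_mul_r_le, sq_nonneg r]) (by linarith [sq_nonneg r])
  refine ⟨w, hw, ?_⟩
  rw [hz] at hzw
  rw [dist_eq_norm]
  refine hzw.trans ?_
  have hκ := S.coeff.pos
  have hmove : |pushConst d κ * (η * r) - η * r| ≤ pushConst d κ * (η * r) :=
    abs_le.2 ⟨by linarith [mul_le_mul_of_nonneg_right hk hηr.le], by linarith⟩
  calc _ ≤ 4 * κ * (pushConst d κ * (η * r)) / r := by gcongr
    _ = pushRadius d κ η := by rw [pushRadius]; field_simp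

theorem sixteen_mul_poissonProfile_le (S : EllipsoidSetup a b R κ p r η)
    (hy : ellipsoidFn a p r y = 0) (hz : ellipsoidFn a p r z = η * r)
    (hw : ellipsoidFn a p r w = pushConst d κ * (η * r)) (hfar : dist z w ≤ dist z y) :
    16 * poissonProfile a p r η y z ≤ poissonProfile a p r η y w := by
  have hκ := S.coeff.pos
  have hηr := S.η_mul_r_pos
  have hk : 0 < pushConst d κ := by unfold pushConst; positivity
  have hz0 : 0 < ellipsoidFn a p r z := hz ▸ hηr
  have hw0 : 0 < ellipsoidFn a p r w := hw ▸ mul_pos hk hηr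
  have hyR : ‖y‖ ≤ R := S.norm_le hy.ge
  have hzy : z ≠ y := by rintro rfl; exact hz0.ne' hy
  have hwy : ‖w - y‖ ≤ 2 * ‖z - y‖ := by
    rw [← dist_eq_norm, ← dist_eq_norm]
    linarith [dist_triangle_left w y z]
  have hτ : √(anisoSqDist (a y)⁻¹ y w) ≤ 2 * κ ^ 2 * √(anisoSqDist (a y)⁻¹ y z) :=
    calc √(anisoSqDist (a y)⁻¹ y w) ≤ κ * ‖w - y‖ := S.coeff.sqrt_anisoSqDist_le hyR w
      _ ≤ κ * (2 * (κ * √(anisoSqDist (a y)⁻¹ y z))) := by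
          gcongr
          exact hwy.trans (by gcongr; exact S.coeff.norm_sub_le_sqrt_anisoSqDist hyR hzy)
      _ = _ := by ring
  have hσ : ellipsoidFn a p r z ≤ (pushConst d κ)⁻¹ * ellipsoidFn a p r w := by
    rw [hz, hw, inv_mul_cancel_left₀ hk.ne']
  calc 16 * poissonProfile a p r η y z
      ≤ 16 * ((pushConst d κ)⁻¹ * (2 * κ ^ 2) ^ d * poissonProfile a p r η y w) := by
        gcongr
        exact S.poissonProfile_le_mul hy hz0 hw0 hσ hτ
    _ = poissonProfile a p r η y w := by
        unfold pushConst
        field_simp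

theorem exists_max_barrierSum_ratio (S : EllipsoidSetup a b R κ p r η)
    (hF : BarrierFamily a b p r C₀ η F G) (hne : Y.Nonempty)
    (hY : ∀ y ∈ Y, ellipsoidFn a p r y = 0) (hφ : ContDiff ℝ 2 φ) (hφpos : ∀ x, 0 < φ x)
    (hLφ : ∀ x, ‖x‖ ≤ R → Lop a b φ x ≤ C₀ * φ x) (hx : η * r ≤ ellipsoidFn a p r x) :
    ∃ z, ellipsoidFn a p r z = η * r ∧ ∃ T, barrierSum Y φ G z = T * φ z ∧
      ∀ x, η * r ≤ ellipsoidFn a p r x → barrierSum Y φ G x ≤ T * φ x := by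
  have hηr := S.η_mul_r_pos
  have hdiff : ∀ z, η * r ≤ ellipsoidFn a p r z → ContDiffAt ℝ 2 (barrierSum Y φ G) z :=
    fun z hz => contDiffAt_barrierSum φ fun y hy => hF.contDiffAt_G y z (hY y hy) (hηr.trans_le hz)
  obtain ⟨z, hz, T, hT, hmax⟩ := exists_max_ratio (S.isCompact_superlevel hηr.le) ⟨x, hx⟩
    hφ.continuous.continuousOn (fun z hz => (hdiff z hz).continuousAt.continuousWithinAt)
    fun z _ => hφpos z
  refine ⟨z, le_antisymm ?_ hz, T, hT, hmax⟩
  by_contra! hinner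
  have hz0 : 0 < ellipsoidFn a p r z := hηr.trans hinner
  have hT0 : 0 ≤ T := by
    refine nonneg_of_mul_nonneg_left (hT ▸ Finset.sum_nonneg fun y hy => ?_) (hφpos z)
    exact mul_nonneg (hφpos y).le (hF.G_nonneg S.η_pos.le (hY y hy) hz0)
  exact (hF.mul_barrierSum_lt_Lop hne hY hφpos hz0).not_ge
    (Lop_le_mul_of_touching (S.coeff.posSemidef z) hφ.contDiffAt (hdiff z hz) hT0 hT
      ((eventually_le_ellipsoidFn hinner).mono hmax) (hLφ z (S.norm_le hz0.le)))

theorem sum_near_le (S : EllipsoidSetup a b R κ p r η) (hF : BarrierFamily a b p r C₀ η F G)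
    (hY : ∀ y ∈ Y, ellipsoidFn a p r y = 0) {M : ℕ} (hM : Y.card ≤ M) (hφpos : ∀ x, 0 < φ x)
    (hvar : VariesSlowly R (pushRadius d κ η) φ) (hz : ellipsoidFn a p r z = η * r)
    (hnear : ∀ y ∈ Y, dist z y ≤ pushRadius d κ η) :
    barrierSum Y φ G z ≤ 4 * M * r * poleConst d κ ^ d * φ z := by
  have hr := S.r_pos
  have hz0 : 0 < ellipsoidFn a p r z := hz ▸ S.η_mul_r_pos
  have hφz := hφpos z
  have hK : 0 < poleConst d κ := one_pos.trans_le (one_le_poleConst S.coeff.one_le)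
  have hterm : ∀ y ∈ Y, φ y * G y z ≤ 4 * r * poleConst d κ ^ d * φ z := fun y hy => by
    have hφy : φ y ≤ 2 * φ z := hvar y z (S.norm_le (hY y hy).ge) (S.norm_le hz0.le)
      (by rw [dist_comm]; exact hnear y hy)
    have hG : G y z ≤ 2 * (r * poleConst d κ ^ d) := (hF.G_le y z (hY y hy) hz0).trans
      (by linarith [S.poissonProfile_le_of_eq (hY y hy) hz])
    calc φ y * G y z ≤ 2 * φ z * (2 * (r * poleConst d κ ^ d)) :=
          mul_le_mul hφy hG (hF.G_nonneg S.η_pos.le (hY y hy) hz0) (by positivity)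
      _ = _ := by ring
  calc barrierSum Y φ G z ≤ Y.card * (4 * r * poleConst d κ ^ d * φ z) := by
        rw [← nsmul_eq_mul]
        exact Finset.sum_le_card_nsmul _ _ _ hterm
    _ ≤ M * (4 * r * poleConst d κ ^ d * φ z) := by gcongr
    _ = _ := by ring

theorem sum_far_le (S : EllipsoidSetup a b R κ p r η) (hF : BarrierFamily a b p r C₀ η F G)
    (hY : ∀ y ∈ Y, ellipsoidFn a p r y = 0) (hφpos : ∀ x, 0 < φ x)
    (hz : ellipsoidFn a p r z = η * r) (hw : ellipsoidFn a p r w = pushConst d κ * (η * r))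
    (hfar : ∀ y ∈ Y, dist z w ≤ dist z y) :
    barrierSum Y φ G z ≤ 1 / 4 * barrierSum Y φ G w := by
  have hηr := S.η_mul_r_pos
  have hk := sixteen_le_pushConst (d := d) S.coeff.one_le
  have hw0 : 0 < ellipsoidFn a p r w := hw ▸ mul_pos (by linarith) hηr
  rw [barrierSum, barrierSum, Finset.mul_sum]
  refine Finset.sum_le_sum fun y hy => ?_
  have hG : G y z ≤ 1 / 4 * G y w := by
    linarith [hF.G_le y z (hY y hy) (hz ▸ hηr), hF.le_G y w (hY y hy) hw0,
      S.sixteen_mul_poissonProfile_le (hY y hy) hz hw (hfar y hy)]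
  rw [mul_left_comm]
  exact mul_le_mul_of_nonneg_left hG (hφpos y).le

/-- The maximum of the ratio of the two sides sits on the layer `ellipsoidFn = η r`. There, the
near poles contribute a bounded amount, and the far poles at most a quarter of the sum at the
pushed point, where the ratio is no larger. -/
theorem barrierSum_le_mul (S : EllipsoidSetup a b R κ p r η)
    (hF : BarrierFamily a b p r C₀ η F G) (hY : ∀ y ∈ Y, ellipsoidFn a p r y = 0) {M : ℕ}
    (hM : ∀ (x : Euc d) (Z : Finset (Euc d)), Z ⊆ Y →
      (∀ y ∈ Z, dist x y ≤ pushRadius d κ η) → Z.card ≤ M)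
    (hφ : ContDiff ℝ 2 φ) (hφpos : ∀ x, 0 < φ x)
    (hLφ : ∀ x, ‖x‖ ≤ R → Lop a b φ x ≤ C₀ * φ x)
    (hvar : VariesSlowly R (pushRadius d κ η) φ) (hx : η * r ≤ ellipsoidFn a p r x) :
    barrierSum Y φ G x ≤ 8 * M * r * poleConst d κ ^ d * φ x := by
  classical
  have hηr := S.η_mul_r_pos
  have hk := sixteen_le_pushConst (d := d) S.coeff.one_le
  rcases Y.eq_empty_or_nonempty with rfl | hne
  · have hr := S.r_pos
    have hK : 0 < poleConst d κ := one_pos.trans_le (one_le_poleConst S.coeff.one_le)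
    have := (hφpos x).le
    simp only [barrierSum, Finset.sum_empty]
    positivity
  obtain ⟨z, hz, T, hT, hmax⟩ := S.exists_max_barrierSum_ratio hF hne hY hφ hφpos hLφ hx
  refine (hmax x hx).trans (mul_le_mul_of_nonneg_right ?_ (hφpos x).le)
  obtain ⟨w, hw, hzw⟩ := S.exists_pushed hz
  have hw' : η * r ≤ ellipsoidFn a p r w := hw ▸ le_mul_of_one_le_left hηr.le (by linarith)
  have hw0 := hηr.trans_le hw'
  have hφw : φ w ≤ 2 * φ z :=
    hvar w z (S.norm_le hw0.le) (S.norm_le (hz ▸ hηr.le)) (by rwa [dist_comm])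
  have hT0 : 0 ≤ T := nonneg_of_mul_nonneg_left ((Finset.sum_nonneg fun y hy =>
    mul_nonneg (hφpos y).le (hF.G_nonneg S.η_pos.le (hY y hy) hw0)).trans (hmax w hw')) (hφpos w)
  set near := Y.filter fun y => dist z y ≤ pushRadius d κ η
  set far := Y.filter fun y => ¬ dist z y ≤ pushRadius d κ η
  have hsplit : barrierSum near φ G z + barrierSum far φ G z = T * φ z :=
    (Finset.sum_filter_add_sum_filter_not _ _ _).trans hT
  have hnear : barrierSum near φ G z ≤ 4 * M * r * poleConst d κ ^ d * φ z :=
    S.sum_near_le hF (fun y hy => hY y (Finset.mem_filter.1 hy).1)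
      (hM z near (Finset.filter_subset _ _) fun y hy => (Finset.mem_filter.1 hy).2)
      hφpos hvar hz fun y hy => (Finset.mem_filter.1 hy).2
  have hfar : barrierSum far φ G z ≤ 1 / 4 * (T * (2 * φ z)) := by
    refine (S.sum_far_le hF (fun y hy => hY y (Finset.mem_filter.1 hy).1) hφpos hz hw fun y hy =>
      hzw.trans (not_le.1 (Finset.mem_filter.1 hy).2).le).trans ?_
    gcongr
    calc barrierSum far φ G w ≤ barrierSum Y φ G w :=
          Finset.sum_le_sum_of_subset_of_nonneg (Finset.filter_subset _ _) fun y hy _ =>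
            mul_nonneg (hφpos y).le (hF.G_nonneg S.η_pos.le (hY y hy) hw0)
      _ ≤ T * φ w := hmax w hw'
      _ ≤ T * (2 * φ z) := by gcongr
  exact le_of_mul_le_mul_right (by linarith) (hφpos z)

theorem exists_near_pole (S : EllipsoidSetup a b R κ p r η)
    (hnet : ∀ s, ellipsoidFn a p r s = 0 → ∃ y ∈ Y, dist s y < η)
    (hx : 0 ≤ ellipsoidFn a p r x) (hx' : ellipsoidFn a p r x ≤ η * r) :
    ∃ y ∈ Y, ‖x - y‖ ≤ 5 * κ * η := by
  have hκ := S.coeff.pos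
  have hr := S.r_pos
  have hη := S.η_pos
  obtain ⟨s, hs, hxs⟩ := S.coeff.exists_ellipsoidFn_eq hr S.norm_p_le hx
    (by linarith [S.η_mul_r_le, sq_nonneg r]) (sq_nonneg r)
  obtain ⟨y, hy, hsy⟩ := hnet s hs
  rw [zero_sub, abs_neg, abs_of_nonneg hx] at hxs
  have hdist : ‖x - s‖ ≤ 4 * κ * η := by
    refine hxs.trans ?_
    rw [div_le_iff₀ hr, mul_assoc _ η]
    gcongr
  refine ⟨y, hy, ?_⟩
  rw [← dist_eq_norm] at hdist ⊢
  linarith [dist_triangle x s y, mul_le_mul_of_nonneg_right S.coeff.one_le hη.le]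

theorem half_le_mul_poissonProfile (S : EllipsoidSetup a b R κ p r η)
    (hy : ellipsoidFn a p r y = 0) (hx : η * r / 2 ≤ ellipsoidFn a p r x)
    (hxy : ‖x - y‖ ≤ 5 * κ * η) :
    r / 2 ≤ (5 * κ ^ 2) ^ d * poissonProfile a p r η y x := by
  have hκ := S.coeff.pos
  have hr := S.r_pos
  have hη := S.η_pos
  have hτ := S.sqrt_anisoSqDist_pos hy ((half_pos S.η_mul_r_pos).trans_le hx)
  have hratio : 1 ≤ 5 * κ ^ 2 * (η / √(anisoSqDist (a y)⁻¹ y x)) := by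
    rw [← mul_div_assoc, one_le_div hτ]
    calc √(anisoSqDist (a y)⁻¹ y x) ≤ κ * ‖x - y‖ := S.coeff.sqrt_anisoSqDist_le (S.norm_le hy.ge) x
      _ ≤ κ * (5 * κ * η) := by gcongr
      _ = 5 * κ ^ 2 * η := by ring
  have hσ : r / 2 ≤ ellipsoidFn a p r x / η := by
    rw [le_div_iff₀ hη]
    linarith
  calc r / 2 ≤ ellipsoidFn a p r x / η * (5 * κ ^ 2 * (η / √(anisoSqDist (a y)⁻¹ y x))) ^ d :=
        hσ.trans (le_mul_of_one_le_right (by linarith) (one_le_pow₀ hratio))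
    _ = _ := by rw [mul_pow, poissonProfile]; ring

theorem two_mul_le_barrierSum (S : EllipsoidSetup a b R κ p r η)
    (hF : BarrierFamily a b p r C₀ η F G) (hY : ∀ y ∈ Y, ellipsoidFn a p r y = 0)
    (hnet : ∀ s, ellipsoidFn a p r s = 0 → ∃ y ∈ Y, dist s y < η) (hφpos : ∀ x, 0 < φ x)
    (hvar : VariesSlowly R (pushRadius d κ η) φ)
    (hx : η * r / 2 ≤ ellipsoidFn a p r x) (hx' : ellipsoidFn a p r x ≤ η * r) :
    2 * φ x ≤ 16 / r * (5 * κ ^ 2) ^ d * barrierSum Y φ F x := by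
  have hκ := S.coeff.pos
  have hr := S.r_pos
  have hη := S.η_pos
  have hx0 : 0 < ellipsoidFn a p r x := (half_pos S.η_mul_r_pos).trans_le hx
  obtain ⟨y, hy, hxy⟩ := S.exists_near_pole hnet hx0.le hx'
  have hφxy : φ x ≤ 2 * φ y := by
    refine hvar x y (S.norm_le hx0.le) (S.norm_le (hY y hy).ge) ?_
    rw [dist_eq_norm]
    have hk := mul_le_mul_of_nonneg_right (sixteen_le_pushConst (d := d) S.coeff.one_le)
      (by positivity : 0 ≤ 4 * κ * η)
    calc ‖x - y‖ ≤ 5 * κ * η := hxy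
      _ ≤ pushConst d κ * (4 * κ * η) := by linarith [mul_pos hκ hη]
      _ = pushRadius d κ η := by rw [pushRadius]; ring
  have hFy : r / 4 ≤ (5 * κ ^ 2) ^ d * F y x := by
    linarith [S.half_le_mul_poissonProfile (hY y hy) hx hxy,
      mul_le_mul_of_nonneg_left (hF.le_F y x (hY y hy) hx0)
        (by positivity : 0 ≤ (5 * κ ^ 2) ^ d)]
  have hsingle : φ y * F y x ≤ barrierSum Y φ F x :=
    Finset.single_le_sum (f := fun y => φ y * F y x) (fun y hy =>
      mul_nonneg (hφpos y).le (hF.F_nonneg hη.le (hY y hy) hx0)) hy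
  calc 2 * φ x ≤ 4 * φ y := by linarith
    _ = 16 / r * (φ y * (r / 4)) := by field_simp; ring
    _ ≤ 16 / r * (φ y * ((5 * κ ^ 2) ^ d * F y x)) := by
        have := hφpos y
        gcongr
    _ = 16 / r * (5 * κ ^ 2) ^ d * (φ y * F y x) := by ring
    _ ≤ _ := by gcongr

theorem ellipsoidFn_le (S : EllipsoidSetup a b R κ p r η) (x : Euc d) :
    ellipsoidFn a p r x ≤ r ^ 2 :=
  sub_le_self _ (nonneg_of_mul_nonneg_right
    ((sq_nonneg _).trans (S.coeff.ell_inv p S.norm_p_le (x - p))) S.coeff.pos)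

theorem sqrt_anisoSqDist_le_of_deep (S : EllipsoidSetup a b R κ p r η)
    (hy : ellipsoidFn a p r y = 0) (hx : r ^ 2 / 2 ≤ ellipsoidFn a p r x)
    (hx' : 0 < ellipsoidFn a p r x') :
    √(anisoSqDist (a y)⁻¹ y x') ≤ 2 * poleConst d κ ^ 2 * √(anisoSqDist (a y)⁻¹ y x) := by
  have hr := S.r_pos
  have hx0 : 0 < ellipsoidFn a p r x := (by positivity : 0 < r ^ 2 / 2).trans_le hx
  have hK : 0 < poleConst d κ := one_pos.trans_le (one_le_poleConst S.coeff.one_le)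
  have hpole : r ≤ 2 * poleConst d κ * √(anisoSqDist (a y)⁻¹ y x) := by
    refine le_of_mul_le_mul_right (a := r) ?_ hr
    linarith [(S.poleEstimates hy hx0).σ_le]
  calc √(anisoSqDist (a y)⁻¹ y x') ≤ poleConst d κ * r := (S.poleEstimates hy hx').sqrt_τ_le
    _ ≤ poleConst d κ * (2 * poleConst d κ * √(anisoSqDist (a y)⁻¹ y x)) := by gcongr
    _ = _ := by ring

theorem barrierSum_le_barrierSum_of_deep (S : EllipsoidSetup a b R κ p r η)
    (hF : BarrierFamily a b p r C₀ η F G) (hY : ∀ y ∈ Y, ellipsoidFn a p r y = 0)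
    (hφpos : ∀ x, 0 < φ x) (hx : r ^ 2 / 2 ≤ ellipsoidFn a p r x)
    (hx' : r ^ 2 / 2 ≤ ellipsoidFn a p r x') :
    barrierSum Y φ F x ≤ 8 * (2 * poleConst d κ ^ 2) ^ d * barrierSum Y φ G x' := by
  have hr := S.r_pos
  have hx0 : 0 < ellipsoidFn a p r x := (by positivity : 0 < r ^ 2 / 2).trans_le hx
  have hx0' : 0 < ellipsoidFn a p r x' := (by positivity : 0 < r ^ 2 / 2).trans_le hx'
  rw [barrierSum, barrierSum, Finset.mul_sum]
  refine Finset.sum_le_sum fun y hy => ?_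
  have hprofile : poissonProfile a p r η y x ≤
      2 * (2 * poleConst d κ ^ 2) ^ d * poissonProfile a p r η y x' :=
    S.poissonProfile_le_mul (hY y hy) hx0 hx0' (by linarith [S.ellipsoidFn_le x])
      (S.sqrt_anisoSqDist_le_of_deep (hY y hy) hx hx0')
  have hFG : F y x ≤ 8 * (2 * poleConst d κ ^ 2) ^ d * G y x' :=
    calc F y x ≤ 2 * (2 * (2 * poleConst d κ ^ 2) ^ d * poissonProfile a p r η y x') := by
          linarith [hF.F_le y x (hY y hy) hx0]
      _ = 8 * (2 * poleConst d κ ^ 2) ^ d * (poissonProfile a p r η y x' / 2) := by ring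
      _ ≤ _ := by gcongr; exact hF.le_G y x' (hY y hy) hx0'
  rw [mul_left_comm]
  exact mul_le_mul_of_nonneg_left hFG (hφpos y).le

theorem one_le_Lop_anisoSqDist (hd : 1 ≤ d) (S : EllipsoidSetup a b R κ p r η)
    (hr : 2 * (d ^ 2 + 1) * κ ^ 3 * r ≤ 1) (hx : 0 ≤ ellipsoidFn a p r x) :
    1 ≤ Lop a b (anisoSqDist (a p)⁻¹ p) x := by
  have hκ := S.coeff.pos
  have herr : 2 * ((d : ℝ) ^ 2 + 1) * κ ^ 2 * ‖x - p‖ ≤ 1 :=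
    calc _ ≤ 2 * ((d : ℝ) ^ 2 + 1) * κ ^ 2 * (κ * r) := by
          gcongr
          exact S.coeff.norm_sub_le_of_ellipsoidFn_nonneg S.norm_p_le S.r_pos.le hx
      _ = 2 * (d ^ 2 + 1) * κ ^ 3 * r := by ring
      _ ≤ 1 := hr
  have hd' : (1 : ℝ) ≤ d := Nat.one_le_cast.2 hd
  linarith [(abs_le.1 (S.coeff.abs_Lop_anisoSqDist_sub_le (S.norm_le hx) S.norm_p_le)).1]

/-- The comparison function is the quadratic `μ / 2 + μ / (2 r²) * (r² - ellipsoidFn)`. -/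
theorem half_le_of_le_on_layer (hd : 1 ≤ d) (S : EllipsoidSetup a b R κ p r η)
    (hr : 2 * (d ^ 2 + 1) * κ ^ 3 * r ≤ 1) (hC₀ : 0 ≤ C₀) (hC₀r : 2 * C₀ * r ^ 2 < 1)
    (hφ : ContDiff ℝ 2 φ) (hφpos : ∀ x, 0 < φ x) (hLφ : ∀ x, ‖x‖ ≤ R → Lop a b φ x ≤ C₀ * φ x)
    {μ : ℝ} (hμ : 0 < μ) (hlayer : ∀ x, ellipsoidFn a p r x = η * r → μ ≤ φ x)
    (hx : η * r ≤ ellipsoidFn a p r x) : μ / 2 ≤ φ x := by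
  have hηr := S.η_mul_r_pos
  have hrr : 0 < r ^ 2 := pow_pos S.r_pos 2
  set q := anisoSqDist (a p)⁻¹ p
  have hq : ContDiff ℝ 2 q := contDiff_anisoSqDist _ _
  have hσq : ∀ z, ellipsoidFn a p r z = r ^ 2 - q z := fun _ => rfl
  set w : Euc d → ℝ := fun z => μ / 2 + μ / 2 / r ^ 2 * q z
  have hw : ContDiff ℝ 2 w := contDiff_const.add (contDiff_const.mul hq)
  have hwμ : ∀ z, 0 ≤ ellipsoidFn a p r z → w z ≤ μ := fun z hz => by
    have hslope : μ / 2 / r ^ 2 * q z ≤ μ / 2 / r ^ 2 * r ^ 2 := by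
      gcongr
      linarith [hσq z]
    rw [div_mul_cancel₀ _ hrr.ne'] at hslope
    exact (add_le_add_right hslope _).trans_eq (add_halves μ)
  have hLw : ∀ z, 0 ≤ ellipsoidFn a p r z → C₀ * w z < Lop a b w z := fun z hz => by
    have hCμ : C₀ * μ < μ / 2 / r ^ 2 := by
      rw [lt_div_iff₀ hrr]
      linarith [mul_lt_mul_of_pos_right hC₀r (half_pos hμ)]
    rw [Lop_add contDiff_const.contDiffAt (contDiff_const.mul hq).contDiffAt, Lop_const,
      Lop_const_mul hq.contDiffAt, zero_add]
    calc C₀ * w z ≤ C₀ * μ := by gcongr; exact hwμ z hz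
      _ < μ / 2 / r ^ 2 := hCμ
      _ ≤ _ := le_mul_of_one_le_right (by positivity) (S.one_le_Lop_anisoSqDist hd hr hz)
  have hcompare : w x ≤ φ x := by
    refine le_of_strict_subsolution (b := b) S.coeff.posSemidef (S.isCompact_superlevel hηr.le)
      hφ.continuous.continuousOn hw.continuous.continuousOn (fun z _ => hφpos z) C₀
      (fun z hz hlt => ?_) x hx
    have hz0 : 0 ≤ ellipsoidFn a p r z := hηr.le.trans hz
    have hinner : η * r < ellipsoidFn a p r z := lt_of_le_of_ne hz fun h =>
      ((hlayer z h.symm).trans_lt hlt).not_ge (hwμ z hz0)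
    exact ⟨eventually_le_ellipsoidFn hinner, hφ.contDiffAt, hw.contDiffAt, hLφ z (S.norm_le hz0),
      hLw z hz0⟩
  have hqx : 0 ≤ q x := by linarith [hσq x, S.ellipsoidFn_le x]
  exact (le_add_of_nonneg_right (by positivity)).trans hcompare

end EllipsoidSetup

end Ellipsoid

/-! ### Lowering supersolutions -/

section Lowering

variable {d : ℕ} {a : Euc d → Matrix (Fin d) (Fin d) ℝ} {b : Euc d → Euc d}
  {R κ r η C₀ C C' c c' : ℝ} {p x x₀ x₁ : Euc d} {U φ φ₁ φ₂ : Euc d → ℝ}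
  {F G : Euc d → Euc d → ℝ} {Y : Finset (Euc d)} {s t : Set (Euc d)}

/-- `φ'` is a supersolution below `φ` whose lower bounds on the ball of radius `R` are controlled
by those of `φ`. -/
structure Lowering (a : Euc d → Matrix (Fin d) (Fin d) ℝ) (b : Euc d → Euc d) (U : Euc d → ℝ)
    (R c : ℝ) (φ φ' : Euc d → ℝ) : Prop where
  super : IsSuper a b U φ'
  le : ∀ x, φ' x ≤ φ x
  low : ∀ μ > 0, (∀ x, ‖x‖ ≤ R → μ ≤ φ x) → ∀ x, ‖x‖ ≤ R → c * μ ≤ φ' x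

namespace Lowering

theorem refl (R : ℝ) (hφ : IsSuper a b U φ) : Lowering a b U R 1 φ φ where
  super := hφ
  le _ := le_rfl
  low μ _ h x hx := (one_mul μ).trans_le (h x hx)

theorem trans (hc : 0 < c) (h : Lowering a b U R c φ φ₁) (h' : Lowering a b U R c' φ₁ φ₂) :
    Lowering a b U R (c' * c) φ φ₂ where
  super := h'.super
  le x := (h'.le x).trans (h.le x)
  low μ hμ hlow x hx := by
    rw [mul_assoc]
    exact h'.low _ (mul_pos hc hμ) (h.low μ hμ hlow) x hx

end Lowering

theorem IsSuper.Lop_le (hφ : IsSuper a b U φ) (hU : |U x| ≤ C₀) : Lop a b φ x ≤ C₀ * φ x := by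
  have hUφ : -C₀ * φ x ≤ U x * φ x := mul_le_mul_of_nonneg_right (abs_le.1 hU).1 (hφ.pos x).le
  linarith [hφ.le x]

namespace EllipsoidSetup

theorem exists_ellipsoidFn_eq_zero (hd : 1 ≤ d) (S : EllipsoidSetup a b R κ p r η) :
    ∃ y, ellipsoidFn a p r y = 0 := by
  have : Nonempty (Fin d) := ⟨⟨0, hd⟩⟩
  obtain ⟨x, hx⟩ := NormedSpace.exists_lt_norm ℝ (Euc d) R
  refine mem_range_of_exists_le_of_exists_ge (c := (0 : ℝ))
    (contDiff_ellipsoidFn (n := 0) a p r).continuous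
    ⟨x, (not_le.1 fun h => (S.norm_le h).not_gt hx).le⟩ ⟨p, ?_⟩
  simpa [ellipsoidFn, anisoSqDist] using sq_nonneg r

theorem isCompact_boundary (S : EllipsoidSetup a b R κ p r η) :
    IsCompact {x | ellipsoidFn a p r x = 0} :=
  (S.isCompact_superlevel le_rfl).of_isClosed_subset
    (isClosed_eq (contDiff_ellipsoidFn (n := 0) a p r).continuous continuous_const)
    fun _ hx => ge_of_eq hx

theorem half_sq_le_of_mem_ball (S : EllipsoidSetup a b R κ p r η)
    (hx : x ∈ ball p (r / (2 * κ))) : r ^ 2 / 2 ≤ ellipsoidFn a p r x := by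
  have hκ := S.coeff.pos
  have hr := S.r_pos
  rw [mem_ball, dist_eq_norm] at hx
  have hsmall : κ * ‖x - p‖ ^ 2 ≤ r ^ 2 / 2 :=
    calc κ * ‖x - p‖ ^ 2 ≤ κ * (r / (2 * κ)) ^ 2 := by gcongr
      _ = r ^ 2 / 4 / κ := by field_simp; ring
      _ ≤ r ^ 2 / 4 := div_le_self (by positivity) S.coeff.one_le
      _ ≤ r ^ 2 / 2 := by linarith [sq_nonneg r]
  rw [ellipsoidFn]
  linarith [S.coeff.anisoSqDist_le S.norm_p_le p x]

theorem barrierSum_pos (S : EllipsoidSetup a b R κ p r η) (hF : BarrierFamily a b p r C₀ η F G)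
    (hY : ∀ y ∈ Y, ellipsoidFn a p r y = 0) (hYne : Y.Nonempty) (hφ : ∀ x, 0 < φ x)
    (hx : 0 < ellipsoidFn a p r x) : 0 < barrierSum Y φ F x :=
  Finset.sum_pos (fun y hy => mul_pos (hφ y) <|
    (half_pos (S.poissonProfile_pos (hY y hy) hx)).trans_le (hF.le_F y x (hY y hy) hx)) hYne

theorem exists_lowering_le_barrierSum (hd : 1 ≤ d) (S : EllipsoidSetup a b R κ p r η)
    (hr : 2 * (d ^ 2 + 1) * κ ^ 3 * r ≤ 1) (hC₀ : 0 ≤ C₀) (hC₀r : 2 * C₀ * r ^ 2 < 1)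
    (hF : BarrierFamily a b p r C₀ η F G) (hY : ∀ y ∈ Y, ellipsoidFn a p r y = 0)
    (hnet : ∀ s, ellipsoidFn a p r s = 0 → ∃ y ∈ Y, dist s y < η)
    (hU : ∀ x, ‖x‖ ≤ R → |U x| ≤ C₀) (hφ : IsSuper a b U φ)
    (hvar : VariesSlowly R (pushRadius d κ η) φ) :
    ∃ φ', Lowering a b U R (1 / 2) φ φ' ∧ ∀ x, η * r ≤ ellipsoidFn a p r x →
      φ' x ≤ 3 / 2 * (16 / r * (5 * κ ^ 2) ^ d * barrierSum Y φ F x) := by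
  have hηr := S.η_mul_r_pos
  have hκ := S.coeff.pos
  have hr0 := S.r_pos
  set Λ := 16 / r * (5 * κ ^ 2) ^ d
  have hΛ : 0 < Λ := by positivity
  have hYne : Y.Nonempty := by
    obtain ⟨y₀, hy₀⟩ := S.exists_ellipsoidFn_eq_zero hd
    obtain ⟨y, hy, -⟩ := hnet y₀ hy₀
    exact ⟨y, hy⟩
  set ψ : Euc d → ℝ := fun x => Λ * barrierSum Y φ F x
  have hψ : ∀ x, η * r / 2 < ellipsoidFn a p r x →
      ContDiffAt ℝ 2 ψ x ∧ 0 < ψ x ∧ Lop a b ψ x + U x * ψ x ≤ 0 := fun x hx => by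
    have hx0 : 0 < ellipsoidFn a p r x := (half_pos hηr).trans hx
    have hsmooth : ContDiffAt ℝ 2 (barrierSum Y φ F) x :=
      contDiffAt_barrierSum φ fun y hy => hF.contDiffAt_F y x (hY y hy) hx0
    have hpos := S.barrierSum_pos hF hY hYne hφ.pos hx0
    refine ⟨contDiffAt_const.mul hsmooth, mul_pos hΛ hpos, ?_⟩
    rw [Lop_const_mul hsmooth, mul_left_comm, ← mul_add]
    refine mul_nonpos_of_nonneg_of_nonpos hΛ.le ?_
    have hUx := mul_le_mul_of_nonneg_right ((le_abs_self _).trans (hU x (S.norm_le hx0.le))) hpos.le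
    linarith [hF.Lop_barrierSum_add_mul_nonpos hY hφ.pos hx0]
  obtain ⟨φ', hφ', hle, hout, hin⟩ := hφ.exists_glue
    (fun x => (S.coeff.posDef x).posSemidef) (contDiff_ellipsoidFn (n := 0) a p r).continuous
    (half_lt_self hηr) hψ
    fun x hx hx' => S.two_mul_le_barrierSum hF hY hnet hφ.pos hvar hx.le hx'
  refine ⟨φ', ⟨hφ', hle, fun μ hμ hlow x hx => ?_⟩,
    fun x hx => hin x ((half_lt_self hηr).trans_le hx)⟩
  rcases le_total (ellipsoidFn a p r x) (η * r) with hsmall | hlarge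
  · rw [hout x hsmall]
    linarith [hlow x hx]
  · rw [one_div_mul_eq_div]
    refine S.half_le_of_le_on_layer hd hr hC₀ hC₀r hφ'.contDiff hφ'.pos
      (fun z hz => hφ'.Lop_le (hU z hz)) hμ (fun z hz => ?_) hlarge
    rw [hout z hz.le]
    exact hlow z (S.norm_le (hηr.le.trans hz.ge))

end EllipsoidSetup

/-- Every supersolution `φ` for a potential bounded by `C₀` has a `c`-lowering bounded on `s` by
`C * φ x₀`. This replaces Harnack's inequality, which fails for supersolutions themselves. -/
def LoweringHarnack (a : Euc d → Matrix (Fin d) (Fin d) ℝ) (b : Euc d → Euc d)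
    (R C₀ C c : ℝ) (x₀ : Euc d) (s : Set (Euc d)) : Prop :=
  ∀ U φ, (∀ x, ‖x‖ ≤ R → |U x| ≤ C₀) → IsSuper a b U φ →
    ∃ φ', Lowering a b U R c φ φ' ∧ ∀ x ∈ s, φ' x ≤ C * φ x₀

namespace LoweringHarnack

theorem trans (hc : 0 < c) (hC' : 0 ≤ C') (h : LoweringHarnack a b R C₀ C c x₀ s) (hx₁ : x₁ ∈ s)
    (h' : LoweringHarnack a b R C₀ C' c' x₁ t) :
    LoweringHarnack a b R C₀ (C' * C) (c' * c) x₀ t := by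
  intro U φ hU hφ
  obtain ⟨φ₁, hφ₁, hle₁⟩ := h U φ hU hφ
  obtain ⟨φ₂, hφ₂, hle₂⟩ := h' U φ₁ hU hφ₁.super
  refine ⟨φ₂, hφ₁.trans hc hφ₂, fun x hx => ?_⟩
  calc φ₂ x ≤ C' * φ₁ x₁ := hle₂ x hx
    _ ≤ C' * (C * φ x₀) := mul_le_mul_of_nonneg_left (hle₁ x₁ hx₁) hC'
    _ = C' * C * φ x₀ := (mul_assoc _ _ _).symm

theorem union (hc : 0 < c) (hC' : 0 ≤ C') (h : LoweringHarnack a b R C₀ C c x₀ s)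
    (h' : LoweringHarnack a b R C₀ C' c' x₀ t) :
    LoweringHarnack a b R C₀ (max C C') (c' * c) x₀ (s ∪ t) := by
  intro U φ hU hφ
  obtain ⟨φ₁, hφ₁, hle₁⟩ := h U φ hU hφ
  obtain ⟨φ₂, hφ₂, hle₂⟩ := h' U φ₁ hU hφ₁.super
  have hpos := hφ.pos x₀
  refine ⟨φ₂, hφ₁.trans hc hφ₂, fun x hx => ?_⟩
  rcases hx with hx | hx
  · exact ((hφ₂.le x).trans (hle₁ x hx)).trans
      (mul_le_mul_of_nonneg_right (le_max_left _ _) hpos.le)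
  · calc φ₂ x ≤ C' * φ₁ x₀ := hle₂ x hx
      _ ≤ max C C' * φ x₀ :=
        mul_le_mul (le_max_right _ _) (hφ₁.le x₀) (hφ₁.super.pos x₀).le
          (hC'.trans (le_max_right _ _))

theorem mono (h : LoweringHarnack a b R C₀ C c x₀ s) (hts : t ⊆ s) :
    LoweringHarnack a b R C₀ C c x₀ t := fun U φ hU hφ =>
  let ⟨φ', hφ', hle⟩ := h U φ hU hφ
  ⟨φ', hφ', fun x hx => hle x (hts hx)⟩

end LoweringHarnack

theorem exists_small_radius (d : ℕ) (κ C₀ : ℝ) {r₀ : ℝ} (hr₀ : 0 < r₀) :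
    ∃ r > 0, r ≤ r₀ ∧ κ * r ≤ 1 ∧ 2 * ((d : ℝ) ^ 2 + 1) * κ ^ 3 * r ≤ 1 ∧ 2 * C₀ * r ^ 2 < 1 := by
  have hsmall {f : ℝ → ℝ} (hf : Continuous f) (hf0 : f 0 = 0) : ∀ᶠ r in 𝓝[>] 0, f r < 1 :=
    nhdsWithin_le_nhds (hf.continuousAt.eventually_lt_const (hf0.trans_lt one_pos))
  obtain ⟨r, hr, hrr₀, hκ, hκ3, hC₀⟩ := (eventually_mem_nhdsWithin.and <|
    (Eventually.filter_mono nhdsWithin_le_nhds (eventually_le_nhds hr₀)).and <|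
    (hsmall (f := fun r => κ * r) (by fun_prop) (by simp)).and <|
    (hsmall (f := fun r => 2 * ((d : ℝ) ^ 2 + 1) * κ ^ 3 * r) (by fun_prop) (by simp)).and <|
    hsmall (f := fun r => 2 * C₀ * r ^ 2) (by fun_prop) (by simp)).exists
  exact ⟨r, hr, hrr₀, hκ.le, hκ3.le, hC₀⟩

theorem exists_variesSlowly_mesh (hκ : 1 ≤ κ) (hr : 0 < r) (R : ℝ) (hφ : Continuous φ)
    (hφpos : ∀ x, 0 < φ x) :
    ∃ η > 0, pushConst d κ * η ≤ r / 2 ∧ VariesSlowly R (pushRadius d κ η) φ := by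
  obtain ⟨δ, hδ, hvar⟩ := exists_forall_le_two_mul (isCompact_closedBall (0 : Euc d) R)
    hφ.continuousOn fun x _ => hφpos x
  have hk : 0 < pushConst d κ := by linarith [sixteen_le_pushConst (d := d) hκ]
  have hK : 0 < 4 * κ * pushConst d κ := by positivity
  refine ⟨min (r / 2 / pushConst d κ) (δ / 2 / (4 * κ * pushConst d κ)), by positivity, ?_,
    fun x y hx hy hxy => hvar x (by simpa using hx) y (by simpa using hy) (hxy.trans_lt ?_)⟩
  · exact (le_div_iff₀' hk).1 (min_le_left _ _)
  · exact ((le_div_iff₀' hK).1 (min_le_right _ _)).trans_lt (half_lt_self hδ)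

theorem CoeffBound.exists_loweringHarnack_ball (hd : 1 ≤ d) (hκ : CoeffBound a b (R + 1) κ)
    (hC₀ : 0 ≤ C₀) :
    ∃ ρ > 0, ∃ C ≥ 0, ∀ p, ‖p‖ ≤ R →
      LoweringHarnack a b (R + 1) C₀ C (1 / 2) p (ball p ρ) := by
  have hκ0 := hκ.pos
  obtain ⟨r₀, hr₀, hbarrier⟩ := hκ.exists_barrierFamily hd hC₀
  obtain ⟨r, hr, hrr₀, hκr, hκ3r, hC₀r⟩ := exists_small_radius d κ C₀ hr₀
  obtain ⟨M, hM⟩ := exists_card_le_of_separated_of_dist_le (Euc d) (4 * κ * pushConst d κ)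
  set Λ := 16 / r * (5 * κ ^ 2) ^ d
  set K := poleConst d κ
  have hK : 0 ≤ K := zero_le_one.trans (one_le_poleConst hκ.one_le)
  refine ⟨r / (2 * κ), by positivity,
    3 / 2 * (Λ * (8 * (2 * K ^ 2) ^ d * (8 * M * r * K ^ d))), by positivity,
    fun p hp U φ hU hφ => ?_⟩
  obtain ⟨η, hη, hkη, hvar⟩ :=
    exists_variesSlowly_mesh hκ.one_le hr (R + 1) hφ.contDiff.continuous hφ.pos
  have S : EllipsoidSetup a b (R + 1) κ p r η := ⟨hκ, hr, by linarith, hη, hkη⟩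
  obtain ⟨F, G, hF⟩ := hbarrier r hr hrr₀ p S.p_le η hη
  obtain ⟨Y, hY, hsep, hnet⟩ := exists_separated_net_of_isCompact S.isCompact_boundary hη
  obtain ⟨φ', hφ', hle⟩ :=
    S.exists_lowering_le_barrierSum hd hκ3r hC₀ hC₀r hF hY hnet hU hφ hvar
  refine ⟨φ', hφ', fun x hx => ?_⟩
  have hxσ := S.half_sq_le_of_mem_ball hx
  have hpσ := S.half_sq_le_of_mem_ball (mem_ball_self (by positivity))
  have hησ : η * r ≤ r ^ 2 / 2 := S.η_mul_r_le.trans (by linarith [sq_nonneg r])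
  have hcard : ∀ (x : Euc d) (Z : Finset (Euc d)), Z ⊆ Y →
      (∀ y ∈ Z, dist x y ≤ pushRadius d κ η) → Z.card ≤ M := fun x Z hZ hnear =>
    hM η hη x Z (hsep.mono (Finset.coe_subset.2 hZ)) hnear
  calc φ' x ≤ 3 / 2 * (Λ * barrierSum Y φ F x) := hle x (hησ.trans hxσ)
    _ ≤ 3 / 2 * (Λ * (8 * (2 * K ^ 2) ^ d * barrierSum Y φ G p)) := by
        gcongr
        exact S.barrierSum_le_barrierSum_of_deep hF hY hφ.pos hxσ hpσ
    _ ≤ 3 / 2 * (Λ * (8 * (2 * K ^ 2) ^ d * (8 * M * r * K ^ d * φ p))) := by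
        gcongr
        exact S.barrierSum_le_mul hF hY hcard hφ.contDiff hφ.pos
          (fun z hz => hφ.Lop_le (hU z hz)) hvar (hησ.trans hpσ)
    _ = 3 / 2 * (Λ * (8 * (2 * K ^ 2) ^ d * (8 * M * r * K ^ d))) * φ p := by ring

theorem exists_mem_dist_le_of_dist_le_succ_mul {E : Type*} [NormedAddCommGroup E]
    [NormedSpace ℝ E] {K : Set E} (hK : Convex ℝ K) {x₀ x : E} (hx₀ : x₀ ∈ K) (hx : x ∈ K)
    {n : ℕ} {δ : ℝ} (h : dist x₀ x ≤ (n + 1) * δ) :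
    ∃ x₁ ∈ K, dist x₀ x₁ ≤ n * δ ∧ dist x x₁ ≤ δ := by
  have ht : 1 - (n : ℝ) / (n + 1) = 1 / (n + 1) := by field_simp; ring
  have ht0 : 0 ≤ 1 - (n : ℝ) / (n + 1) := by rw [ht]; positivity
  refine ⟨AffineMap.lineMap x₀ x ((n : ℝ) / (n + 1)),
    hK.lineMap_mem hx₀ hx ⟨by positivity, by linarith⟩, ?_, ?_⟩
  · rw [dist_left_lineMap, Real.norm_of_nonneg (by positivity)]
    calc (n : ℝ) / (n + 1) * dist x₀ x ≤ n / (n + 1) * ((n + 1) * δ) := by gcongr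
      _ = n * δ := by field_simp
  · rw [dist_right_lineMap, Real.norm_of_nonneg ht0, ht]
    calc 1 / ((n : ℝ) + 1) * dist x₀ x ≤ 1 / (n + 1) * ((n + 1) * δ) := by gcongr
      _ = δ := by field_simp

theorem LoweringHarnack.exists_of_dist_le_mul {ρ : ℝ} (hρ : 0 < ρ) (hC : 0 ≤ C) (hc : 0 < c)
    {R' : ℝ} (h : ∀ p, ‖p‖ ≤ R' → LoweringHarnack a b R C₀ C c p (ball p ρ)) (n : ℕ) :
    ∃ C' ≥ 0, ∃ c' > 0, ∀ x₀ x, ‖x₀‖ ≤ R' → ‖x‖ ≤ R' → dist x₀ x ≤ n * (ρ / 2) →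
      LoweringHarnack a b R C₀ C' c' x₀ (ball x ρ) := by
  induction n with
  | zero =>
    refine ⟨C, hC, c, hc, fun x₀ x hx₀ _ hdist => ?_⟩
    obtain rfl : x₀ = x := dist_le_zero.1 (by simpa using hdist)
    exact h x₀ hx₀
  | succ n ih =>
    obtain ⟨C', hC', c', hc', ih⟩ := ih
    refine ⟨C * C', by positivity, c * c', by positivity, fun x₀ x hx₀ hx hdist => ?_⟩
    obtain ⟨x₁, hx₁, hnear₀, hnear⟩ := exists_mem_dist_le_of_dist_le_succ_mul
      (convex_closedBall (0 : Euc d) R') (by simpa using hx₀) (by simpa using hx)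
      (by exact_mod_cast hdist)
    exact (ih x₀ x₁ hx₀ (by simpa using hx₁) hnear₀).trans hc' hC
      (hnear.trans_lt (half_lt_self hρ)) (h x hx)

theorem LoweringHarnack.exists_biUnion {ρ : ℝ} {D : Set (Euc d)} {Z : Finset (Euc d)}
    (hC : 0 ≤ C) (hc : 0 < c)
    (h : ∀ x₀ ∈ D, ∀ y ∈ Z, LoweringHarnack a b R C₀ C c x₀ (ball y ρ)) :
    ∃ C' > 0, ∃ c' > 0, ∀ x₀ ∈ D, LoweringHarnack a b R C₀ C' c' x₀ (⋃ y ∈ Z, ball y ρ) := by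
  classical
  induction Z using Finset.induction_on with
  | empty =>
    exact ⟨1, one_pos, 1, one_pos, fun x₀ _ U φ _ hφ => ⟨φ, .refl R hφ, by simp⟩⟩
  | insert y Z _ ih =>
    obtain ⟨C', hC', c', hc', ih⟩ := ih fun x₀ hx₀ w hw => h x₀ hx₀ w (Finset.mem_insert_of_mem hw)
    refine ⟨max C' C, lt_max_of_lt_left hC', c * c', by positivity, fun x₀ hx₀ => ?_⟩
    rw [Finset.set_biUnion_insert, union_comm]
    exact (ih x₀ hx₀).union hc' hC (h x₀ hx₀ y (Finset.mem_insert_self y Z))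

theorem LocallyElliptic.exists_loweringHarnack (hd : 1 ≤ d) (h : LocallyElliptic a b) (hR : 0 < R)
    (hC₀ : 0 ≤ C₀) :
    ∃ C > 0, ∃ c > 0, ∀ x₀ ∈ closedBall (0 : Euc d) R,
      LoweringHarnack a b (R + 1) C₀ C c x₀ (closedBall 0 R) := by
  obtain ⟨κ, hκ⟩ := h.exists_coeffBound (R := R + 1) (by positivity)
  obtain ⟨ρ, hρ, C₁, hC₁, hball⟩ := hκ.exists_loweringHarnack_ball hd hC₀
  obtain ⟨n, hn⟩ := exists_nat_ge (2 * R / (ρ / 2))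
  rw [div_le_iff₀ (half_pos hρ)] at hn
  obtain ⟨C₂, hC₂, c₂, hc₂, hchain⟩ :=
    LoweringHarnack.exists_of_dist_le_mul hρ hC₁ one_half_pos hball n
  obtain ⟨Y, hY, -, hnet⟩ :=
    exists_separated_net_of_isCompact (isCompact_closedBall (0 : Euc d) R) hρ
  obtain ⟨C, hC, c, hc, hunion⟩ := LoweringHarnack.exists_biUnion (D := closedBall 0 R) (Z := Y)
    hC₂ hc₂ fun x₀ hx₀ y hy => hchain x₀ y (by simpa using hx₀) (by simpa using hY hy) <| by
      have hdist := dist_triangle_right x₀ y 0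
      linarith [mem_closedBall.1 hx₀, mem_closedBall.1 (hY hy)]
  refine ⟨C, hC, c, hc, fun x₀ hx₀ => (hunion x₀ hx₀).mono fun x hx => ?_⟩
  obtain ⟨y, hy, hxy⟩ := hnet x hx
  exact mem_biUnion hy hxy

end Lowering

/-! ### Transfer of excess potential -/

section Transfer

variable {d : ℕ} {a : Euc d → Matrix (Fin d) (Fin d) ℝ} {b : Euc d → Euc d}

theorem LocallyElliptic.exists_isSuper_le_mul (hd : 1 ≤ d) (h : LocallyElliptic a b) {R C₀ : ℝ}
    (hR : 0 < R) (hC₀ : 0 ≤ C₀) :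
    ∃ K > 0, ∀ U φ, (∀ x, ‖x‖ ≤ R + 2 → |U x| ≤ C₀) → IsSuper a b U φ →
      ∃ φ', IsSuper a b U φ' ∧
        ∀ x ∈ closedBall (0 : Euc d) R, ∀ y ∈ closedBall (0 : Euc d) R, φ' x ≤ K * φ' y := by
  obtain ⟨C, hC, c, hc, hharnack⟩ := h.exists_loweringHarnack hd hR hC₀
  obtain ⟨ξ, hξ, -, hξ1, hξpos, hLξ⟩ := h.exists_bump 0 hR (R := R + 2) (by positivity) hC₀
  obtain ⟨m, hm, hmξ⟩ := (isCompact_closedBall (0 : Euc d) (R + 1)).exists_forall_le'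
    hξ.continuous.continuousOn fun x hx => (hξpos x).2 (by linarith [mem_closedBall.1 hx])
  refine ⟨C / (c * m), by positivity, fun U φ hU hφ => ?_⟩
  obtain ⟨x₀, hx₀, hmin⟩ := (isCompact_closedBall (0 : Euc d) R).exists_isMinOn
    ⟨0, mem_closedBall_self hR.le⟩ hφ.contDiff.continuous.continuousOn
  have hφ₀ := hφ.pos x₀
  have hφlow : ∀ x, ‖x‖ ≤ R + 1 → φ x₀ * m ≤ φ x := fun x hx =>
    calc φ x₀ * m ≤ φ x₀ * ξ x := mul_le_mul_of_nonneg_left (hmξ x (by simpa using hx)) hφ₀.le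
      _ ≤ φ x := mul_bump_le (fun x => (h.posDef x).posSemidef) hξ hξ1 hξpos hLξ hφ.contDiff hφ.pos
        (fun y hy => hφ.Lop_le (hU y (by simpa using hy.le))) hφ₀ (fun y hy => hmin hy)
        (by rw [dist_zero_right]; linarith)
  obtain ⟨φ', hφ', hle⟩ := hharnack x₀ hx₀ U φ (fun x hx => hU x (by linarith)) hφ
  refine ⟨φ', hφ'.super, fun x hx y hy => ?_⟩
  have hlow := hφ'.low (φ x₀ * m) (by positivity) hφlow y
    (by linarith [mem_closedBall_zero_iff.1 hy])
  calc φ' x ≤ C * φ x₀ := hle x hx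
    _ = C / (c * m) * (c * (φ x₀ * m)) := by field_simp
    _ ≤ C / (c * m) * φ' y := by gcongr

theorem LocallyElliptic.exists_bump_transfer (h : LocallyElliptic a b) {x₁ z : Euc d}
    {ρ r R C₀ : ℝ} (hρ : 0 < ρ) (hR : 0 < R) (hball : closedBall z r ⊆ ball x₁ R)
    (hC₀ : 0 ≤ C₀) :
    ∃ ζ : Euc d → ℝ, ContDiff ℝ 2 ζ ∧ (∀ x, 0 ≤ ζ x) ∧ (∀ x, ζ x ≤ 1) ∧
      (∀ x, 0 < ζ x ↔ dist x x₁ < R) ∧ ∃ m > 0, ∃ M ≥ 0, ∀ U : Euc d → ℝ,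
        (∀ x, dist x x₁ < R → |U x| ≤ C₀) → ∀ x,
          (ball z r).indicator (fun _ => m) x ≤
            (closedBall x₁ ρ).indicator (fun _ => M) x + (Lop a b ζ x + U x * ζ x) := by
  obtain ⟨ζ, hζ, hζ0, hζ1, hζpos, hLζ⟩ := h.exists_bump x₁ hρ hR (C₀ := C₀ + 1) (by positivity)
  obtain ⟨m, hm, hmζ⟩ := (isCompact_closedBall z r).exists_forall_le'
    hζ.continuous.continuousOn fun x hx => (hζpos x).2 (hball hx)
  obtain ⟨κ, hκ⟩ := h.exists_coeffBound (R := ‖x₁‖ + R) (by positivity)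
  obtain ⟨M, hM0, hM⟩ := hκ.exists_abs_Lop_le hζ
  refine ⟨ζ, hζ, hζ0, hζ1, hζpos, m, hm, M + C₀ + m, by positivity, fun U hU x => ?_⟩
  have hind : (ball z r).indicator (fun _ => m) x ≤ m := indicator_le_self' (fun _ _ => hm.le) x
  rcases lt_or_ge (dist x x₁) R with hxR | hxR
  · have hUζ : -C₀ * ζ x ≤ U x * ζ x :=
      mul_le_mul_of_nonneg_right (abs_le.1 (hU x hxR)).1 (hζ0 x)
    rcases le_or_gt (dist x x₁) ρ with hxρ | hxρ
    · have hnorm : ‖x‖ ≤ ‖x₁‖ + R := by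
        rw [dist_eq_norm] at hxR
        linarith [norm_sub_norm_le x x₁]
      have hC₀ζ : C₀ * ζ x ≤ C₀ := mul_le_of_le_one_right hC₀ (hζ1 x)
      rw [indicator_of_mem (mem_closedBall.2 hxρ)]
      linarith [(abs_le.1 (hM x hnorm)).1]
    · have hmx : (ball z r).indicator (fun _ => m) x ≤ ζ x :=
        indicator_le' (fun y hy => hmζ y (ball_subset_closedBall hy)) (fun y _ => hζ0 y) x
      rw [indicator_of_notMem (s := closedBall x₁ ρ) (by simpa using hxρ)]
      linarith [hLζ x hxρ hxR]
  · have hζx : ζ x = 0 := le_antisymm (not_lt.1 fun hx => hxR.not_gt ((hζpos x).1 hx)) (hζ0 x)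
    have hLx : 0 ≤ Lop a b ζ x := Lop_nonneg_of_isLocalMin (h.posDef x).posSemidef hζ.contDiffAt
      (Eventually.of_forall fun y => hζx.trans_le (hζ0 y))
    have hM : 0 ≤ (closedBall x₁ ρ).indicator (fun _ => M + C₀ + m) x :=
      indicator_nonneg (fun _ _ => by positivity) x
    rw [indicator_of_notMem fun hx => hxR.not_gt (hball (ball_subset_closedBall hx)), hζx, mul_zero]
    linarith

theorem IsSuper.sub_const_mul {U g g' φ ζ : Euc d → ℝ} {s : ℝ}
    (hφ : IsSuper a b (fun x => U x + g x) φ) (hζ : ContDiff ℝ 2 ζ) (hζφ : ∀ x, s * ζ x < φ x)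
    (hg' : ∀ x, 0 ≤ g' x * (s * ζ x))
    (hle : ∀ x, g' x * φ x ≤ g x * φ x + s * (Lop a b ζ x + U x * ζ x)) :
    IsSuper a b (fun x => U x + g' x) fun x => φ x - s * ζ x where
  pos x := sub_pos.2 (hζφ x)
  contDiff := hφ.contDiff.sub (contDiff_const.mul hζ)
  le x := by
    rw [Lop_sub hφ.contDiff.contDiffAt (contDiff_const.mul hζ).contDiffAt,
      Lop_const_mul hζ.contDiffAt]
    linarith [hφ.le x, hg' x, hle x]

theorem exists_small_factor {K M c : ℝ} (hK : 0 < K) (hM : 0 ≤ M) (hc : 0 < c) :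
    ∃ τ > 0, τ * K < 1 ∧ τ * M * K ≤ c := by
  have hpos : 0 < 2 * K + M * K / c := by positivity
  refine ⟨(2 * K + M * K / c)⁻¹, by positivity, ?_, ?_⟩
  · rw [inv_mul_lt_iff₀ hpos, mul_one]
    linarith [show 0 ≤ M * K / c by positivity]
  · rw [mul_assoc, inv_mul_le_iff₀ hpos, add_mul, div_mul_cancel₀ _ hc.ne']
    linarith [mul_pos hK hc]

theorem IsSuper.sub_bump {A B D : Set (Euc d)} (hA : A ⊆ B) (hD : D ⊆ B) {p : Euc d} (hp : p ∈ B)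
    {U φ ζ : Euc d → ℝ} {c m M K τ : ℝ} (hm : 0 ≤ m) (hM : 0 ≤ M) (hK : 0 < K) (hτ : 0 < τ)
    (hτK : τ * K < 1) (hτM : τ * M * K ≤ c)
    (hφ : IsSuper a b (fun x => U x + A.indicator (fun _ => c) x) φ)
    (hle : ∀ x ∈ B, ∀ y ∈ B, φ x ≤ K * φ y)
    (hζ : ContDiff ℝ 2 ζ) (hζ0 : ∀ x, 0 ≤ ζ x) (hζ1 : ∀ x, ζ x ≤ 1) (hζB : ∀ x, 0 < ζ x → x ∈ B)
    (hbump : ∀ x, D.indicator (fun _ => m) x ≤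
      A.indicator (fun _ => M) x + (Lop a b ζ x + U x * ζ x)) :
    IsSuper a b (fun x => U x + D.indicator (fun _ => τ * m / K) x)
      fun x => φ x - τ * φ p * ζ x := by
  have hs : 0 < τ * φ p := mul_pos hτ (hφ.pos p)
  have hδ : 0 ≤ τ * m / K := by positivity
  refine hφ.sub_const_mul hζ (fun x => ?_) (fun x => ?_) fun x => ?_
  · rcases (hζ0 x).eq_or_lt with hx | hx
    · rw [← hx, mul_zero]
      exact hφ.pos x
    · calc τ * φ p * ζ x ≤ τ * φ p := mul_le_of_le_one_right hs.le (hζ1 x)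
        _ ≤ τ * (K * φ x) := mul_le_mul_of_nonneg_left (hle p hp x (hζB x hx)) hτ.le
        _ = τ * K * φ x := (mul_assoc _ _ _).symm
        _ < φ x := mul_lt_of_lt_one_left (hφ.pos x) hτK
  · exact mul_nonneg (indicator_nonneg (fun _ _ => hδ) x) (mul_nonneg hs.le (hζ0 x))
  · have hgain : D.indicator (fun _ => τ * m / K) x * φ x ≤
        τ * φ p * D.indicator (fun _ => m) x := by
      by_cases hx : x ∈ D
      · simp only [indicator_of_mem hx]
        calc τ * m / K * φ x ≤ τ * m / K * (K * φ p) :=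
            mul_le_mul_of_nonneg_left (hle x (hD hx) p hp) hδ
          _ = τ * φ p * m := by field_simp
      · simp [hx]
    have hcost : τ * φ p * A.indicator (fun _ => M) x ≤ A.indicator (fun _ => c) x * φ x := by
      by_cases hx : x ∈ A
      · simp only [indicator_of_mem hx]
        calc τ * φ p * M = τ * M * φ p := mul_right_comm _ _ _
          _ ≤ τ * M * (K * φ x) := mul_le_mul_of_nonneg_left (hle p hp x (hA hx)) (by positivity)
          _ = τ * M * K * φ x := (mul_assoc _ _ _).symm
          _ ≤ c * φ x := mul_le_mul_of_nonneg_right hτM (hφ.pos x).le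
      · simp [hx]
    linarith [mul_le_mul_of_nonneg_left (hbump x) hs.le]

theorem LocallyElliptic.exists_transfer (hd : 1 ≤ d) (h : LocallyElliptic a b) (x₁ z : Euc d)
    {ρ r c : ℝ} (hρ : 0 < ρ) (hr : 0 < r) (hc : 0 < c) :
    ∃ R > 0, ∀ C₀ ≥ 0, ∃ δ > 0, ∀ U φ : Euc d → ℝ, (∀ x, ‖x‖ ≤ R → |U x| ≤ C₀) →
      IsSuper a b (fun x => U x + (closedBall x₁ ρ).indicator (fun _ => c) x) φ →
      ∃ ψ, IsSuper a b (fun x => U x + (ball z r).indicator (fun _ => δ) x) ψ := by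
  set R₁ := dist z x₁ + r + ρ + 1
  have hR₁ : 0 < R₁ := by positivity
  have hz : closedBall z r ⊆ ball x₁ R₁ :=
    (closedBall_subset_ball' (by linarith [dist_comm z x₁]))
  set R := ‖x₁‖ + R₁
  have hball : ball x₁ R₁ ⊆ closedBall 0 R :=
    ball_subset_closedBall.trans (closedBall_subset_closedBall' (by
      rw [dist_zero_right, add_comm]))
  have hR : 0 < R := by positivity
  refine ⟨R + 2, by positivity, fun C₀ hC₀ => ?_⟩
  obtain ⟨K, hK, hharnack⟩ := h.exists_isSuper_le_mul hd hR (add_nonneg hC₀ hc.le)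
  obtain ⟨ζ, hζ, hζ0, hζ1, hζpos, m, hm, M, hM, hbump⟩ := h.exists_bump_transfer hρ hR₁ hz hC₀
  obtain ⟨τ, hτ, hτK, hτM⟩ := exists_small_factor hK hM hc
  refine ⟨τ * m / K, by positivity, fun U φ hU hφ => ?_⟩
  have hU' : ∀ x, ‖x‖ ≤ R + 2 → |U x + (closedBall x₁ ρ).indicator (fun _ => c) x| ≤ C₀ + c :=
    fun x hx => (abs_add_le _ _).trans <| add_le_add (hU x hx) <| by
      rw [abs_of_nonneg (indicator_nonneg (fun _ _ => hc.le) x)]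
      exact indicator_le_self' (fun _ _ => hc.le) x
  obtain ⟨φ', hφ', hle⟩ := hharnack _ φ hU' hφ
  have hUball : ∀ x, dist x x₁ < R₁ → |U x| ≤ C₀ := fun x hx =>
    hU x (by linarith [mem_closedBall_zero_iff.1 (hball hx)])
  exact ⟨_, hφ'.sub_bump (closedBall_subset_ball (by linarith [dist_nonneg (x := z) (y := x₁)]))
    (ball_subset_closedBall.trans hz) (mem_ball_self hR₁) hm.le hM hK hτ hτK hτM
    (fun x hx y hy => hle x (hball hx) y (hball hy)) hζ hζ0 hζ1 (fun x => (hζpos x).1)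
    (hbump U hUball)⟩

end Transfer

/-! ### The principal eigenvalue -/

section Eigenvalue

variable {d : ℕ} {a : Euc d → Matrix (Fin d) (Fin d) ℝ} {b : Euc d → Euc d} {V W W' : Euc d → ℝ}
  {z : Euc d} {r lam : ℝ}

theorem add_mem_supersolutions {B : ℝ} (hW : ∀ x, W' x ≤ W x + B)
    (h : lam ∈ supersolutions a b W univ) : lam + B ∈ supersolutions a b W' univ := by
  obtain ⟨φ, hφ⟩ := mem_supersolutions_iff.1 h
  exact mem_supersolutions_iff.2 ⟨φ, hφ.mono fun x => by linarith [hW x]⟩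

theorem nonempty_supersolutions_of_le_add {B : ℝ} (hW : ∀ x, W' x ≤ W x + B)
    (h : (supersolutions a b W univ).Nonempty) : (supersolutions a b W' univ).Nonempty :=
  let ⟨_, hlam⟩ := h
  ⟨_, add_mem_supersolutions hW hlam⟩

theorem lamStar_le_add {B : ℝ} (hW : ∀ x, W' x ≤ W x + B)
    (hne : (supersolutions a b W univ).Nonempty) (hbdd : BddBelow (supersolutions a b W' univ)) :
    lamStar a b W' univ ≤ lamStar a b W univ + B := by
  rw [← sub_le_iff_le_add]
  exact le_csInf hne fun lam hlam =>
    sub_le_iff_le_add.2 (csInf_le hbdd (add_mem_supersolutions hW hlam))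

theorem C0plus.bddAbove_range {g : Euc d → ℝ} (hg : C0plus g) : BddAbove (range g) :=
  let G : ZeroAtInftyContinuousMap (Euc d) ℝ := ⟨⟨g, hg.1⟩, hg.2.2.2⟩
  G.isBounded_range.bddAbove

theorem C0plus.exists_indicator_closedBall_le {g : Euc d → ℝ} (hg : C0plus g) :
    ∃ x₁, ∃ ρ > 0, ∃ c > 0, ∀ x, (closedBall x₁ ρ).indicator (fun _ => c) x ≤ g x := by
  obtain ⟨hcont, hg0, ⟨x₁, hx₁⟩, -⟩ := hg
  have hpos : 0 < g x₁ := (hg0 x₁).lt_of_ne' hx₁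
  obtain ⟨ρ, hρ, hball⟩ := nhds_basis_closedBall.mem_iff.1
    (hcont.continuousAt.eventually (lt_mem_nhds (half_lt_self hpos)))
  exact ⟨x₁, ρ, hρ, g x₁ / 2, half_pos hpos,
    fun x => indicator_le' (fun y hy => (hball hy).le) (fun y _ => hg0 y) x⟩

/-- Local boundedness of a potential, phrased as in the standing assumptions. -/
def LocallyBdd (W : Euc d → ℝ) : Prop :=
  ∀ R > 0, ∃ C, ∀ x : Euc d, ‖x‖ ≤ R → |W x| ≤ C

/-- The potential `V + δ·1_𝓑` with `𝓑 = B(z, r)`. -/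
def raiseOnBall (V : Euc d → ℝ) (z : Euc d) (r δ : ℝ) (x : Euc d) : ℝ :=
  V x + (ball z r).indicator (fun _ => δ) x

theorem raiseOnBall_zero (V : Euc d → ℝ) (z : Euc d) (r : ℝ) : raiseOnBall V z r 0 = V := by
  ext x
  simp [raiseOnBall]

theorem raiseOnBall_raiseOnBall (V : Euc d → ℝ) (z : Euc d) (r s t : ℝ) :
    raiseOnBall (raiseOnBall V z r s) z r t = raiseOnBall V z r (s + t) := by
  ext x
  by_cases hx : x ∈ ball z r <;> simp only [raiseOnBall, indicator_of_mem, hx,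
    indicator_of_notMem, not_false_eq_true, add_zero, add_assoc]

theorem raiseOnBall_mono (V : Euc d → ℝ) (z : Euc d) (r : ℝ) (x : Euc d) :
    Monotone fun δ => raiseOnBall V z r δ x := fun _ _ hst =>
  add_le_add_right (indicator_le_indicator hst) _

theorem raiseOnBall_le_add_dist (V : Euc d → ℝ) (z : Euc d) (r s t : ℝ) (x : Euc d) :
    raiseOnBall V z r t x ≤ raiseOnBall V z r s x + dist t s := by
  rw [Real.dist_eq]
  by_cases hx : x ∈ ball z r
  · simp only [raiseOnBall, indicator_of_mem hx]
    linarith [le_abs_self (t - s)]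
  · simp [raiseOnBall, indicator_of_notMem hx]

theorem LocallyBdd.raiseOnBall (hV : LocallyBdd V) (z : Euc d) (r δ : ℝ) :
    LocallyBdd (raiseOnBall V z r δ) := fun R hR =>
  let ⟨C, hC⟩ := hV R hR
  ⟨C + |δ|, fun x hx => (abs_add_le _ _).trans <| add_le_add (hC x hx) <| by
    by_cases hxz : x ∈ ball z r <;> simp [hxz]⟩

theorem nonempty_supersolutions_raiseOnBall (hne : (supersolutions a b V univ).Nonempty)
    (z : Euc d) (r δ : ℝ) : (supersolutions a b (raiseOnBall V z r δ) univ).Nonempty :=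
  nonempty_supersolutions_of_le_add
    (by simpa only [raiseOnBall_zero] using raiseOnBall_le_add_dist V z r 0 δ) hne

theorem LocallyElliptic.exists_sub_le_of_mem_supersolutions_raiseOnBall
    (h : LocallyElliptic a b) (hV : LocallyBdd V) (z : Euc d) (hr : 0 < r) :
    ∃ M, ∀ δ, ∀ lam ∈ supersolutions a b (raiseOnBall V z r δ) univ, δ - M ≤ lam := by
  obtain ⟨C, hC⟩ := hV (‖z‖ + r) (by positivity)
  refine h.exists_sub_le_of_mem_supersolutions hr (C := C) fun x hx => (abs_le.1 (hC x ?_)).1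
  linarith [norm_le_norm_add_norm_sub' x z, dist_eq_norm x z, mem_ball.1 hx]

theorem LocallyElliptic.bddBelow_supersolutions_raiseOnBall (h : LocallyElliptic a b)
    (hV : LocallyBdd V) (z : Euc d) (hr : 0 < r) (δ : ℝ) :
    BddBelow (supersolutions a b (raiseOnBall V z r δ) univ) :=
  let ⟨_, hM⟩ := h.exists_sub_le_of_mem_supersolutions_raiseOnBall hV z hr
  ⟨_, hM δ⟩

theorem LocallyElliptic.lipschitzWith_lamStar_raiseOnBall (h : LocallyElliptic a b)
    (hV : LocallyBdd V) (hne : (supersolutions a b V univ).Nonempty) (z : Euc d) (hr : 0 < r) :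
    LipschitzWith 1 fun δ => lamStar a b (raiseOnBall V z r δ) univ :=
  .of_le_add fun t s => lamStar_le_add (raiseOnBall_le_add_dist V z r s t)
    (nonempty_supersolutions_raiseOnBall hne z r s)
    (h.bddBelow_supersolutions_raiseOnBall hV z hr t)

theorem LocallyElliptic.monotone_lamStar_raiseOnBall (h : LocallyElliptic a b)
    (hV : LocallyBdd V) (hne : (supersolutions a b V univ).Nonempty) (z : Euc d) (hr : 0 < r) :
    Monotone fun δ => lamStar a b (raiseOnBall V z r δ) univ := fun s t hst => by
  have hle : ∀ x, raiseOnBall V z r s x ≤ raiseOnBall V z r t x + 0 := fun x => by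
    rw [add_zero]
    exact raiseOnBall_mono V z r x hst
  simpa only [add_zero] using lamStar_le_add hle (nonempty_supersolutions_raiseOnBall hne z r t)
    (h.bddBelow_supersolutions_raiseOnBall hV z hr s)

theorem LocallyElliptic.exists_lamStar_raiseOnBall_le (hd : 1 ≤ d) (h : LocallyElliptic a b)
    (hW : LocallyBdd W) (hne : (supersolutions a b W univ).Nonempty) {g : Euc d → ℝ}
    (hg : C0plus g) (z : Euc d) (hr : 0 < r) :
    ∃ δ > 0, lamStar a b (raiseOnBall W z r δ) univ ≤ lamStar a b (fun x => W x + g x) univ := by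
  obtain ⟨x₁, ρ, hρ, c, hc, hgc⟩ := hg.exists_indicator_closedBall_le
  obtain ⟨B, hB⟩ := hg.bddAbove_range
  have hgne : (supersolutions a b (fun x => W x + g x) univ).Nonempty :=
    nonempty_supersolutions_of_le_add (fun x => add_le_add_right (hB (mem_range_self x)) _) hne
  set lam := lamStar a b (fun x => W x + g x) univ
  obtain ⟨R, hR, htransfer⟩ := h.exists_transfer hd x₁ z hρ hr hc
  obtain ⟨C, hC⟩ := hW R hR
  have hC0 : 0 ≤ C := (abs_nonneg _).trans (hC 0 (by simpa using hR.le))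
  obtain ⟨δ, hδ, htransfer⟩ := htransfer (C + (|lam| + 1)) (by positivity)
  refine ⟨δ, hδ, le_of_forall_gt_imp_ge_of_dense fun t ht => ?_⟩
  set L := min t (lam + 1)
  have hlamL : lam < L := lt_min ht (lt_add_one lam)
  have hL : |L| ≤ |lam| + 1 := by
    have := min_le_right t (lam + 1)
    rw [abs_le]
    constructor <;> linarith [le_abs_self lam, neg_abs_le lam]
  obtain ⟨s, hs, hsL⟩ := exists_lt_of_csInf_lt hgne hlamL
  obtain ⟨φ, hφ⟩ := mem_supersolutions_iff.1 hs
  obtain ⟨ψ, hψ⟩ := htransfer (fun x => W x - L) φ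
    (fun x hx => (abs_sub _ _).trans (add_le_add (hC x hx) hL))
    (hφ.mono fun x => by linarith [hgc x])
  have hmem : L ∈ supersolutions a b (raiseOnBall W z r δ) univ :=
    mem_supersolutions_iff.2 ⟨ψ, hψ.mono fun x => (sub_add_eq_add_sub _ _ _).ge⟩
  exact (csInf_le (h.bddBelow_supersolutions_raiseOnBall hW z hr δ) hmem).trans (min_le_left _ _)

theorem LocallyElliptic.exists_lamStar_raiseOnBall_add_le (hd : 1 ≤ d) (h : LocallyElliptic a b)
    (hV : LocallyBdd V) (hne : (supersolutions a b V univ).Nonempty) (hr : 0 < r) {s : ℝ}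
    (hnot : ¬ StrictMonoRight a b (raiseOnBall V z r s)) :
    ∃ δ > 0, lamStar a b (raiseOnBall V z r (s + δ)) univ ≤
      lamStar a b (raiseOnBall V z r s) univ := by
  simp only [StrictMonoRight, not_forall, not_lt] at hnot
  obtain ⟨g, hg, hle⟩ := hnot
  obtain ⟨δ, hδ, hraise⟩ := h.exists_lamStar_raiseOnBall_le hd (hV.raiseOnBall z r s)
    (nonempty_supersolutions_raiseOnBall hne z r s) hg z hr
  rw [raiseOnBall_raiseOnBall] at hraise
  exact ⟨δ, hδ, hraise.trans hle⟩

end Eigenvalue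

theorem statement7_general {d : ℕ} (hd : 1 ≤ d) {a : Euc d → Matrix (Fin d) (Fin d) ℝ}
    {b : Euc d → Euc d} (h : LocallyElliptic a b) {V : Euc d → ℝ} (hV : LocallyBdd V)
    (hne : (supersolutions a b V univ).Nonempty) (hnot : ¬ StrictMonoRight a b V)
    (z : Euc d) {r : ℝ} (hr : 0 < r) :
    ∃ δ > 0, lamStar a b V univ = lamStar a b (raiseOnBall V z r δ) univ ∧
      StrictMonoRight a b (raiseOnBall V z r δ) := by
  obtain ⟨M, hM⟩ := h.exists_sub_le_of_mem_supersolutions_raiseOnBall hV z hr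
  set S := {δ | lamStar a b (raiseOnBall V z r δ) univ ≤ lamStar a b V univ}
  have hclosed : IsClosed S := isClosed_le
    (h.lipschitzWith_lamStar_raiseOnBall hV hne z hr).continuous continuous_const
  have hbdd : BddAbove S := ⟨lamStar a b V univ + M, fun δ hδ => by
    have := le_csInf (nonempty_supersolutions_raiseOnBall hne z r δ) (hM δ)
    linarith [this.trans hδ]⟩
  rw [← raiseOnBall_zero V z r] at hnot
  obtain ⟨δ₁, hδ₁, hle₁⟩ := h.exists_lamStar_raiseOnBall_add_le hd hV hne hr hnot
  rw [zero_add, raiseOnBall_zero] at hle₁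
  have hmem : sSup S ∈ S := hclosed.csSup_mem ⟨δ₁, hle₁⟩ hbdd
  have hpos : 0 < sSup S := hδ₁.trans_le (le_csSup hbdd hle₁)
  refine ⟨sSup S, hpos, le_antisymm ?_ hmem, by_contra fun hnot' => ?_⟩
  · simpa only [raiseOnBall_zero] using h.monotone_lamStar_raiseOnBall hV hne z hr hpos.le
  · obtain ⟨δ, hδ, hle⟩ := h.exists_lamStar_raiseOnBall_add_le hd hV hne hr hnot'
    exact (lt_add_of_pos_right (sSup S) hδ).not_ge (le_csSup hbdd (hle.trans hmem))

/-- Lemma 3.1: if `λ*` is not strictly right monotone at `V`, then for any open ball `𝓑`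
there is `δ > 0` with `λ*(V) = λ*(V + δ·1_𝓑)` and strict right monotonicity at
`V + δ·1_𝓑`. -/
theorem statement7 {d : ℕ} (hd : 1 ≤ d)
    (a : Euc d → Matrix (Fin d) (Fin d) ℝ) (b : Euc d → Euc d)
    (hstand : StandingB a b)
    (V : Euc d → ℝ) (hVmeas : Measurable V)
    (hVlocbdd : ∀ R > 0, ∃ C, ∀ x : Euc d, ‖x‖ ≤ R → |V x| ≤ C)
    (hVbdd : ∃ m, ∀ x, m ≤ V x)
    (hfin : lamStarFinite a b V Set.univ)
    (hnotmono : ¬ StrictMonoRight a b V) :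
    ∀ (z : Euc d) (r : ℝ), 0 < r → ∃ δ > 0,
      lamStar a b V Set.univ =
        lamStar a b (fun x => V x + (Metric.ball z r).indicator (fun _ => δ) x) Set.univ ∧
      StrictMonoRight a b (fun x => V x + (Metric.ball z r).indicator (fun _ => δ) x) :=
  fun z _ hr => statement7_general hd hstand.locallyElliptic hVlocbdd hfin.1 hnotmono z hr
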